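/- arXiv:2506.22857 — 2 statements merged into one kernel-verified Lean document; each statement's English description precedes it below -/
import Mathlib

section
/- For every non-acyclic graph G, the branchwidth and treewidth satisfy bw(G) - 1 ≤ tw(G) ≤ ⌊(3/2)·bw(G)⌋ - 1. -/
open SimpleGraph Set

universe u

/-- A branch-decomposition of a graph `G`: a ternary tree `T` (internal vertices of
degree 3) together with a bijection from the edges of `G` to the leaves of `T`. -/
structure BranchDecomp {V : Type u} (G : SimpleGraph V) : Type (u + 1) where
  t : Type
  fin : Fintype t
  T : SimpleGraph t
  isTree : T.IsTree
  ternary : ∀ v : t, (T.neighborSet v).ncard ≤ 1 ∨ (T.neighborSet v).ncard = 3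
  τ : G.edgeSet ≃ {v : t // (T.neighborSet v).ncard ≤ 1}

namespace BranchDecomp

variable {V : Type u} {G : SimpleGraph V} (B : BranchDecomp G)

/-- The edges of `G` whose leaves lie on the `a`-side of the tree edge `ab`. -/
def side (a b : B.t) : Set G.edgeSet :=
  {e | (B.T.deleteEdges {s(a, b)}).Reachable a (B.τ e).1}

/-- The boundary `∂(X_e)` of the bipartition of `E(G)` induced by the tree edge `ab`:
vertices incident to edges on both sides. -/
def bdry (a b : B.t) : Set V :=
  {v | (∃ e : G.edgeSet, e ∈ B.side a b ∧ v ∈ (e : Sym2 V)) ∧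
       (∃ e : G.edgeSet, e ∉ B.side a b ∧ v ∈ (e : Sym2 V))}

/-- The width of a branch-decomposition: the maximum, over edges of the tree, of the
size of the corresponding boundary. -/
noncomputable def width : ℕ :=
  sSup {n | ∃ a b : B.t, B.T.Adj a b ∧ n = (B.bdry a b).ncard}

end BranchDecomp

/-- The branchwidth of a graph: the minimum width of a branch-decomposition. -/
noncomputable def branchwidth {V : Type u} (G : SimpleGraph V) : ℕ :=
  sInf {n | ∃ B : BranchDecomp G, B.width = n}

/-- A tree-decomposition of a graph. -/
structure TreeDecomp {V : Type u} (G : SimpleGraph V) : Type (u + 1) where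
  t : Type
  fin : Fintype t
  T : SimpleGraph t
  isTree : T.IsTree
  β : t → Set V
  covers_edge : ∀ ⦃u v : V⦄, G.Adj u v → ∃ x, u ∈ β x ∧ v ∈ β x
  covers_vert : ∀ v : V, ∃ x, v ∈ β x
  subtree : ∀ v : V, (T.induce {x | v ∈ β x}).Connected

/-- The width of a tree-decomposition: maximum bag size minus one. -/
noncomputable def TreeDecomp.width {V : Type u} {G : SimpleGraph V} (D : TreeDecomp G) : ℕ :=
  sSup {n | ∃ x : D.t, n + 1 = (D.β x).ncard}

/-- The treewidth of a graph. -/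
noncomputable def treewidth {V : Type u} (G : SimpleGraph V) : ℕ :=
  sInf {n | ∃ D : TreeDecomp G, D.width = n}

/-- A minor model of `H` in `G`: disjoint connected branch sets with edges realized. -/
def IsMinorModel {V : Type u} {W : Type*} (G : SimpleGraph V) (H : SimpleGraph W)
    (φ : W → Set V) : Prop :=
  (∀ w, (G.induce (φ w)).Connected) ∧
  (Pairwise fun w₁ w₂ => Disjoint (φ w₁) (φ w₂)) ∧
  (∀ ⦃w₁ w₂ : W⦄, H.Adj w₁ w₂ → ∃ a ∈ φ w₁, ∃ b ∈ φ w₂, G.Adj a b)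

/-- `G` has `H` as a minor. -/
def HasMinor {V : Type u} {W : Type*} (G : SimpleGraph V) (H : SimpleGraph W) : Prop :=
  ∃ φ : W → Set V, IsMinorModel G H φ

/-- The `(k × k)`-grid. -/
def gridGraph (k : ℕ) : SimpleGraph (Fin k × Fin k) :=
  SimpleGraph.fromRel fun p q =>
    (p.1 = q.1 ∧ (p.2 : ℕ) + 1 = (q.2 : ℕ)) ∨ (p.2 = q.2 ∧ (p.1 : ℕ) + 1 = (q.1 : ℕ))


namespace BTW

/-- `x` separates `a` from `b`. -/
def Sep {t : Type*} (T : SimpleGraph t) (x a b : t) : Prop := ∀ w : T.Walk a b, x ∈ w.support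

lemma Sep.symm {t : Type*} {T : SimpleGraph t} {x a b : t} (h : Sep T x a b) : Sep T x b a := by
  intro w
  have := h w.reverse
  simpa using this

lemma not_sep_trans {t : Type*} {T : SimpleGraph t} {x a b c : t} (h : ¬ Sep T x a b)
    (h' : ¬ Sep T x b c) : ¬ Sep T x a c := by
  unfold Sep at *
  push Not at *
  obtain ⟨w, hw⟩ := h
  obtain ⟨w', hw'⟩ := h'
  refine ⟨w.append w', ?_⟩
  rw [Walk.mem_support_append_iff]
  tauto

lemma sep_left {t : Type*} (T : SimpleGraph t) (a b : t) : Sep T a a b := fun w => w.start_mem_support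

/-- In an acyclic graph, vertices of a path lie on every walk. -/
lemma sep_of_path {t : Type*} {T : SimpleGraph t} (hT : T.IsAcyclic) {a b x : t}
    (p : T.Walk a b) (hp : p.IsPath) (hx : x ∈ p.support) : Sep T x a b := by
  classical
  intro w
  have h := (hT.subsingleton_path a b).elim ⟨p, hp⟩ ⟨w.bypass, w.bypass_isPath⟩
  have h2 : p = w.bypass := congrArg Subtype.val h
  rw [h2] at hx
  exact w.support_bypass_subset_support hx

lemma connected_induce {t : Type*} {T : SimpleGraph t} {s : Set t} (hne : s.Nonempty)
    (h : ∀ a ∈ s, ∀ b ∈ s, ∃ w : T.Walk a b, ∀ x ∈ w.support, x ∈ s) : (T.induce s).Connected := by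
  have : Nonempty s := hne.to_subtype
  refine ⟨?_⟩
  rintro ⟨a, ha⟩ ⟨b, hb⟩
  obtain ⟨w, hw⟩ := h a ha b hb
  exact ⟨w.induce s hw⟩

lemma walk_of_connected_induce {t : Type*} {T : SimpleGraph t} {s : Set t}
    (h : (T.induce s).Connected) {a b : t} (ha : a ∈ s) (hb : b ∈ s) :
    ∃ w : T.Walk a b, ∀ x ∈ w.support, x ∈ s := by
  obtain ⟨w⟩ := h.preconnected ⟨a, ha⟩ ⟨b, hb⟩
  have key : ∀ x ∈ (w.map (Embedding.induce s).toHom).support, x ∈ s := by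
    intro x hx
    rw [Walk.support_map, List.mem_map] at hx
    obtain ⟨y, _, rfl⟩ := hx
    exact y.2
  exact ⟨w.map (Embedding.induce s).toHom, key⟩

/-- generic transport of reachability -/
lemma reach_map {s t : Type*} {S : SimpleGraph s} {T : SimpleGraph t} (f : s → t)
    (h : ∀ a b, S.Adj a b → T.Reachable (f a) (f b)) {a b : s} (hab : S.Reachable a b) :
    T.Reachable (f a) (f b) := by
  obtain ⟨w⟩ := hab
  induction w with
  | nil => exact Reachable.refl _
  | cons hadj _ ih => exact (h _ _ hadj).trans ih

lemma reach_closed {s : Type*} {S : SimpleGraph s} (P : s → Prop)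
    (h : ∀ a b, S.Adj a b → P a → P b) {a b : s} (hab : S.Reachable a b) (ha : P a) : P b := by
  obtain ⟨w⟩ := hab
  induction w with
  | nil => exact ha
  | cons hadj _ ih => exact ih (h _ _ hadj ha)

/-- If `x` is interior to a path, two different neighbours lead to the two ends. -/
lemma first_step {t : Type*} {T : SimpleGraph t} (hT : T.IsAcyclic) {x b : t}
    (p : T.Walk x b) (hp : p.IsPath) (hne : x ≠ b) :
    ∃ y, T.Adj x y ∧ s(x, y) ∈ p.edges ∧ ¬ (T.deleteEdges {s(x, y)}).Reachable x b := by
  cases p with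
  | nil => exact absurd rfl hne
  | @cons _ y _ hadj q =>
    refine ⟨y, hadj, by simp, ?_⟩
    intro hr
    have hbr : T.IsBridge s(x, y) := isAcyclic_iff_forall_adj_isBridge.1 hT hadj
    rw [isBridge_iff] at hbr
    apply hbr
    have hq : s(x, y) ∉ q.edges := by
      have := hp.isTrail.edges_nodup
      rw [Walk.edges_cons, List.nodup_cons] at this
      exact this.1
    exact hr.trans ⟨(q.toDeleteEdge _ hq).reverse⟩

lemma two_steps {t : Type*} {T : SimpleGraph t} (hT : T.IsTree) {x a b : t}
    (h : Sep T x a b) (ha : x ≠ a) (hb : x ≠ b) :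
    ∃ y z, y ≠ z ∧ T.Adj x y ∧ T.Adj x z ∧
      ¬ (T.deleteEdges {s(x, y)}).Reachable x a ∧ (T.deleteEdges {s(x, y)}).Reachable x b ∧
      ¬ (T.deleteEdges {s(x, z)}).Reachable x b ∧ (T.deleteEdges {s(x, z)}).Reachable x a := by
  classical
  obtain ⟨p, hp, _⟩ := hT.existsUnique_path a b
  have hx := h p
  have hdis := hp.isTrail.disjoint_edges_takeUntil_dropUntil hx
  obtain ⟨y, hy1, hy2, hy3⟩ := first_step hT.isAcyclic (p.takeUntil x hx).reverse
    ((hp.takeUntil hx).reverse) ha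
  obtain ⟨z, hz1, hz2, hz3⟩ := first_step hT.isAcyclic (p.dropUntil x hx)
    (hp.dropUntil hx) hb
  rw [Walk.edges_reverse, List.mem_reverse] at hy2
  have h1 : s(x, y) ∉ (p.dropUntil x hx).edges := fun h => hdis hy2 h
  have h2 : s(x, z) ∉ (p.takeUntil x hx).edges := fun h => hdis h hz2
  refine ⟨y, z, ?_, hy1, hz1, hy3, ⟨(p.dropUntil x hx).toDeleteEdge _ h1⟩, hz3,
    ⟨((p.takeUntil x hx).toDeleteEdge _ h2).reverse⟩⟩
  rintro rfl
  exact h1 hz2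

/-- Moving towards a vertex. -/
lemma step_towards {t : Type*} {T : SimpleGraph t} (hT : T.IsTree) {x a : t} (ha : x ≠ a) :
    ∃ y, y ≠ x ∧ ∀ b, ¬ Sep T x a b → Sep T y b x := by
  classical
  obtain ⟨p, hp, _⟩ := hT.existsUnique_path x a
  cases p with
  | nil => exact absurd rfl ha
  | @cons _ y _ hadj q =>
    refine ⟨y, hadj.ne', ?_⟩
    intro b hb w
    have hq : x ∉ q.support := by
      rw [Walk.cons_isPath_iff] at hp; exact hp.2
    unfold Sep at hb
    push Not at hb
    obtain ⟨u, hu⟩ := hb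
    have hw : w.bypass.reverse.IsPath := w.bypass_isPath.reverse
    have hxb : x ≠ b := by rintro rfl; exact hu u.end_mem_support
    suffices h : y ∈ w.bypass.reverse.support by
      rw [Walk.support_reverse, List.mem_reverse] at h
      exact w.support_bypass_subset_support h
    generalize w.bypass.reverse = r at hw
    cases r with
    | nil => exact absurd rfl hxb
    | @cons _ z _ hz r' =>
      have hr' : x ∉ r'.support := by
        rw [Walk.cons_isPath_iff] at hw; exact hw.2
      have hv : x ∉ ((r'.append u.reverse).bypass).support := by
        intro h
        have := Walk.support_bypass_subset_support _ h
        rw [Walk.mem_support_append_iff] at this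
        simp at this
        tauto
      have h1 := (hT.isAcyclic.subsingleton_path x a).elim ⟨Walk.cons hadj q, hp⟩
        ⟨Walk.cons hz (r'.append u.reverse).bypass,
          (Walk.cons_isPath_iff _ _).2 ⟨Walk.bypass_isPath _, hv⟩⟩
      have h2 : Walk.cons hadj q = Walk.cons hz (r'.append u.reverse).bypass :=
        congrArg Subtype.val h1
      have h3 : y = z := by
        have := congrArg Walk.snd h2
        simpa using this
      subst h3
      simp

lemma dist_lt_of_sep {t : Type*} {T : SimpleGraph t} (hT : T.IsTree) {x y b : t} (hne : y ≠ x)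
    (h : Sep T y b x) : T.dist y b < T.dist x b := by
  classical
  obtain ⟨w, hw⟩ := hT.1.exists_walk_length_eq_dist x b
  have hy : y ∈ w.support := h.symm w
  have h1 := dist_le (w.dropUntil y hy)
  have h2 : (w.takeUntil y hy).length ≠ 0 := fun h => hne (Walk.eq_of_length_eq_zero h).symm
  have h3 := congrArg Walk.length (w.take_spec hy)
  rw [Walk.length_append] at h3
  omega

/-- Sets obtained by successive disjoint unions, all of them good. -/
inductive Build {E : Type*} [DecidableEq E] (good : Finset E → Prop) : Finset E → Prop
  | single (e : E) : good {e} → Build good {e}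
  | join (A B : Finset E) : Build good A → Build good B → Disjoint A B → good (A ∪ B) →
      Build good (A ∪ B)

lemma build_of_tree {E : Type*} [DecidableEq E] {t : Type*} {T : SimpleGraph t} (hT : T.IsTree)
    (α : E → t) (good : Finset E → Prop)
    (hgood : ∀ (S : Finset E) (x : t), (∀ e ∈ S, ∀ f, f ∉ S → Sep T x (α e) (α f)) → good S) :
    ∀ (n m : ℕ) (S : Finset E) (x : t), S.card = n → ∑ e ∈ S, T.dist x (α e) = m → S.Nonempty →
      (∀ e ∈ S, ∀ f, f ∉ S → Sep T x (α e) (α f)) → Build good S := by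
  classical
  intro n
  induction n using Nat.strong_induction_on with
  | _ n ihn =>
  intro m
  induction m using Nat.strong_induction_on with
  | _ m ihm =>
  intro S x hn hm hS hadm
  by_cases h1 : S.card = 1
  · obtain ⟨e, rfl⟩ := Finset.card_eq_one.1 h1
    exact Build.single e (hgood _ x hadm)
  by_cases h2 : ∃ e1 ∈ S, ∃ e2 ∈ S, e1 ≠ e2 ∧ Sep T x (α e1) (α e2)
  · obtain ⟨e1, he1, e2, he2, hne, hsep⟩ := h2
    set A := S.filter (fun e => e = e1 ∨ ¬ Sep T x (α e) (α e1)) with hA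
    set B := S \ A with hB
    have hAS : A ⊆ S := Finset.filter_subset _ _
    have hkey : ∀ e ∈ A, ∀ f ∈ S, f ∉ A → Sep T x (α e) (α f) := by
      intro e he f hf hfA
      rw [hA, Finset.mem_filter] at he hfA
      push Not at hfA
      obtain ⟨hf1, hf2⟩ := hfA hf
      rcases he.2 with rfl | he'
      · exact hf2.symm
      · by_contra hcon
        exact not_sep_trans (fun h => hcon h.symm) he' hf2
    have h1A : e1 ∈ A := by simp [hA, he1]
    have h2A : e2 ∉ A := by
      rw [hA, Finset.mem_filter]
      rintro ⟨_, h | h⟩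
      · exact hne h.symm
      · exact h hsep.symm
    have h2B : e2 ∈ B := by rw [hB, Finset.mem_sdiff]; exact ⟨he2, h2A⟩
    have hun : A ∪ B = S := by rw [hB]; exact Finset.union_sdiff_of_subset hAS
    have hcA : A.card < n := by
      rw [← hn]
      exact Finset.card_lt_card ⟨hAS, fun h => h2A (h he2)⟩
    have hcB : B.card < n := by
      rw [← hn]
      refine Finset.card_lt_card ⟨Finset.sdiff_subset, fun h => ?_⟩
      have := h he1
      rw [hB, Finset.mem_sdiff] at this
      exact this.2 h1A
    have bA : Build good A := by
      refine ihn _ hcA _ A x rfl rfl ⟨e1, h1A⟩ ?_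
      intro e he f hf
      by_cases hfS : f ∈ S
      · exact hkey e he f hfS hf
      · exact hadm e (hAS he) f hfS
    have bB : Build good B := by
      refine ihn _ hcB _ B x rfl rfl ⟨e2, h2B⟩ ?_
      intro e he f hf
      rw [hB, Finset.mem_sdiff] at he hf
      by_cases hfS : f ∈ S
      · have hfA : f ∈ A := by tauto
        exact (hkey f hfA e he.1 he.2).symm
      · exact hadm e he.1 f hfS
    have := Build.join A B bA bB (by rw [hB]; exact Finset.disjoint_sdiff) (by
      rw [hun]; exact hgood S x hadm)
    rwa [hun] at this
  · push Not at h2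
    have h3 : 1 < S.card := by
      have := hS.card_pos
      omega
    obtain ⟨e1, he1, e2, he2, hne⟩ := Finset.one_lt_card.1 h3
    have hx : x ≠ α e1 := by
      intro h
      exact h2 e1 he1 e2 he2 hne (h ▸ sep_left T _ _)
    obtain ⟨y, hy, hys⟩ := step_towards hT hx
    have hall : ∀ e ∈ S, Sep T y (α e) x := by
      intro e he
      apply hys
      by_cases h : e1 = e
      · subst h
        intro h
        have := h Walk.nil
        simp at this
        exact hx this
      · exact h2 e1 he1 e he h
    refine ihm _ ?_ S y hn rfl hS ?_
    · rw [← hm]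
      exact Finset.sum_lt_sum_of_nonempty hS fun e he => dist_lt_of_sep hT hy (hall e he)
    · intro e he f hf w
      have hxw := hadm e he f hf w
      have := hall e he (w.takeUntil x hxw)
      exact w.support_takeUntil_subset_support hxw this

section Parent

variable {t : Type*} (q : t → t) (r : t) (D : t → ℕ)

/-- The graph of a parent function. -/
def pGraph : SimpleGraph t := SimpleGraph.fromRel (fun a b => q a = b)

lemma pGraph_adj {a b : t} : (pGraph q).Adj a b ↔ a ≠ b ∧ (q a = b ∨ q b = a) := by
  simp [pGraph]

/-- `z` is a descendant of `x`. -/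
def Desc (x z : t) : Prop := ∃ n, q^[n] z = x

variable {q r D}

lemma desc_refl (x : t) : Desc q x x := ⟨0, rfl⟩

lemma desc_of_parent {x z : t} (h : Desc q x (q z)) : Desc q x z := by
  obtain ⟨n, hn⟩ := h
  exact ⟨n + 1, by simpa [Function.iterate_succ_apply] using hn⟩

lemma desc_cases {x z : t} (h : Desc q x z) : z = x ∨ Desc q x (q z) := by
  obtain ⟨n, hn⟩ := h
  cases n with
  | zero => left; simpa using hn
  | succ n => right; exact ⟨n, by simpa [Function.iterate_succ_apply] using hn⟩


lemma D_le (hr : q r = r) (hD : ∀ x, x ≠ r → D (q x) < D x) (x : t) : D (q x) ≤ D x := by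
  by_cases h : x = r
  · rw [h, hr]
  · exact (hD x h).le

lemma desc_D (hr : q r = r) (hD : ∀ x, x ≠ r → D (q x) < D x) {x z : t} (h : Desc q x z) : D x ≤ D z := by
  obtain ⟨n, hn⟩ := h
  induction n generalizing z with
  | zero => simp at hn; rw [hn]
  | succ n ih =>
    rw [Function.iterate_succ_apply] at hn
    exact (ih hn).trans (D_le hr hD z)

lemma not_desc_parent (hr : q r = r) (hD : ∀ x, x ≠ r → D (q x) < D x) {x : t} (hx : x ≠ r) : ¬ Desc q x (q x) := by
  intro h
  have := desc_D hr hD h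
  have := hD x hx
  omega

lemma reach_imp_desc (hr : q r = r) (hD : ∀ x, x ≠ r → D (q x) < D x) {x z : t} (h : ((pGraph q).deleteEdges {s(x, q x)}).Reachable x z) :
    Desc q x z := by
  refine reach_closed (fun z => Desc q x z) ?_ h (desc_refl x)
  intro a b hab ha
  rw [deleteEdges_adj, pGraph_adj] at hab
  obtain ⟨⟨hne, hab1⟩, hab2⟩ := hab
  rcases hab1 with hq | hq
  · rcases desc_cases ha with rfl | h'
    · subst hq; simp at hab2
    · rwa [hq] at h'
  · exact desc_of_parent (hq ▸ ha)

lemma step_ok (hr : q r = r) (hD : ∀ x, x ≠ r → D (q x) < D x) {x z : t} (hz : z ≠ r) (hx : x ≠ r) (hzx : z ≠ x) :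
    ((pGraph q).deleteEdges {s(x, q x)}).Reachable (q z) z := by
  apply Adj.reachable
  have h1 : q z ≠ z := fun h => by
    have := hD z hz
    rw [h] at this
    omega
  rw [deleteEdges_adj, pGraph_adj]
  refine ⟨⟨h1, Or.inr rfl⟩, ?_⟩
  intro h
  rw [Set.mem_singleton_iff, Sym2.eq_iff] at h
  rcases h with h | h
  · have h2 := hD z hz
    have h3 := hD x hx
    rw [h.1] at h2
    rw [← h.2] at h3
    omega
  · exact hzx h.2

lemma desc_imp_reach (hr : q r = r) (hD : ∀ x, x ≠ r → D (q x) < D x) {x z : t} (hx : x ≠ r) (h : Desc q x z) :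
    ((pGraph q).deleteEdges {s(x, q x)}).Reachable x z := by
  obtain ⟨n, hn⟩ := h
  induction n generalizing z with
  | zero => simp at hn; rw [hn]
  | succ n ih =>
    rw [Function.iterate_succ_apply] at hn
    by_cases hzx : z = x
    · rw [hzx]
    by_cases hz : z = r
    · subst hz
      rw [hr] at hn
      exact ih hn
    exact (ih hn).trans (step_ok hr hD hz hx hzx)

lemma not_desc_reach_root (hr : q r = r) (hD : ∀ x, x ≠ r → D (q x) < D x) {x : t} (hx : x ≠ r) : ∀ (n : ℕ) (z : t), D z = n → ¬ Desc q x z →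
    ((pGraph q).deleteEdges {s(x, q x)}).Reachable r z := by
  intro n
  induction n using Nat.strong_induction_on with
  | _ n ih =>
  intro z hn hz
  by_cases hzr : z = r
  · rw [hzr]
  have h1 : z ≠ x := fun h => hz (by rw [h]; exact desc_refl x)
  exact (ih _ (hn ▸ hD z hzr) (q z) rfl (fun h => hz (desc_of_parent h))).trans
    (step_ok hr hD hzr hx h1)

lemma side_child (hr : q r = r) (hD : ∀ x, x ≠ r → D (q x) < D x) {x z : t} (hx : x ≠ r) :
    ((pGraph q).deleteEdges {s(x, q x)}).Reachable x z ↔ Desc q x z :=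
  ⟨reach_imp_desc hr hD, desc_imp_reach hr hD hx⟩

lemma side_parent (hr : q r = r) (hD : ∀ x, x ≠ r → D (q x) < D x) {x z : t} (hx : x ≠ r) :
    ((pGraph q).deleteEdges {s(x, q x)}).Reachable (q x) z ↔ ¬ Desc q x z := by
  constructor
  · intro h hd
    have h1 := desc_imp_reach hr hD hx hd
    exact not_desc_parent hr hD hx (reach_imp_desc hr hD (h1.trans h.symm))
  · intro h
    exact (not_desc_reach_root hr hD hx _ _ rfl (not_desc_parent hr hD hx)).symm.trans
      (not_desc_reach_root hr hD hx _ _ rfl h)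

lemma pGraph_isTree (hr : q r = r) (hD : ∀ x, x ≠ r → D (q x) < D x) : (pGraph q).IsTree := by
  have hne : Nonempty t := ⟨r⟩
  refine ⟨⟨?_⟩, ?_⟩
  · have key : ∀ (n : ℕ) (z : t), D z = n → (pGraph q).Reachable r z := by
      intro n
      induction n using Nat.strong_induction_on with
      | _ n ih =>
      intro z hn
      by_cases hzr : z = r
      · rw [hzr]
      refine (ih _ (hn ▸ hD z hzr) (q z) rfl).trans ?_
      apply Adj.reachable
      rw [pGraph_adj]
      refine ⟨?_, Or.inr rfl⟩
      intro h
      have := hD z hzr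
      rw [h] at this
      omega
    intro a b
    exact (key _ a rfl).symm.trans (key _ b rfl)
  · have key : ∀ a, a ≠ r → (pGraph q).IsBridge s(a, q a) := by
      intro a har
      rw [isBridge_iff, side_child hr hD har]
      exact not_desc_parent hr hD har
    rw [isAcyclic_iff_forall_adj_isBridge]
    intro a b hab
    rw [pGraph_adj] at hab
    obtain ⟨hne, h | h⟩ := hab
    · subst h
      exact key a (fun h => hne (by rw [h, hr]))
    · subst h
      rw [Sym2.eq_swap]
      exact key b (fun h => hne (by rw [h, hr]))

end Parent

/-- A planted binary tree over `S`, given by a parent function. -/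
def Planted {E : Type*} [DecidableEq E] (good : Finset E → Prop) (S : Finset E) : Prop :=
  ∃ (t : Type) (_ : Fintype t) (p : t → Option t) (d : t → ℕ) (lab : t → Finset E) (r : t)
    (l : E → t),
    (∀ x, p x = none ↔ x = r) ∧
    (∀ x y, p x = some y → d y < d x) ∧
    lab r = S ∧
    (∀ x, good (lab x)) ∧
    (∀ e ∈ S, lab (l e) = {e} ∧ ∀ y, p y ≠ some (l e)) ∧
    (∀ x, (∃ e ∈ S, x = l e) ∨
      ∃ y z, y ≠ z ∧ (∀ w, p w = some x ↔ w = y ∨ w = z) ∧ lab x = lab y ∪ lab z)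

lemma planted_of_build {E : Type*} [DecidableEq E] {good : Finset E → Prop} {S : Finset E}
    (h : Build good S) : Planted good S := by
  classical
  induction h with
  | single e he =>
    refine ⟨Unit, inferInstance, fun _ => none, fun _ => 0, fun _ => {e}, (), fun _ => (), ?_, ?_,
      rfl, fun _ => he, ?_, ?_⟩
    · intro x; simp
    · intro x y h; simp at h
    · intro e' he'
      rw [Finset.mem_singleton] at he'
      subst he'
      exact ⟨rfl, by simp⟩
    · intro x
      left
      exact ⟨e, by simp, rfl⟩
  | join A B _ _ hdis hg ihA ihB =>
    obtain ⟨t1, _, p1, d1, lab1, r1, l1, a1, b1, c1, g1, e1, f1⟩ := ihA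
    obtain ⟨t2, _, p2, d2, lab2, r2, l2, a2, b2, c2, g2, e2, f2⟩ := ihB
    let P : Option (t1 ⊕ t2) → Option (Option (t1 ⊕ t2)) := fun x => match x with
      | none => none
      | some (Sum.inl x) => some ((p1 x).map Sum.inl)
      | some (Sum.inr x) => some ((p2 x).map Sum.inr)
    let d : Option (t1 ⊕ t2) → ℕ := fun x => match x with
      | none => 0
      | some (Sum.inl x) => d1 x + 1
      | some (Sum.inr x) => d2 x + 1
    let lab : Option (t1 ⊕ t2) → Finset E := fun x => match x with
      | none => A ∪ B
      | some (Sum.inl x) => lab1 x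
      | some (Sum.inr x) => lab2 x
    let l : E → Option (t1 ⊕ t2) := fun e => if e ∈ A then some (Sum.inl (l1 e)) else
      some (Sum.inr (l2 e))
    have lA : ∀ e ∈ A, l e = some (Sum.inl (l1 e)) := fun e he => by simp [l, he]
    have lB : ∀ e ∈ B, l e = some (Sum.inr (l2 e)) := fun e he => by
      have : e ∉ A := fun h => Finset.disjoint_left.1 hdis h he
      simp [l, this]
    refine ⟨Option (t1 ⊕ t2), inferInstance, P, d, lab, none, l, ?_, ?_, rfl, ?_, ?_, ?_⟩
    · rintro (_ | x | x) <;> simp [P]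
    · rintro (_ | x | x) y h
      · simp [P] at h
      · simp only [P, Option.some.injEq] at h
        subst h
        cases hp : p1 x with
        | none => simp [d]
        | some y => simpa [d] using b1 x y hp
      · simp only [P, Option.some.injEq] at h
        subst h
        cases hp : p2 x with
        | none => simp [d]
        | some y => simpa [d] using b2 x y hp
    · rintro (_ | x | x)
      · exact hg
      · exact g1 x
      · exact g2 x
    · intro e he
      rw [Finset.mem_union] at he
      rcases he with he | he
      · rw [lA e he]
        refine ⟨(e1 e he).1, ?_⟩
        rintro (_ | x | x) h
        · simp [P] at h
        · simp [P] at h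
          exact (e1 e he).2 x h
        · simp [P] at h
      · rw [lB e he]
        refine ⟨(e2 e he).1, ?_⟩
        rintro (_ | x | x) h
        · simp [P] at h
        · simp [P] at h
        · simp [P] at h
          exact (e2 e he).2 x h
    · rintro (_ | x | x)
      · right
        refine ⟨some (Sum.inl r1), some (Sum.inr r2), by simp, ?_, ?_⟩
        · rintro (_ | w | w) <;> simp [P, a1, a2]
        · simp [lab, c1, c2]
      · rcases f1 x with ⟨e, he, hx⟩ | ⟨y, z, hyz, hw, hl⟩
        · left
          exact ⟨e, Finset.mem_union_left _ he, by rw [lA e he, hx]⟩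
        · right
          refine ⟨some (Sum.inl y), some (Sum.inl z), by simpa using hyz, ?_, hl⟩
          rintro (_ | w | w) <;> simp [P, hw]
      · rcases f2 x with ⟨e, he, hx⟩ | ⟨y, z, hyz, hw, hl⟩
        · left
          exact ⟨e, Finset.mem_union_right _ he, by rw [lB e he, hx]⟩
        · right
          refine ⟨some (Sum.inr y), some (Sum.inr z), by simpa using hyz, ?_, hl⟩
          rintro (_ | w | w) <;> simp [P, hw]

/-- boundary of an edge set -/
def bd {V : Type u} {G : SimpleGraph V} (S : Set G.edgeSet) : Set V :=
  {v | (∃ e : G.edgeSet, e ∈ S ∧ v ∈ (e : Sym2 V)) ∧ (∃ e : G.edgeSet, e ∉ S ∧ v ∈ (e : Sym2 V))}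

lemma bd_compl {V : Type u} {G : SimpleGraph V} (S : Set G.edgeSet) : bd Sᶜ = bd S := by
  ext v
  simp only [bd, Set.mem_compl_iff, not_not, Set.mem_ofPred_eq]
  tauto

lemma branch_of_planted {V : Type u} {G : SimpleGraph V} [Fintype G.edgeSet]
    [DecidableEq G.edgeSet] (k : ℕ)
    (e0 : G.edgeSet)
    (h : Planted (fun S : Finset G.edgeSet => (bd (S : Set G.edgeSet)).ncard ≤ k)
      (Finset.univ.erase e0)) :
    ∃ B : BranchDecomp G, B.width ≤ k := by
  classical
  obtain ⟨t, _, p, d, lab, r, l, hp, hd, hr, hg, hl, hx⟩ := h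
  let q : Option t → Option t := fun x => x.bind p
  let D : Option t → ℕ := fun x => match x with
    | none => 0
    | some x => d x + 1
  have hq0 : q none = none := rfl
  have hD : ∀ x, x ≠ none → D (q x) < D x := by
    rintro (_ | x) h
    · exact absurd rfl h
    · cases hpx : p x with
      | none => simp [q, D, hpx]
      | some y => simpa [q, D, hpx] using hd x y hpx
  have hT := pGraph_isTree hq0 hD
  have hqs : ∀ x : t, q (some x) = p x := fun x => rfl
  have hpne : ∀ x : t, p x ≠ some x := fun x h => by
    have := hd x x h
    omega
  have mono : ∀ x y, p y = some x → lab y ⊆ lab x := by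
    intro x y hy
    rcases hx x with ⟨e, he, rfl⟩ | ⟨a, b, hab, hw, hlab⟩
    · exact absurd hy ((hl e he).2 y)
    · rw [hlab]
      rcases (hw y).1 hy with rfl | rfl
      · exact Finset.subset_union_left
      · exact Finset.subset_union_right
  have sub : ∀ x z : t, Desc q (some x) (some z) → lab z ⊆ lab x := by
    rintro x z ⟨n, hn⟩
    induction n generalizing z with
    | zero =>
      simp at hn
      rw [hn]
    | succ n ih =>
      rw [Function.iterate_succ_apply, hqs] at hn
      cases hpz : p z with
      | none =>
        rw [hpz] at hn
        rw [Function.iterate_fixed hq0] at hn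
        simp at hn
      | some y =>
        rw [hpz] at hn
        exact (mono y z hpz).trans (ih y hn)
  have ex : ∀ (n : ℕ) (x : t), Finset.univ.sup d - d x = n → ∀ e ∈ lab x,
      Desc q (some x) (some (l e)) := by
    intro n
    induction n using Nat.strong_induction_on with
    | _ n ih =>
    intro x hn e he
    rcases hx x with ⟨e', he', rfl⟩ | ⟨a, b, hab, hw, hlab⟩
    · rw [(hl e' he').1, Finset.mem_singleton] at he
      subst he
      exact desc_refl _
    · have key : ∀ y, p y = some x → e ∈ lab y → Desc q (some x) (some (l e)) := by
        intro y hy hey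
        have h1 := hd y x hy
        have h2 : d y ≤ Finset.univ.sup d := Finset.le_sup (Finset.mem_univ y)
        obtain ⟨m, hm⟩ := ih _ (by omega) y rfl e hey
        refine ⟨m + 1, ?_⟩
        rw [Function.iterate_succ_apply', hm, hqs, hy]
      rw [hlab, Finset.mem_union] at he
      rcases he with he | he
      · exact key a ((hw a).2 (Or.inl rfl)) he
      · exact key b ((hw b).2 (Or.inr rfl)) he
  have labS : ∀ x, e0 ∉ lab x := by
    intro x hx0
    have h1 : ∀ (n : ℕ) (x : t), d x = n → lab x ⊆ lab r := by
      intro n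
      induction n using Nat.strong_induction_on with
      | _ n ih =>
      intro x hn
      cases hpx : p x with
      | none => rw [(hp x).1 hpx]
      | some y => exact (mono y x hpx).trans (ih _ (hn ▸ hd x y hpx) y rfl)
    have := h1 _ x rfl hx0
    rw [hr] at this
    simp at this
  -- degrees
  have nb0 : (pGraph q).neighborSet none = {some r} := by
    ext x
    rw [mem_neighborSet, pGraph_adj, Set.mem_singleton_iff]
    cases x with
    | none => simp
    | some x => simp [hq0, hqs, hp]
  have nbL : ∀ x : t, (∀ y, p y ≠ some x) → (pGraph q).neighborSet (some x) = {p x} := by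
    intro x hxl
    ext y
    rw [mem_neighborSet, pGraph_adj, Set.mem_singleton_iff]
    cases y with
    | none => simp [hq0, hqs, eq_comm]
    | some y =>
      rw [hqs, hqs]
      constructor
      · rintro ⟨_, h | h⟩
        · exact h.symm
        · exact absurd h (hxl y)
      · intro h
        refine ⟨?_, Or.inl h.symm⟩
        intro h'
        rw [← h'] at h
        exact hpne x h.symm
  have nbN : ∀ x y z : t, y ≠ z → (∀ w, p w = some x ↔ w = y ∨ w = z) →
      ((pGraph q).neighborSet (some x)).ncard = 3 := by
    intro x y z hyz hw
    have hy : p y = some x := (hw y).2 (Or.inl rfl)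
    have hz : p z = some x := (hw z).2 (Or.inr rfl)
    have : (pGraph q).neighborSet (some x) = {p x, some y, some z} := by
      ext w
      rw [mem_neighborSet, pGraph_adj]
      simp only [Set.mem_insert_iff, Set.mem_singleton_iff]
      cases w with
      | none => simp [hq0, hqs, eq_comm]
      | some w =>
        rw [hqs, hqs, hw]
        constructor
        · rintro ⟨_, h | h | h⟩
          · exact Or.inl h.symm
          · exact Or.inr (Or.inl (by rw [h]))
          · exact Or.inr (Or.inr (by rw [h]))
        · intro h
          have hxw : some x ≠ some w := by
            rintro h'
            have h'' : x = w := by simpa using h'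
            subst h''
            rcases h with h | h | h
            · exact hpne x h.symm
            · rw [Option.some.injEq] at h; subst h; exact hpne x hy
            · rw [Option.some.injEq] at h; subst h; exact hpne x hz
          refine ⟨hxw, ?_⟩
          rcases h with h | h | h
          · exact Or.inl h.symm
          · right; left; simpa using h
          · right; right; simpa using h
    rw [this, Set.ncard_eq_three]
    refine ⟨_, _, _, ?_, ?_, ?_, rfl⟩
    · intro h
      have h1 := hd y x hy
      have h2 := hd x y h
      omega
    · intro h
      have h1 := hd z x hz
      have h2 := hd x z h
      omega
    · simpa using hyz
  have mem_er : ∀ e, e ≠ e0 → e ∈ (Finset.univ.erase e0 : Finset G.edgeSet) := by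
    intro e he; simp [he]
  have leafdeg : ∀ e, e ≠ e0 → ((pGraph q).neighborSet (some (l e))).ncard ≤ 1 := by
    intro e he
    rw [nbL _ (hl e (mem_er e he)).2, Set.ncard_singleton]
  let τ0 : G.edgeSet → Option t := fun e => if e = e0 then none else some (l e)
  have τ00 : τ0 e0 = none := by simp [τ0]
  have τ01 : ∀ e, e ≠ e0 → τ0 e = some (l e) := fun e he => by simp [τ0, he]
  have τd : ∀ e, ((pGraph q).neighborSet (τ0 e)).ncard ≤ 1 := by
    intro e
    by_cases he : e = e0
    · rw [he, τ00, nb0, Set.ncard_singleton]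
    · rw [τ01 e he]; exact leafdeg e he
  let τ1 : G.edgeSet → {v : Option t // ((pGraph q).neighborSet v).ncard ≤ 1} :=
    fun e => ⟨τ0 e, τd e⟩
  have τbij : Function.Bijective τ1 := by
    constructor
    · intro e f hef
      have hef' : τ0 e = τ0 f := congrArg Subtype.val hef
      by_cases he : e = e0 <;> by_cases hf : f = e0
      · rw [he, hf]
      · rw [he, τ00, τ01 f hf] at hef'; simp at hef'
      · rw [hf, τ00, τ01 e he] at hef'; simp at hef'
      · rw [τ01 e he, τ01 f hf, Option.some.injEq] at hef'
        have h1 := (hl e (mem_er e he)).1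
        rw [hef', (hl f (mem_er f hf)).1] at h1
        simpa using h1.symm
    · rintro ⟨x, hxd⟩
      cases x with
      | none => exact ⟨e0, Subtype.ext τ00⟩
      | some x =>
        rcases hx x with ⟨e, he, rfl⟩ | ⟨a, b, hab, hw, hlab⟩
        · have he' : e ≠ e0 := by simpa using he
          exact ⟨e, Subtype.ext (τ01 e he')⟩
        · have := nbN x a b hab hw
          omega
  let B : BranchDecomp G :=
    { t := Option t
      fin := inferInstance
      T := pGraph q
      isTree := hT
      ternary := by
        rintro (_ | x)
        · left; rw [nb0, Set.ncard_singleton]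
        · rcases hx x with ⟨e, he, rfl⟩ | ⟨a, b, hab, hw, hlab⟩
          · left; exact leafdeg e (by simpa using he)
          · right; exact nbN x a b hab hw
      τ := Equiv.ofBijective τ1 τbij }
  have hdesc : ∀ (x : t) (e : G.edgeSet), Desc q (some x) (τ0 e) ↔ e ∈ lab x := by
    intro x e
    by_cases he : e = e0
    · rw [he, τ00]
      constructor
      · rintro ⟨n, hn⟩
        rw [Function.iterate_fixed hq0] at hn
        simp at hn
      · intro h
        exact absurd h (labS x)
    · rw [τ01 e he]
      constructor
      · intro h
        apply sub x _ h
        rw [(hl e (mem_er e he)).1]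
        simp
      · exact ex _ x rfl e
  refine ⟨B, ?_⟩
  apply csSup_le'
  rintro n ⟨a, b, hab, rfl⟩
  have hside1 : ∀ x : t, B.side (some x) (q (some x)) = (lab x : Set G.edgeSet) := by
    intro x
    ext e
    exact (side_child hq0 hD (by simp)).trans (hdesc x e)
  have hside2 : ∀ x : t, B.side (q (some x)) (some x) = (lab x : Set G.edgeSet)ᶜ := by
    intro x
    ext e
    have h1 := (side_parent hq0 hD (x := some x) (z := τ0 e) (by simp)).trans (not_congr (hdesc x e))
    rw [Sym2.eq_swap] at h1
    exact h1
  have hb : ∀ a b, B.bdry a b = bd (B.side a b) := fun a b => rfl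
  have hab' : (pGraph q).Adj a b := hab
  rw [pGraph_adj] at hab'
  obtain ⟨hne, h | h⟩ := hab'
  · subst h
    cases a with
    | none => exact absurd rfl hne
    | some x =>
      rw [hb, hside1]
      exact hg x
  · subst h
    cases b with
    | none => exact absurd rfl hne
    | some x =>
      rw [hb, hside2, bd_compl]
      exact hg x

/-- bags are bounded by the width -/
lemma bag_le {V : Type u} [Fintype V] {G : SimpleGraph V} (D : TreeDecomp G) (x : D.t) :
    (D.β x).ncard ≤ D.width + 1 := by
  by_cases h : (D.β x).ncard = 0
  · omega
  · have : (D.β x).ncard - 1 ≤ D.width := by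
      apply le_csSup
      · refine ⟨Nat.card V, ?_⟩
        rintro n ⟨y, hy⟩
        have : (D.β y).ncard ≤ Nat.card V := Set.ncard_le_card _
        omega
      · exact ⟨x, by omega⟩
    omega

lemma bdry_le {V : Type u} [Fintype V] {G : SimpleGraph V} (B : BranchDecomp G) {a b : B.t}
    (h : B.T.Adj a b) : (B.bdry a b).ncard ≤ B.width := by
  apply le_csSup
  · refine ⟨Nat.card V, ?_⟩
    rintro n ⟨a, b, _, rfl⟩
    exact Set.ncard_le_card _
  · exact ⟨a, b, h, rfl⟩

lemma branch_of_tree {V : Type u} [Fintype V] {G : SimpleGraph V} (D : TreeDecomp G)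
    (e0 e1 : G.edgeSet) (hne : e1 ≠ e0) : ∃ B : BranchDecomp G, B.width ≤ D.width + 1 := by
  classical
  have : Fintype G.edgeSet := Fintype.ofFinite _
  apply branch_of_planted (D.width + 1) e0
  apply planted_of_build
  have hα : ∀ e : G.edgeSet, ∃ x, ∀ v ∈ (e : Sym2 V), v ∈ D.β x := by
    rintro ⟨e, he⟩
    induction e using Sym2.ind with
    | _ u v =>
    obtain ⟨x, hu, hv⟩ := D.covers_edge he
    refine ⟨x, ?_⟩
    intro w hw
    rw [Sym2.mem_iff] at hw
    rcases hw with rfl | rfl <;> assumption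
  choose α hα using hα
  refine build_of_tree D.isTree α _ ?_ _ _ _ (α e0) rfl rfl ⟨e1, by simp [hne]⟩ ?_
  · intro S x hS
    refine le_trans (Set.ncard_le_ncard ?_ (Set.toFinite _)) (bag_le D x)
    rintro v ⟨⟨e, he, hve⟩, ⟨f, hf, hvf⟩⟩
    obtain ⟨w, hw⟩ := walk_of_connected_induce (D.subtree v) (hα e v hve) (hα f v hvf)
    exact hw x (hS e he f hf w)
  · intro e he f hf
    have hf' : f = e0 := by simpa using hf
    rw [hf']
    exact (sep_left D.T _ _).symm

lemma exists_edge {V : Type u} {G : SimpleGraph V} (hG : ¬ G.IsAcyclic) :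
    ∃ u v : V, ∃ h : G.Adj u v,
      (∃ e : G.edgeSet, e ≠ ⟨s(u, v), h⟩ ∧ u ∈ (e : Sym2 V)) ∧
      (∃ e : G.edgeSet, e ≠ ⟨s(u, v), h⟩ ∧ v ∈ (e : Sym2 V)) := by
  rw [isAcyclic_iff_forall_adj_isBridge] at hG
  push Not at hG
  obtain ⟨u, v, h, hb⟩ := hG
  rw [isBridge_iff, not_not] at hb
  have key : ∀ a b : V, a ≠ b → (G.deleteEdges {s(u, v)}).Reachable a b →
      ∃ e : G.edgeSet, e ≠ ⟨s(u, v), h⟩ ∧ a ∈ (e : Sym2 V) := by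
    rintro a b hab ⟨w⟩
    cases w with
    | nil => exact absurd rfl hab
    | @cons _ c _ hadj _ =>
      rw [deleteEdges_adj] at hadj
      refine ⟨⟨s(a, c), hadj.1⟩, ?_, by simp⟩
      intro h'
      exact hadj.2 (congrArg Subtype.val h')
  exact ⟨u, v, h, key u v h.ne hb, key v u h.ne' hb.symm⟩

lemma two_le_width {V : Type u} [Fintype V] {G : SimpleGraph V} (hG : ¬ G.IsAcyclic)
    (B : BranchDecomp G) : 2 ≤ B.width := by
  obtain ⟨u, v, h, ⟨e1, he1, hu⟩, ⟨e2, he2, hv⟩⟩ := exists_edge hG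
  set e : G.edgeSet := ⟨s(u, v), h⟩ with he
  have := B.fin
  have hτ : ∀ f, f ≠ e → (B.τ e).1 ≠ (B.τ f).1 := by
    intro f hf h
    exact hf (B.τ.injective (Subtype.ext h)).symm
  obtain ⟨b, hb⟩ : ∃ b, B.T.Adj (B.τ e).1 b := by
    obtain ⟨w⟩ := B.isTree.1.preconnected (B.τ e).1 (B.τ e1).1
    have hne := hτ e1 he1
    generalize (B.τ e).1 = x at *
    generalize (B.τ e1).1 = y at *
    cases w with
    | nil => exact absurd rfl hne
    | cons h _ => exact ⟨_, h⟩
  have hdeg := (B.τ e).2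
  have hun : ∀ c, B.T.Adj (B.τ e).1 c → c = b := by
    intro c hc
    rw [Set.ncard_le_one (Set.toFinite _)] at hdeg
    exact hdeg c hc b hb
  have hin : e ∈ B.side (B.τ e).1 b := Reachable.refl _
  have hout : ∀ f, f ≠ e → f ∉ B.side (B.τ e).1 b := by
    intro f hf hr
    have := reach_closed (fun z => z = (B.τ e).1) (by
      intro x y hxy hx
      subst hx
      rw [deleteEdges_adj] at hxy
      have := hun y hxy.1
      subst this
      exact absurd rfl hxy.2) hr rfl
    exact hτ f hf this.symm
  refine le_trans ?_ (bdry_le B hb)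
  rw [← Set.ncard_pair h.ne]
  apply Set.ncard_le_ncard _ (Set.toFinite _)
  rintro w (rfl | rfl)
  · exact ⟨⟨e, hin, by simp [he]⟩, ⟨e1, hout e1 he1, hu⟩⟩
  · exact ⟨⟨e, hin, by simp [he]⟩, ⟨e2, hout e2 he2, hv⟩⟩

section Pend

variable {t I : Type*} (T : SimpleGraph t) (r : t)

/-- attach pendant vertices indexed by `I` at `r` -/
def pend : SimpleGraph (t ⊕ I) := SimpleGraph.fromRel (fun a b => match a, b with
  | Sum.inl a, Sum.inl b => T.Adj a b
  | Sum.inl a, Sum.inr _ => a = r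
  | _, _ => False)

lemma pend_ll {a b : t} : (pend T r : SimpleGraph (t ⊕ I)).Adj (Sum.inl a) (Sum.inl b) ↔
    T.Adj a b := by
  simp only [pend, fromRel_adj, ne_eq, Sum.inl.injEq]
  constructor
  · rintro ⟨_, h | h⟩
    · exact h
    · exact h.symm
  · intro h
    exact ⟨h.ne, Or.inl h⟩

lemma pend_lr {a : t} {i : I} : (pend T r).Adj (Sum.inl a) (Sum.inr i) ↔ a = r := by
  simp [pend]

lemma pend_rr {i j : I} : ¬ (pend T r).Adj (Sum.inr i) (Sum.inr j) := by
  simp [pend]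

/-- inclusion -/
def pendHom : T →g (pend T r : SimpleGraph (t ⊕ I)) := ⟨Sum.inl, fun h => (pend_ll T r).2 h⟩

lemma pend_isTree (hT : T.IsTree) : (pend T r : SimpleGraph (t ⊕ I)).IsTree := by
  have : Nonempty (t ⊕ I) := ⟨Sum.inl r⟩
  refine ⟨⟨?_⟩, ?_⟩
  · have key : ∀ a : t ⊕ I, (pend T r).Reachable (Sum.inl r) a := by
      rintro (a | i)
      · exact (hT.1.preconnected r a).map (pendHom T r)
      · exact ((pend_lr T r).2 rfl).reachable
    intro a b
    exact (key a).symm.trans (key b)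
  · rw [isAcyclic_iff_forall_adj_isBridge]
    have key : ∀ i : I, (pend T r).IsBridge s(Sum.inr i, Sum.inl r) := by
      intro i
      rw [isBridge_iff]
      intro hr
      have := reach_closed (fun z => z = (Sum.inr i : t ⊕ I)) (by
        rintro x (y | j) hxy hx
        · subst hx
          rw [deleteEdges_adj] at hxy
          have h1 := (pend_lr T r).1 hxy.1.symm
          subst h1
          exact absurd rfl hxy.2
        · subst hx
          rw [deleteEdges_adj] at hxy
          exact absurd hxy.1 (pend_rr T r)) hr rfl
      simp at this
    rintro (a | i) (b | j) hab
    · rw [pend_ll] at hab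
      have hbr := isAcyclic_iff_forall_adj_isBridge.1 hT.isAcyclic hab
      rw [isBridge_iff] at hbr ⊢
      intro hr
      apply hbr
      refine reach_map (Sum.elim id (fun _ => r)) ?_ hr
      rintro (c | i) (d | j) hcd
      · rw [deleteEdges_adj, pend_ll] at hcd
        apply Adj.reachable
        rw [deleteEdges_adj]
        refine ⟨hcd.1, ?_⟩
        intro h
        apply hcd.2
        have h' : s(c, d) = s(a, b) := h
        have := congrArg (Sym2.map (Sum.inl : t → t ⊕ I)) h'
        simpa using this
      · rw [deleteEdges_adj, pend_lr] at hcd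
        simp [hcd.1]
      · have := (pend_lr T r).1 ((deleteEdges_adj.1 hcd).1.symm)
        simp [this]
      · exact absurd (deleteEdges_adj.1 hcd).1 (pend_rr T r)
    · rw [pend_lr] at hab
      subst hab
      rw [Sym2.eq_swap]
      exact key j
    · have := (pend_lr T r).1 hab.symm
      subst this
      exact key i
    · exact absurd hab (pend_rr T r)

end Pend

lemma tree_of_branch {V : Type u} [Fintype V] {G : SimpleGraph V} (hG : ¬ G.IsAcyclic)
    (B : BranchDecomp G) : ∃ D : TreeDecomp G, D.width ≤ 3 * B.width / 2 - 1 := by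
  classical
  have hw2 := two_le_width hG B
  have := B.fin
  obtain ⟨r⟩ := B.isTree.1.nonempty
  let bag : B.t → Set V := fun x => {v | ∃ e f : G.edgeSet, v ∈ (e : Sym2 V) ∧ v ∈ (f : Sym2 V) ∧
    Sep B.T x (B.τ e).1 (B.τ f).1}
  have hleaf : ∀ e v, v ∈ bag (B.τ e).1 → v ∈ (e : Sym2 V) := by
    rintro e v ⟨f, g, hf, hg, hs⟩
    by_contra hv
    have hfe : (B.τ e).1 ≠ (B.τ f).1 := by
      intro h
      rw [B.τ.injective (Subtype.ext h)] at hv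
      exact hv hf
    have hge : (B.τ e).1 ≠ (B.τ g).1 := by
      intro h
      rw [B.τ.injective (Subtype.ext h)] at hv
      exact hv hg
    obtain ⟨y, z, hyz, hy, hz, _⟩ := two_steps B.isTree hs hfe hge
    have hdeg := (B.τ e).2
    rw [Set.ncard_le_one (Set.toFinite _)] at hdeg
    exact hyz (hdeg y hy z hz)
  have hcard : ∀ x, (bag x).ncard ≤ 3 * B.width / 2 := by
    intro x
    rcases B.ternary x with h | h
    · obtain ⟨e, he⟩ := B.τ.surjective ⟨x, h⟩
      have hx : (B.τ e).1 = x := congrArg Subtype.val he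
      have h1 : bag x ⊆ {v | v ∈ (e : Sym2 V)} := by
        intro v hv
        rw [← hx] at hv
        exact hleaf e v hv
      have h2 : {v | v ∈ (e : Sym2 V)}.ncard ≤ 2 := by
        obtain ⟨e, he⟩ := e
        induction e using Sym2.ind with
        | _ u v =>
        have : {w | w ∈ s(u, v)} = ({u, v} : Set V) := by ext w; simp
        show {w | w ∈ s(u, v)}.ncard ≤ 2
        rw [this]
        refine (Set.ncard_insert_le u {v}).trans ?_
        rw [Set.ncard_singleton]
      have := Set.ncard_le_ncard h1 (Set.toFinite _)
      omega
    · have hnot : ∀ e, x ≠ (B.τ e).1 := by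
        intro e he
        have := (B.τ e).2
        rw [← he] at this
        omega
      have h2 := Finset.card_mul_le_card_mul (s := (bag x).toFinset)
        (t := (B.T.neighborSet x).toFinset) (fun v y => v ∈ B.bdry x y) (m := 2) (n := B.width)
        (by
          intro v hv
          rw [Set.mem_toFinset] at hv
          obtain ⟨e, f, he, hf, hs⟩ := hv
          obtain ⟨y, z, hyz, hy, hz, h1, h2, h3, h4⟩ := two_steps B.isTree hs (hnot e) (hnot f)
          rw [← Finset.card_pair hyz]
          apply Finset.card_le_card
          intro w hw
          rw [Finset.mem_insert, Finset.mem_singleton] at hw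
          rw [Finset.mem_bipartiteAbove, Set.mem_toFinset]
          rcases hw with rfl | rfl
          · exact ⟨hy, ⟨f, h2, hf⟩, ⟨e, h1, he⟩⟩
          · exact ⟨hz, ⟨e, h4, he⟩, ⟨f, h3, hf⟩⟩)
        (by
          intro y hy
          rw [Set.mem_toFinset] at hy
          refine le_trans ?_ (bdry_le B hy)
          rw [Set.ncard_eq_toFinset_card']
          apply Finset.card_le_card
          intro v hv
          rw [Finset.mem_bipartiteBelow] at hv
          rw [Set.mem_toFinset]
          exact hv.2)
      rw [← Set.ncard_eq_toFinset_card', ← Set.ncard_eq_toFinset_card', h] at h2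
      omega
  -- isolated vertices
  let iso : Set V := {v | ∀ e : G.edgeSet, v ∉ (e : Sym2 V)}
  let ψ : iso ≃ Fin (Nat.card iso) := Finite.equivFin iso
  let β : B.t ⊕ Fin (Nat.card iso) → Set V := Sum.elim bag (fun i => {((ψ.symm i : iso) : V)})
  have hiso : ∀ x v, v ∈ bag x → v ∉ iso := by
    rintro x v ⟨e, f, he, hf, hs⟩ hv
    exact hv e he
  have hmem : ∀ (e : G.edgeSet) v, v ∈ (e : Sym2 V) → v ∈ bag (B.τ e).1 := by
    intro e v hv
    exact ⟨e, e, hv, hv, sep_left _ _ _⟩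
  have hisoβ : ∀ v (hv : v ∈ iso), v ∈ β (Sum.inr (ψ ⟨v, hv⟩)) := by
    intro v hv
    have h1 : ψ.symm (ψ ⟨v, hv⟩) = ⟨v, hv⟩ := ψ.symm_apply_apply _
    exact (congrArg Subtype.val h1).symm
  let D : TreeDecomp G :=
    { t := B.t ⊕ Fin (Nat.card iso)
      fin := inferInstance
      T := pend B.T r
      isTree := pend_isTree B.T r B.isTree
      β := β
      covers_edge := by
        intro u v h
        refine ⟨Sum.inl (B.τ ⟨s(u, v), h⟩).1, ?_, ?_⟩
        · exact hmem ⟨s(u, v), h⟩ u (by simp)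
        · exact hmem ⟨s(u, v), h⟩ v (by simp)
      covers_vert := by
        intro v
        by_cases hv : v ∈ iso
        · exact ⟨Sum.inr (ψ ⟨v, hv⟩), hisoβ v hv⟩
        · have hv' : ∃ e : G.edgeSet, v ∈ (e : Sym2 V) := by
            by_contra hcon
            push Not at hcon
            exact hv hcon
          obtain ⟨e, he⟩ := hv'
          exact ⟨Sum.inl (B.τ e).1, hmem e v he⟩
      subtree := by
        intro v
        by_cases hv : v ∈ iso
        · apply connected_induce
          · exact ⟨Sum.inr (ψ ⟨v, hv⟩), hisoβ v hv⟩
          · have key : ∀ a, v ∈ β a → a = Sum.inr (ψ ⟨v, hv⟩) := by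
              rintro (a | i) ha
              · exact absurd hv (hiso a v ha)
              · have h1 : v = ((ψ.symm i : iso) : V) := ha
                have h2 : (⟨v, hv⟩ : iso) = ψ.symm i := Subtype.ext h1
                rw [h2]
                exact congrArg Sum.inr (ψ.apply_symm_apply i).symm
            intro a ha b hb
            have ha' := key a ha
            have hb' := key b hb
            subst ha'
            subst hb'
            refine ⟨Walk.nil, ?_⟩
            intro x hx
            rw [Walk.support_nil, List.mem_singleton] at hx
            subst hx
            exact ha
        · have hv' : ∃ e : G.edgeSet, v ∈ (e : Sym2 V) := by
            by_contra hcon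
            push Not at hcon
            exact hv hcon
          have hll : ∀ e f : G.edgeSet, v ∈ (e : Sym2 V) → v ∈ (f : Sym2 V) →
              ∃ w : B.T.Walk (B.τ e).1 (B.τ f).1, ∀ x ∈ w.support, v ∈ bag x := by
            intro e f he hf
            obtain ⟨p, hp, _⟩ := B.isTree.existsUnique_path (B.τ e).1 (B.τ f).1
            exact ⟨p, fun x hx => ⟨e, f, he, hf, sep_of_path B.isTree.isAcyclic p hp hx⟩⟩
          have hal : ∀ a, v ∈ bag a → ∃ e : G.edgeSet, v ∈ (e : Sym2 V) ∧
              ∃ w : B.T.Walk a (B.τ e).1, ∀ x ∈ w.support, v ∈ bag x := by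
            rintro a ⟨e, f, he, hf, hs⟩
            obtain ⟨w, hw⟩ := hll e f he hf
            refine ⟨f, hf, w.dropUntil a (hs w), ?_⟩
            intro x hx
            exact hw x (w.support_dropUntil_subset_support _ hx)
          have hab : ∀ a b, v ∈ bag a → v ∈ bag b →
              ∃ w : B.T.Walk a b, ∀ x ∈ w.support, v ∈ bag x := by
            intro a b ha hb
            obtain ⟨e, he, w1, hw1⟩ := hal a ha
            obtain ⟨f, hf, w2, hw2⟩ := hal b hb
            obtain ⟨w3, hw3⟩ := hll e f he hf
            refine ⟨(w1.append w3).append w2.reverse, ?_⟩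
            intro x hx
            rw [Walk.mem_support_append_iff, Walk.mem_support_append_iff, Walk.support_reverse,
              List.mem_reverse] at hx
            rcases hx with (hx | hx) | hx
            · exact hw1 x hx
            · exact hw3 x hx
            · exact hw2 x hx
          apply connected_induce
          · obtain ⟨e, he⟩ := hv'
            exact ⟨Sum.inl (B.τ e).1, hmem e v he⟩
          · have hr : ∀ i, v ∉ β (Sum.inr i) := by
              intro i hi
              have h1 : v = ((ψ.symm i : iso) : V) := hi
              exact hv (h1 ▸ (ψ.symm i).2)
            rintro (a | i) ha (b | j) hb
            · obtain ⟨w, hw⟩ := hab a b ha hb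
              have key : ∀ x ∈ (w.map (pendHom (I := Fin (Nat.card iso)) B.T r)).support,
                  v ∈ β x := by
                intro x hx
                rw [Walk.support_map, List.mem_map] at hx
                obtain ⟨y, hy, rfl⟩ := hx
                exact hw y hy
              exact ⟨w.map (pendHom B.T r), key⟩
            · exact absurd hb (hr j)
            · exact absurd ha (hr i)
            · exact absurd ha (hr i) }
  refine ⟨D, ?_⟩
  apply csSup_le'
  rintro n ⟨x, hx⟩
  rcases x with x | i
  · have := hcard x
    have h1 : n + 1 = (bag x).ncard := hx
    omega
  · have h1 : n + 1 = ({((ψ.symm i : iso) : V)} : Set V).ncard := hx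
    rw [Set.ncard_singleton] at h1
    omega

lemma exists_treeDecomp {V : Type u} (G : SimpleGraph V) : Nonempty (TreeDecomp G) :=
  ⟨{ t := Unit
     fin := inferInstance
     T := ⊥
     isTree := IsTree.of_subsingleton
     β := fun _ => Set.univ
     covers_edge := fun _ _ _ => ⟨(), trivial, trivial⟩
     covers_vert := fun _ => ⟨(), trivial⟩
     subtree := by
      intro v
      apply connected_induce
      · exact ⟨(), trivial⟩
      · rintro ⟨⟩ _ ⟨⟩ _
        exact ⟨Walk.nil, fun x _ => trivial⟩ }⟩

end BTW

/-- For every non-acyclic graph `G`: `bw(G) - 1 ≤ tw(G) ≤ ⌊(3/2)·bw(G)⌋ - 1`. -/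
theorem branchwidth_treewidth_relation {V : Type u} [Fintype V] (G : SimpleGraph V)
    (hG : ¬ G.IsAcyclic) :
    branchwidth G - 1 ≤ treewidth G ∧ treewidth G ≤ 3 * branchwidth G / 2 - 1 := by
  obtain ⟨u, v, h, ⟨e1, he1, _⟩, _⟩ := BTW.exists_edge hG
  obtain ⟨D0⟩ := BTW.exists_treeDecomp G
  obtain ⟨D, hD⟩ : treewidth G ∈ {n | ∃ D : TreeDecomp G, D.width = n} :=
    Nat.sInf_mem ⟨_, D0, rfl⟩
  obtain ⟨B, hB⟩ := BTW.branch_of_tree D _ e1 he1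
  obtain ⟨B', hB'⟩ : branchwidth G ∈ {n | ∃ B : BranchDecomp G, B.width = n} :=
    Nat.sInf_mem ⟨_, B, rfl⟩
  have h1 : branchwidth G ≤ B.width := Nat.sInf_le ⟨B, rfl⟩
  obtain ⟨D', hD'⟩ := BTW.tree_of_branch hG B'
  have h2 : treewidth G ≤ D'.width := Nat.sInf_le ⟨D', rfl⟩
  rw [hB'] at hD'
  constructor
  · omega
  · omega
end

section
/- Let H be an apex graph on t vertices (there exists v ∈ V(H) with H - v planar). Every H-minor-free graph G of radius at most r has treewidth O(t^4·r + t^{2304}), assuming the linear grid-minor bound tw(G') = O(t^2·k) + O(t^{2304}) for H-minor-free graphs G' excluding the (k×k)-grid minor. -/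
open SimpleGraph Set

universe u

/-- A combinatorial closed surface presented as a flag system ("graph-encoded map"):
three fixed-point-free involutions on a finite set of flags, with `σ₀` and `σ₂`
commuting and `σ₀σ₂` fixed-point free. Vertices, edges, faces of the map are the orbits
of `⟨σ₁,σ₂⟩`, `⟨σ₀,σ₂⟩`, `⟨σ₀,σ₁⟩` respectively. -/
structure FlagSystem : Type 1 where
  F : Type
  fin : Fintype F
  σ₀ : Equiv.Perm F
  σ₁ : Equiv.Perm F
  σ₂ : Equiv.Perm F
  inv₀ : σ₀ * σ₀ = 1
  inv₁ : σ₁ * σ₁ = 1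
  inv₂ : σ₂ * σ₂ = 1
  fpf₀ : ∀ x, σ₀ x ≠ x
  fpf₁ : ∀ x, σ₁ x ≠ x
  fpf₂ : ∀ x, σ₂ x ≠ x
  comm02 : σ₀ * σ₂ = σ₂ * σ₀
  fpf02 : ∀ x, (σ₀ * σ₂) x ≠ x

namespace FlagSystem

variable (M : FlagSystem)

/-- Two flags lie in a common orbit of the subgroup generated by a set of permutations. -/
def SameOrbit (S : Set (Equiv.Perm M.F)) (x y : M.F) : Prop :=
  ∃ g ∈ Subgroup.closure S, g x = y

/-- The number of orbits of the subgroup generated by `S` on the flags. -/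
noncomputable def numOrbits (S : Set (Equiv.Perm M.F)) : ℕ :=
  Nat.card (Quotient (MulAction.orbitRel (Subgroup.closure S) M.F))

/-- Number of vertices of the map. -/
noncomputable def nV : ℕ := M.numOrbits {M.σ₁, M.σ₂}
/-- Number of edges of the map. -/
noncomputable def nE : ℕ := M.numOrbits {M.σ₀, M.σ₂}
/-- Number of faces of the map. -/
noncomputable def nF : ℕ := M.numOrbits {M.σ₀, M.σ₁}
/-- Number of connected components of the map (= of the underlying surface). -/
noncomputable def nC : ℕ := M.numOrbits {M.σ₀, M.σ₁, M.σ₂}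

/-- The flag system `M` is (the flag system of) a 2-cell embedding of the graph `G`:
there are assignments of a (non-isolated) vertex and an edge of `G` to each flag which
identify the vertex orbits with the non-isolated vertices of `G` and the edge orbits
with the edges of `G`, respecting all incidences. -/
def Realizes {V : Type u} (G : SimpleGraph V) : Prop :=
  ∃ (fv : M.F → {v : V // ∃ e ∈ G.edgeSet, v ∈ e}) (fe : M.F → G.edgeSet),
    (∀ x, ((fv x : V) ∈ (fe x : Sym2 V))) ∧
    (∀ x, fv (M.σ₁ x) = fv x) ∧ (∀ x, fv (M.σ₂ x) = fv x) ∧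
    (∀ x, fv (M.σ₀ x) ≠ fv x) ∧
    (∀ x, fe (M.σ₀ x) = fe x) ∧ (∀ x, fe (M.σ₂ x) = fe x) ∧
    (∀ x y, fv x = fv y → M.SameOrbit {M.σ₁, M.σ₂} x y) ∧
    (∀ x y, fe x = fe y → M.SameOrbit {M.σ₀, M.σ₂} x y) ∧
    Function.Surjective fv ∧
    (∀ (e : G.edgeSet) (v : V), v ∈ (e : Sym2 V) → ∃ x, fe x = e ∧ (fv x : V) = v)

end FlagSystem

/-- The Euler genus of a graph `G`: the least `g` such that some 2-cell embedding of `G`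
(given by a flag system `M` realizing `G`) satisfies the Euler formula
`g + v + f = 2·c + e`, i.e. `g = 2c - v + e - f`. -/
noncomputable def eulerGenus {V : Type u} (G : SimpleGraph V) : ℕ :=
  sInf {g | ∃ M : FlagSystem, M.Realizes G ∧ g + M.nV + M.nF = 2 * M.nC + M.nE}


/-! ### Connected sets -/

/-- Linked inside a set. -/
def Lk {V : Type*} (G : SimpleGraph V) (S : Set V) : V → V → Prop :=
  Relation.ReflTransGen (fun p q => G.Adj p q ∧ p ∈ S ∧ q ∈ S)

lemma Lk.symm' {V : Type*} {G : SimpleGraph V} {S : Set V} {a b : V} (h : Lk G S a b) :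
    Lk G S b a := by
  unfold Lk at *
  induction h with
  | refl => exact Relation.ReflTransGen.refl
  | tail _ h2 ih => exact Relation.ReflTransGen.head ⟨h2.1.symm, h2.2.2, h2.2.1⟩ ih

lemma Lk.trans' {V : Type*} {G : SimpleGraph V} {S : Set V} {a b c : V} (h : Lk G S a b)
    (h' : Lk G S b c) : Lk G S a c := Relation.ReflTransGen.trans h h'

lemma Lk.mono' {V : Type*} {G : SimpleGraph V} {S S' : Set V} (hS : S ⊆ S') {a b : V}
    (h : Lk G S a b) : Lk G S' a b :=
  Relation.ReflTransGen.mono (fun _ _ h => ⟨h.1, hS h.2.1, hS h.2.2⟩) _ _ h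

lemma Lk.single' {V : Type*} {G : SimpleGraph V} {S : Set V} {a b : V} (h : G.Adj a b)
    (ha : a ∈ S) (hb : b ∈ S) : Lk G S a b := Relation.ReflTransGen.single ⟨h, ha, hb⟩

lemma conn_iff {V : Type*} (G : SimpleGraph V) (S : Set V) :
    (G.induce S).Connected ↔ S.Nonempty ∧ ∀ a ∈ S, ∀ b ∈ S, Lk G S a b := by
  constructor
  · intro h
    refine ⟨Set.nonempty_coe_sort.mp h.nonempty, fun a ha b hb => ?_⟩
    have := h.preconnected ⟨a, ha⟩ ⟨b, hb⟩
    rw [SimpleGraph.reachable_iff_reflTransGen] at this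
    exact Relation.ReflTransGen.lift (r := (G.induce S).Adj)
      (p := fun p q => G.Adj p q ∧ p ∈ S ∧ q ∈ S) Subtype.val
      (fun x y hxy => ⟨hxy, x.2, y.2⟩) _ _ this
  · rintro ⟨⟨s, hs⟩, h⟩
    have : Nonempty S := ⟨⟨s, hs⟩⟩
    refine SimpleGraph.Connected.mk ?_
    rintro ⟨a, ha⟩ ⟨b, hb⟩
    have h1 := h a ha b hb
    have key : ∀ c, Lk G S a c → ∀ hc : c ∈ S, (G.induce S).Reachable ⟨a, ha⟩ ⟨c, hc⟩ := by
      intro c hc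
      unfold Lk at hc
      induction hc with
      | refl => intro _; exact SimpleGraph.Reachable.refl _
      | tail _ h2 ih =>
        intro hc
        refine (ih h2.2.1).trans (SimpleGraph.Adj.reachable ?_)
        exact h2.1
    exact key b h1 hb

lemma conn_of_root {V : Type*} (G : SimpleGraph V) (S : Set V) (a : V) (ha : a ∈ S)
    (h : ∀ b ∈ S, Lk G S a b) : (G.induce S).Connected :=
  (conn_iff G S).2 ⟨⟨a, ha⟩, fun b hb c hc => (h b hb).symm'.trans' (h c hc)⟩

/-- Lifting links along a minor model. -/
lemma lift_link {V P : Type*} (G : SimpleGraph V) (K : SimpleGraph P) (ψ : P → Set V)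
    (Q : Set P) (hc : ∀ p ∈ Q, (G.induce (ψ p)).Connected)
    (he : ∀ p ∈ Q, ∀ q ∈ Q, K.Adj p q → ∃ a ∈ ψ p, ∃ b ∈ ψ q, G.Adj a b)
    {p q : P} (hp : p ∈ Q) (h : Lk K Q p q) {a b : V} (ha : a ∈ ψ p) (hb : b ∈ ψ q) :
    Lk G (⋃ p ∈ Q, ψ p) a b := by
  have hin : ∀ p ∈ Q, ∀ a ∈ ψ p, ∀ b ∈ ψ p, Lk G (⋃ p ∈ Q, ψ p) a b := by
    intro p hp a ha b hb
    exact (((conn_iff _ _).1 (hc p hp)).2 a ha b hb).mono' (Set.subset_biUnion_of_mem hp)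
  have key : ∀ q, Lk K Q p q → ∀ b ∈ ψ q, Lk G (⋃ p ∈ Q, ψ p) a b := by
    intro q hq
    unfold Lk at hq
    induction hq with
    | refl => intro b hb; exact hin p hp a ha b hb
    | @tail q q' _ h2 ih =>
      intro b hb
      obtain ⟨c, hc, d, hd, hcd⟩ := he q h2.2.1 q' h2.2.2 h2.1
      refine (ih c hc).trans' ((Lk.single' hcd ?_ ?_).trans' (hin q' h2.2.2 d hd b hb))
      · exact Set.mem_biUnion h2.2.1 hc
      · exact Set.mem_biUnion h2.2.2 hd
  exact key q h b hb

lemma lift_conn {V P : Type*} (G : SimpleGraph V) (K : SimpleGraph P) (ψ : P → Set V)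
    (Q : Set P) (hc : ∀ p ∈ Q, (G.induce (ψ p)).Connected)
    (he : ∀ p ∈ Q, ∀ q ∈ Q, K.Adj p q → ∃ a ∈ ψ p, ∃ b ∈ ψ q, G.Adj a b)
    (hQ : (K.induce Q).Connected) : (G.induce (⋃ p ∈ Q, ψ p)).Connected := by
  obtain ⟨⟨p, hp⟩, hl⟩ := (conn_iff _ _).1 hQ
  obtain ⟨⟨a, ha⟩, _⟩ := (conn_iff _ _).1 (hc p hp)
  refine (conn_iff _ _).2 ⟨⟨a, Set.mem_biUnion hp ha⟩, ?_⟩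
  intro b hb c hc'
  simp only [Set.mem_iUnion] at hb hc'
  obtain ⟨p, hp, hb⟩ := hb
  obtain ⟨q, hq, hc'⟩ := hc'
  exact lift_link G K ψ Q hc he hp (hl p hp q hq) hb hc'

/-! ### The infinite grid -/

/-- The quarter-plane grid. -/
def NG : SimpleGraph (ℕ × ℕ) where
  Adj p q := (p.1 = q.1 ∧ (p.2 + 1 = q.2 ∨ q.2 + 1 = p.2)) ∨
    (p.2 = q.2 ∧ (p.1 + 1 = q.1 ∨ q.1 + 1 = p.1))
  symm := ⟨by intro p q h; grind⟩
  loopless := ⟨by intro p h; grind⟩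

lemma seg_snd (S : Set (ℕ × ℕ)) (c a b : ℕ) (hab : a ≤ b)
    (h : ∀ r, a ≤ r → r ≤ b → (c, r) ∈ S) : Lk NG S (c, a) (c, b) := by
  induction b, hab using Nat.le_induction with
  | base => exact Relation.ReflTransGen.refl
  | succ b hb ih =>
    refine (ih fun r h1 h2 => h r h1 (by omega)).trans' (Lk.single' ?_ ?_ ?_)
    · left; simp
    · exact h _ hb (by omega)
    · exact h _ (by omega) (by omega)

lemma seg_fst (S : Set (ℕ × ℕ)) (c a b : ℕ) (hab : a ≤ b)
    (h : ∀ r, a ≤ r → r ≤ b → (r, c) ∈ S) : Lk NG S (a, c) (b, c) := by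
  induction b, hab using Nat.le_induction with
  | base => exact Relation.ReflTransGen.refl
  | succ b hb ih =>
    refine (ih fun r h1 h2 => h r h1 (by omega)).trans' (Lk.single' ?_ ?_ ?_)
    · right; simp
    · exact h _ hb (by omega)
    · exact h _ (by omega) (by omega)

/-! ### Choosing clear rows -/

lemma clear_rows (m N t : ℕ) (X : Finset ℕ) (hX : X.card < t) (Hit : Finset ℕ)
    (hH : Hit.card ≤ N) :
    ∃ f : ℕ → ℕ, (∀ x, x < m → f x ∉ Hit) ∧
      (∀ x y, x < y → y ≤ m → f x < f y) ∧ f m = t * (m + N + 1) ∧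
      ∀ x ∈ X, x < m → f x < (m + N + 1) * (X.filter (· < x)).card + (m + N) ∧
        (m + N + 1) * (X.filter (· < x)).card + (m + N) < f (x + 1) := by
  have hblock : ∀ j : ℕ, ∃ h : ℕ → ℕ, (∀ x, x < m → h x ∉ Hit ∧ (m + N + 1) * j ≤ h x ∧
      h x < (m + N + 1) * j + (m + N)) ∧ ∀ x y, x < y → y < m → h x < h y := by
    intro j
    set B := Finset.Ico ((m + N + 1) * j) ((m + N + 1) * j + (m + N)) \ Hit with hB
    have hcard : m ≤ B.card := by
      have := Finset.le_card_sdiff Hit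
        (Finset.Ico ((m + N + 1) * j) ((m + N + 1) * j + (m + N)))
      rw [Nat.card_Ico, ← hB] at this
      omega
    let o := Finset.orderEmbOfCardLe B hcard
    refine ⟨fun x => if h : x < m then o ⟨x, h⟩ else 0, ?_, ?_⟩
    · intro x hx
      simp only [hx, dif_pos]
      have := Finset.orderEmbOfCardLe_mem B hcard ⟨x, hx⟩
      have := Finset.mem_sdiff.1 this
      rw [Finset.mem_Ico] at this
      exact ⟨this.2, this.1.1, this.1.2⟩
    · intro x y hxy hy
      have hx : x < m := by omega
      simp only [hx, hy, dif_pos]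
      exact o.strictMono hxy
  choose h hh hmono using hblock
  set c : ℕ → ℕ := fun x => (X.filter (· < x)).card with hc
  have hct : ∀ x, c x < t := fun x => lt_of_le_of_lt (Finset.card_filter_le _ _) hX
  have hcm : ∀ x y, x ≤ y → c x ≤ c y := by
    intro x y hxy
    refine Finset.card_le_card ?_
    intro z hz
    simp only [Finset.mem_filter] at hz ⊢
    exact ⟨hz.1, by omega⟩
  have hcs : ∀ x ∈ X, c x < c (x + 1) := by
    intro x hx
    refine Finset.card_lt_card ?_
    rw [Finset.ssubset_iff_of_subset]
    · exact ⟨x, by simp [hx], by simp⟩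
    · intro z hz
      simp only [Finset.mem_filter] at hz ⊢
      exact ⟨hz.1, by omega⟩
  have hlow : ∀ j j', j < j' → (m + N + 1) * j + (m + N) < (m + N + 1) * j' := by
    intro j j' hj
    have : (m + N + 1) * (j + 1) ≤ (m + N + 1) * j' := Nat.mul_le_mul_left _ hj
    rw [Nat.mul_add] at this
    omega
  have htop : ∀ x, (m + N + 1) * c x + (m + N) < t * (m + N + 1) := by
    intro x
    have := hlow _ _ (hct x)
    rw [Nat.mul_comm t]; exact this
  refine ⟨fun x => if x < m then h (c x) x else t * (m + N + 1), ?_, ?_, ?_, ?_⟩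
  · intro x hx
    simp only [hx, if_true]
    exact (hh _ x hx).1
  · intro x y hxy hy
    have hx : x < m := by omega
    simp only [hx, if_true]
    have h1 := hh (c x) x hx
    by_cases hy' : y < m
    · simp only [hy', if_true]
      have h2 := hh (c y) y hy'
      rcases (hcm x y hxy.le).eq_or_lt with he | hl
      · rw [← he]; exact hmono _ x y hxy hy'
      · have := hlow _ _ hl
        omega
    · simp only [hy', if_false]
      have := htop x
      omega
  · simp
  · intro x hx hxm
    simp only [hxm, if_true]
    have h1 := hh (c x) x hxm
    refine ⟨h1.2.2, ?_⟩
    by_cases hy : x + 1 < m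
    · simp only [hy, if_true]
      have h2 := hh (c (x + 1)) _ hy
      have := hlow _ _ (hcs x hx)
      simp only [hc] at *
      omega
    · simp only [hy, if_false]
      exact htop x

/-! ### Combining a planar model with an apex tree -/

lemma walk_lk {V : Type*} {G : SimpleGraph V} (S : Set V) {a b : V} (p : G.Walk a b)
    (h : ∀ v ∈ p.support, v ∈ S) : ∀ v ∈ p.support, Lk G S a v := by
  induction p with
  | nil => intro v hv; simp at hv; subst hv; exact Relation.ReflTransGen.refl
  | @cons a c b hac p ih =>
    intro v hv
    rw [SimpleGraph.Walk.support_cons, List.mem_cons] at hv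
    rcases hv with rfl | hv
    · exact Relation.ReflTransGen.refl
    · refine (Lk.single' hac (h _ (by simp)) (h _ (by simp))).trans' (ih ?_ v hv)
      intro v hv
      exact h v (by simp [hv])

lemma rect_link (a b c d : ℕ) (S : Set (ℕ × ℕ))
    (hS : ∀ p : ℕ × ℕ, a < p.1 → p.1 < b → c < p.2 → p.2 < d → p ∈ S)
    (p q : ℕ × ℕ) (hp : a < p.1 ∧ p.1 < b ∧ c < p.2 ∧ p.2 < d)
    (hq : a < q.1 ∧ q.1 < b ∧ c < q.2 ∧ q.2 < d) : Lk NG S p q := by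
  have h1 : Lk NG S (p.1, p.2) (q.1, p.2) := by
    rcases le_total p.1 q.1 with h | h
    · exact seg_fst S _ _ _ h fun r _ _ =>
        hS _ (by dsimp only; omega) (by dsimp only; omega) (by dsimp only; omega)
          (by dsimp only; omega)
    · exact (seg_fst S _ _ _ h fun r _ _ =>
        hS _ (by dsimp only; omega) (by dsimp only; omega) (by dsimp only; omega)
          (by dsimp only; omega)).symm'
  have h2 : Lk NG S (q.1, p.2) (q.1, q.2) := by
    rcases le_total p.2 q.2 with h | h
    · exact seg_snd S _ _ _ h fun r _ _ =>
        hS _ (by dsimp only; omega) (by dsimp only; omega) (by dsimp only; omega)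
          (by dsimp only; omega)
    · exact (seg_snd S _ _ _ h fun r _ _ =>
        hS _ (by dsimp only; omega) (by dsimp only; omega) (by dsimp only; omega)
          (by dsimp only; omega)).symm'
  exact h1.trans' h2

/-- The branch set of a point of the coarse grid in the fine grid. -/
def Lset (f g : ℕ → ℕ) (s : ℕ × ℕ) : Set (ℕ × ℕ) :=
  {p | (p.1 = f s.1 ∧ g s.2 ≤ p.2 ∧ p.2 < g (s.2 + 1)) ∨
    (p.2 = g s.2 ∧ f s.1 ≤ p.1 ∧ p.1 < f (s.1 + 1))}

lemma Lset_conn (f g : ℕ → ℕ) (s : ℕ × ℕ) (hf : f s.1 < f (s.1 + 1))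
    (hg : g s.2 < g (s.2 + 1)) : (NG.induce (Lset f g s)).Connected := by
  refine conn_of_root _ _ (f s.1, g s.2) (Or.inl ⟨rfl, le_rfl, hg⟩) ?_
  rintro ⟨p1, p2⟩ (⟨h1, h2, h3⟩ | ⟨h1, h2, h3⟩)
  · dsimp only at h1 h2 h3
    subst h1
    exact seg_snd _ _ _ _ h2 fun r hr hr' => Or.inl ⟨rfl, hr, by dsimp only; omega⟩
  · dsimp only at h1 h2 h3
    subst h1
    exact seg_fst _ _ _ _ h2 fun r hr hr' => Or.inr ⟨rfl, hr, by dsimp only; omega⟩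

lemma Lset_edge (f g : ℕ → ℕ) (m : ℕ) (hf : ∀ x y, x < y → y ≤ m → f x < f y)
    (hg : ∀ x y, x < y → y ≤ m → g x < g y) (s s' : ℕ × ℕ)
    (hs : s.1 < m ∧ s.2 < m) (hs' : s'.1 < m ∧ s'.2 < m) (h : NG.Adj s s') :
    ∃ p ∈ Lset f g s, ∃ q ∈ Lset f g s', NG.Adj p q := by
  have key : ∀ s s' : ℕ × ℕ, (s.1 < m ∧ s.2 < m) → (s'.1 < m ∧ s'.2 < m) →
      ((s.1 = s'.1 ∧ s.2 + 1 = s'.2) ∨ (s.2 = s'.2 ∧ s.1 + 1 = s'.1)) →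
      ∃ p ∈ Lset f g s, ∃ q ∈ Lset f g s', NG.Adj p q := by
    rintro ⟨x, y⟩ ⟨x', y'⟩ ⟨h1, h2⟩ ⟨h3, h4⟩ (⟨h5, h6⟩ | ⟨h5, h6⟩)
    · dsimp only at *
      subst h5; subst h6
      have e1 := hg y (y + 1) (by omega) (by omega)
      have e2 := hg (y + 1) (y + 2) (by omega) (by omega)
      refine ⟨(f x, g (y + 1) - 1), Or.inl ⟨rfl, ?_, ?_⟩, (f x, g (y + 1)),
        Or.inl ⟨rfl, le_rfl, e2⟩, Or.inl ⟨rfl, Or.inl ?_⟩⟩ <;> dsimp only <;> omega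
    · dsimp only at *
      subst h5; subst h6
      have e1 := hf x (x + 1) (by omega) (by omega)
      have e2 := hf (x + 1) (x + 2) (by omega) (by omega)
      refine ⟨(f (x + 1) - 1, g y), Or.inr ⟨rfl, ?_, ?_⟩, (f (x + 1), g y),
        Or.inr ⟨rfl, le_rfl, e2⟩, Or.inr ⟨rfl, Or.inl ?_⟩⟩ <;> dsimp only <;> omega
  rcases h with ⟨h1, h2 | h2⟩ | ⟨h1, h2 | h2⟩
  · exact key s s' hs hs' (Or.inl ⟨h1, h2⟩)
  · obtain ⟨p, hp, q, hq, h⟩ := key s' s hs' hs (Or.inl ⟨h1.symm, h2⟩)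
    exact ⟨q, hq, p, hp, h.symm⟩
  · exact key s s' hs hs' (Or.inr ⟨h1, h2⟩)
  · obtain ⟨p, hp, q, hq, h⟩ := key s' s hs' hs (Or.inr ⟨h1.symm, h2⟩)
    exact ⟨q, hq, p, hp, h.symm⟩

lemma cell_unique (f : ℕ → ℕ) (m : ℕ) (hf : ∀ x y, x < y → y ≤ m → f x < f y)
    (x x' a : ℕ) (hx : x < m) (hx' : x' < m) (h1 : f x ≤ a) (h2 : a < f (x + 1))
    (h1' : f x' ≤ a) (h2' : a < f (x' + 1)) : x = x' := by
  by_contra hne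
  rcases Nat.lt_or_gt_of_ne hne with h | h
  · rcases Nat.lt_or_ge (x + 1) x' with h' | h'
    · have := hf _ _ h' (by omega); omega
    · have : x + 1 = x' := by omega
      rw [this] at h2; omega
  · rcases Nat.lt_or_ge (x' + 1) x with h' | h'
    · have := hf _ _ h' (by omega); omega
    · have : x' + 1 = x := by omega
      rw [this] at h2'; omega

lemma Lset_cell (f g : ℕ → ℕ) (s p : ℕ × ℕ) (hf : f s.1 < f (s.1 + 1))
    (hg : g s.2 < g (s.2 + 1)) (h : p ∈ Lset f g s) :
    (f s.1 ≤ p.1 ∧ p.1 < f (s.1 + 1)) ∧ (g s.2 ≤ p.2 ∧ p.2 < g (s.2 + 1)) := by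
  rcases h with ⟨h1, h2, h3⟩ | ⟨h1, h2, h3⟩ <;> omega

lemma grid_to_nat {V : Type*} (G : SimpleGraph V) (k : ℕ) (hG : HasMinor G (gridGraph k)) :
    ∃ ψ : ℕ × ℕ → Set V,
      (∀ p : ℕ × ℕ, p.1 < k → p.2 < k → (G.induce (ψ p)).Connected) ∧
      (∀ p q v, v ∈ ψ p → v ∈ ψ q → p = q) ∧
      (∀ p q : ℕ × ℕ, p.1 < k → p.2 < k → q.1 < k → q.2 < k → NG.Adj p q →
        ∃ a ∈ ψ p, ∃ b ∈ ψ q, G.Adj a b) := by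
  obtain ⟨ψ, h1, h2, h3⟩ := hG
  refine ⟨fun p => if h : p.1 < k ∧ p.2 < k then ψ (⟨p.1, h.1⟩, ⟨p.2, h.2⟩) else ∅, ?_, ?_, ?_⟩
  · intro p hp1 hp2
    beta_reduce
    rw [dif_pos ⟨hp1, hp2⟩]
    exact h1 _
  · intro p q v hp hq
    by_cases hp' : p.1 < k ∧ p.2 < k
    · by_cases hq' : q.1 < k ∧ q.2 < k
      · simp only [hp', hq', dif_pos, and_self] at hp hq
        by_contra hne
        have : ((⟨p.1, hp'.1⟩, ⟨p.2, hp'.2⟩) : Fin k × Fin k) ≠ (⟨q.1, hq'.1⟩, ⟨q.2, hq'.2⟩) := by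
          intro he
          simp only [Prod.mk.injEq, Fin.mk.injEq] at he
          exact hne (Prod.ext he.1 he.2)
        exact Set.disjoint_left.1 (h2 this) hp hq
      · simp [hq'] at hq
    · simp [hp'] at hp
  · intro p q hp1 hp2 hq1 hq2 hadj
    simp only [hp1, hp2, hq1, hq2, and_self, dif_pos]
    apply h3
    unfold gridGraph
    rw [SimpleGraph.fromRel_adj]
    refine ⟨?_, ?_⟩
    · intro he
      simp only [Prod.mk.injEq, Fin.mk.injEq] at he
      exact hadj.ne (Prod.ext he.1 he.2)
    · simp only [Fin.mk.injEq]
      rcases hadj with h | h <;> omega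

theorem apex_comb {V W' : Type*} [Fintype W'] (G : SimpleGraph V)
    (H' : SimpleGraph W') (m : ℕ) (φ : W' → Set (ℕ × ℕ)) (hφ : IsMinorModel NG H' φ)
    (hm : ∀ w, ∀ p ∈ φ w, p.1 < m ∧ p.2 < m) (r : ℕ) (u : V)
    (hu : ∀ w, G.Reachable u w ∧ G.dist u w ≤ r)
    (hG : HasMinor G (gridGraph ((Fintype.card W' + 1) *
      (m + (1 + Fintype.card W' * (r + 1)) + 1)))) :
    ∃ (A : Set V) (B : W' → Set V), (G.induce A).Connected ∧
      (∀ w, (G.induce (B w)).Connected) ∧ (∀ w, Disjoint A (B w)) ∧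
      (Pairwise fun w₁ w₂ => Disjoint (B w₁) (B w₂)) ∧
      (∀ ⦃w₁ w₂⦄, H'.Adj w₁ w₂ → ∃ a ∈ B w₁, ∃ b ∈ B w₂, G.Adj a b) ∧
      ∀ w, ∃ a ∈ A, ∃ b ∈ B w, G.Adj a b := by
  classical
  obtain ⟨hφc, hφd, hφe⟩ := hφ
  set N := 1 + Fintype.card W' * (r + 1) with hN
  set k := (Fintype.card W' + 1) * (m + N + 1) with hk
  obtain ⟨ψ, hψc, hψd, hψe⟩ := grid_to_nat G k hG
  have hne : ∀ w, ∃ p, p ∈ φ w := fun w => ((conn_iff _ _).1 (hφc w)).1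
  choose pt hpt using hne
  set X : Finset ℕ := Finset.univ.image (fun w => (pt w).1) with hX
  set Y : Finset ℕ := Finset.univ.image (fun w => (pt w).2) with hY
  have hXc : X.card < Fintype.card W' + 1 := Nat.lt_succ_of_le Finset.card_image_le
  have hYc : Y.card < Fintype.card W' + 1 := Nat.lt_succ_of_le Finset.card_image_le
  have hXm : ∀ w, (pt w).1 ∈ X := fun w => Finset.mem_image_of_mem _ (Finset.mem_univ w)
  have hYm : ∀ w, (pt w).2 ∈ Y := fun w => Finset.mem_image_of_mem _ (Finset.mem_univ w)
  set P : W' → ℕ × ℕ := fun w =>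
    ((m + N + 1) * (X.filter (· < (pt w).1)).card + (m + N),
     (m + N + 1) * (Y.filter (· < (pt w).2)).card + (m + N)) with hP
  have hbnd : ∀ j, j < Fintype.card W' + 1 → (m + N + 1) * j + (m + N) < k := by
    intro j hj
    have : (m + N + 1) * (j + 1) ≤ (m + N + 1) * (Fintype.card W' + 1) :=
      Nat.mul_le_mul_left _ hj
    rw [Nat.mul_add] at this
    rw [hk, Nat.mul_comm (Fintype.card W' + 1)]
    omega
  have hPk : ∀ w, (P w).1 < k ∧ (P w).2 < k := by
    intro w
    exact ⟨hbnd _ (lt_of_le_of_lt (Finset.card_filter_le _ _) hXc),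
      hbnd _ (lt_of_le_of_lt (Finset.card_filter_le _ _) hYc)⟩
  have hq' : ∀ w, ∃ q, q ∈ ψ (P w) := fun w =>
    ((conn_iff _ _).1 (hψc _ (hPk w).1 (hPk w).2)).1
  choose q hq using hq'
  have hwalk : ∀ w, ∃ p : G.Walk u (q w), p.length ≤ r := by
    intro w
    obtain ⟨p, hp⟩ := (hu (q w)).1.exists_walk_length_eq_dist
    exact ⟨p, hp ▸ (hu (q w)).2⟩
  choose wk hwk using hwalk
  set T : Finset V := insert u (Finset.univ.biUnion fun w => (wk w).support.toFinset) with hT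
  have hTc : T.card ≤ N := by
    refine (Finset.card_insert_le _ _).trans ?_
    have : (Finset.univ.biUnion fun w => (wk w).support.toFinset).card ≤
        Fintype.card W' * (r + 1) := by
      refine Finset.card_biUnion_le_card_mul _ _ _ ?_
      intro w _
      refine (List.toFinset_card_le _).trans ?_
      rw [SimpleGraph.Walk.length_support]
      have := hwk w
      omega
    omega
  have hTs : ∀ w, ∀ v ∈ (wk w).support, v ∈ (T : Set V) := by
    intro w v hv
    rw [Finset.mem_coe, hT, Finset.mem_insert, Finset.mem_biUnion]
    exact Or.inr ⟨w, Finset.mem_univ _, List.mem_toFinset.2 hv⟩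
  have hTl : ∀ v ∈ T, Lk G (T : Set V) u v := by
    intro v hv
    rw [hT, Finset.mem_insert, Finset.mem_biUnion] at hv
    rcases hv with rfl | ⟨w, _, hv⟩
    · exact Relation.ReflTransGen.refl
    · exact walk_lk _ (wk w) (hTs w) v (List.mem_toFinset.1 hv)
  have hqT : ∀ w, q w ∈ T := fun w => hTs w _ (wk w).end_mem_support
  let key : V → ℕ × ℕ := fun v => if h : ∃ p, v ∈ ψ p then h.choose else (0, 0)
  have hkey : ∀ v p, v ∈ ψ p → key v = p := by
    intro v p hv
    have h : ∃ p, v ∈ ψ p := ⟨p, hv⟩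
    simp only [key, h, dif_pos]
    exact hψd _ _ v h.choose_spec hv
  obtain ⟨f, hf1, hf2, hf3, hf4⟩ := clear_rows m N (Fintype.card W' + 1) X hXc
    (T.image fun v => (key v).1) (Finset.card_image_le.trans hTc)
  obtain ⟨g, hg1, hg2, hg3, hg4⟩ := clear_rows m N (Fintype.card W' + 1) Y hYc
    (T.image fun v => (key v).2) (Finset.card_image_le.trans hTc)
  have hfs : ∀ x, x < m → f x < f (x + 1) := fun x hx => hf2 _ _ (by omega) (by omega)
  have hgs : ∀ x, x < m → g x < g (x + 1) := fun x hx => hg2 _ _ (by omega) (by omega)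
  have hfk : ∀ x, x < m → f (x + 1) ≤ k := by
    intro x hx
    rcases Nat.lt_or_ge (x + 1) m with h | h
    · have := hf2 _ _ h le_rfl; omega
    · have : x + 1 = m := by omega
      rw [this, hf3]
  have hgk : ∀ x, x < m → g (x + 1) ≤ k := by
    intro x hx
    rcases Nat.lt_or_ge (x + 1) m with h | h
    · have := hg2 _ _ h le_rfl; omega
    · have : x + 1 = m := by omega
      rw [this, hg3]
  set D : W' → Set (ℕ × ℕ) := fun w => {p | f (pt w).1 < p.1 ∧ p.1 < f ((pt w).1 + 1) ∧
    g (pt w).2 < p.2 ∧ p.2 < g ((pt w).2 + 1)} with hD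
  have hptm := fun w => hm w _ (hpt w)
  have hPD : ∀ w, P w ∈ D w := by
    intro w
    have h1 := hf4 _ (hXm w) (hptm w).1
    have h2 := hg4 _ (hYm w) (hptm w).2
    exact ⟨h1.1, h1.2, h2.1, h2.2⟩
  have hDk : ∀ w, ∀ p ∈ D w, p.1 < k ∧ p.2 < k := by
    intro w p hp
    have h1 := hfk _ (hptm w).1
    have h2 := hgk _ (hptm w).2
    obtain ⟨a1, a2, a3, a4⟩ := hp
    omega
  set Q : W' → Set (ℕ × ℕ) := fun w => ⋃ s ∈ φ w, Lset f g s with hQ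
  have hQk : ∀ w, ∀ p ∈ Q w, p.1 < k ∧ p.2 < k := by
    intro w p hp
    simp only [hQ, Set.mem_iUnion] at hp
    obtain ⟨s, hs, hp⟩ := hp
    have h0 := hm w s hs
    have h1 := hfk _ h0.1
    have h2 := hgk _ h0.2
    have h3 := Lset_cell f g s p (hfs _ h0.1) (hgs _ h0.2) hp
    omega
  have hQc : ∀ w, (NG.induce (Q w)).Connected := by
    intro w
    refine lift_conn NG NG (Lset f g) (φ w) ?_ ?_ (hφc w)
    · intro s hs
      exact Lset_conn f g s (hfs _ (hm w s hs).1) (hgs _ (hm w s hs).2)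
    · intro s hs s' hs' h
      exact Lset_edge f g m hf2 hg2 s s' (hm w s hs) (hm w s' hs') h
  have hDc : ∀ w, (NG.induce (D w)).Connected := by
    intro w
    refine (conn_iff _ _).2 ⟨⟨P w, hPD w⟩, ?_⟩
    intro p hp q hq
    exact rect_link _ _ _ _ (D w) (fun p h1 h2 h3 h4 => ⟨h1, h2, h3, h4⟩) p q hp hq
  have hψD : ∀ w, (G.induce (⋃ p ∈ D w, ψ p)).Connected := by
    intro w
    refine lift_conn G NG ψ (D w) ?_ ?_ (hDc w)
    · intro p hp
      exact hψc p (hDk w p hp).1 (hDk w p hp).2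
    · intro p hp q hq h
      exact hψe p q (hDk w p hp).1 (hDk w p hp).2 (hDk w q hq).1 (hDk w q hq).2 h
  refine ⟨(T : Set V) ∪ ⋃ w, ⋃ p ∈ D w, ψ p, fun w => ⋃ p ∈ Q w, ψ p, ?_, ?_, ?_, ?_, ?_, ?_⟩
  · refine conn_of_root _ _ u (Or.inl (by simp [hT])) ?_
    rintro v (hv | hv)
    · exact (hTl v hv).mono' Set.subset_union_left
    · obtain ⟨w, hv⟩ := Set.mem_iUnion.1 hv
      refine ((hTl _ (hqT w)).mono' Set.subset_union_left).trans'
        (Lk.mono' ?_ (((conn_iff _ _).1 (hψD w)).2 (q w) ?_ v hv))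
      · exact (Set.subset_iUnion (fun w => ⋃ p ∈ D w, ψ p) w).trans Set.subset_union_right
      · exact Set.mem_biUnion (hPD w) (hq w)
  · intro w
    refine lift_conn G NG ψ (Q w) ?_ ?_ (hQc w)
    · intro p hp
      exact hψc p (hQk w p hp).1 (hQk w p hp).2
    · intro p hp q hq h
      exact hψe p q (hQk w p hp).1 (hQk w p hp).2 (hQk w q hq).1 (hQk w q hq).2 h
  · intro w
    rw [Set.disjoint_left]
    intro v hvA hvB
    simp only [hQ, Set.mem_iUnion] at hvB
    obtain ⟨p, ⟨s, hs, hp⟩, hvp⟩ := hvB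
    have h0 := hm w s hs
    rcases hvA with hv | hv
    · have hkv := hkey v p hvp
      rcases hp with ⟨h1, _, _⟩ | ⟨h1, _, _⟩
      · exact hf1 _ h0.1 (Finset.mem_image.2 ⟨v, hv, by rw [hkv, h1]⟩)
      · exact hg1 _ h0.2 (Finset.mem_image.2 ⟨v, hv, by rw [hkv, h1]⟩)
    · simp only [Set.mem_iUnion] at hv
      obtain ⟨w', p', hp', hv'⟩ := hv
      have := hψd _ _ v hv' hvp
      subst this
      obtain ⟨a1, a2, a3, a4⟩ := hp'
      obtain ⟨⟨b1, b2⟩, b3, b4⟩ := Lset_cell f g s p' (hfs _ h0.1) (hgs _ h0.2) hp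
      have e1 := cell_unique f m hf2 _ _ p'.1 h0.1 (hptm w').1 b1 b2 a1.le a2
      have e2 := cell_unique g m hg2 _ _ p'.2 h0.2 (hptm w').2 b3 b4 a3.le a4
      rw [← e1] at a1
      rw [← e2] at a3
      rcases hp with ⟨h1, _, _⟩ | ⟨h1, _, _⟩ <;> omega
  · intro w w' hww
    rw [Set.disjoint_left]
    intro v hvA hvB
    simp only [hQ, Set.mem_iUnion] at hvB hvA
    obtain ⟨p, ⟨s, hs, hp⟩, hvp⟩ := hvA
    obtain ⟨p', ⟨s', hs', hp'⟩, hvp'⟩ := hvB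
    have := hψd _ _ v hvp hvp'
    subst this
    have h0 := hm w s hs
    have h0' := hm w' s' hs'
    obtain ⟨⟨b1, b2⟩, b3, b4⟩ := Lset_cell f g s p (hfs _ h0.1) (hgs _ h0.2) hp
    obtain ⟨⟨c1, c2⟩, c3, c4⟩ := Lset_cell f g s' p (hfs _ h0'.1) (hgs _ h0'.2) hp'
    have e1 := cell_unique f m hf2 _ _ p.1 h0.1 h0'.1 b1 b2 c1 c2
    have e2 := cell_unique g m hg2 _ _ p.2 h0.2 h0'.2 b3 b4 c3 c4
    have : s = s' := Prod.ext e1 e2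
    subst this
    exact Set.disjoint_left.1 (hφd hww) hs hs'
  · intro w w' hww
    obtain ⟨s, hs, s', hs', h⟩ := hφe hww
    obtain ⟨p, hp, p', hp', h⟩ := Lset_edge f g m hf2 hg2 s s' (hm w s hs) (hm w' s' hs') h
    have hpQ : p ∈ Q w := Set.mem_biUnion hs hp
    have hpQ' : p' ∈ Q w' := Set.mem_biUnion hs' hp'
    obtain ⟨a, ha, b, hb, hab⟩ := hψe p p' (hQk w p hpQ).1 (hQk w p hpQ).2 (hQk w' p' hpQ').1
      (hQk w' p' hpQ').2 h
    exact ⟨a, Set.mem_biUnion hpQ ha, b, Set.mem_biUnion hpQ' hb, hab⟩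
  · intro w
    have h1 := hf4 _ (hXm w) (hptm w).1
    have h2 := hg4 _ (hYm w) (hptm w).2
    have hpD : (f (pt w).1 + 1, (P w).2) ∈ D w := by
      refine ⟨?_, ?_, h2.1, h2.2⟩ <;> dsimp only <;> omega
    have hpQ : (f (pt w).1, (P w).2) ∈ Q w :=
      Set.mem_biUnion (hpt w) (Or.inl ⟨rfl, h2.1.le, h2.2⟩)
    obtain ⟨a, ha, b, hb, hab⟩ := hψe _ _ (hDk w _ hpD).1 (hDk w _ hpD).2 (hQk w _ hpQ).1
      (hQk w _ hpQ).2 (Or.inr ⟨rfl, Or.inr rfl⟩)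
    exact ⟨a, Or.inr (Set.mem_iUnion.2 ⟨w, Set.mem_biUnion hpD ha⟩), b,
      Set.mem_biUnion hpQ hb, hab⟩

/-! ### Drawing a two-page arc system in the grid -/

/-- Distance of natural numbers. -/
def dd (a b : ℕ) : ℕ := (a - b) + (b - a)

/-- Two disjoint pairs do not cross. -/
def NCr (a b c d : ℕ) : Prop :=
  ¬ (a < c ∧ c < b ∧ b < d) ∧ ¬ (a < d ∧ d < b ∧ b < c) ∧
  ¬ (b < c ∧ c < a ∧ a < d) ∧ ¬ (b < d ∧ d < a ∧ a < c) ∧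
  ¬ (c < a ∧ a < d ∧ d < b) ∧ ¬ (c < b ∧ b < d ∧ d < a) ∧
  ¬ (d < a ∧ a < c ∧ c < b) ∧ ¬ (d < b ∧ b < c ∧ c < a)

lemma ncr_core (a b c d D q p : ℕ) (hab : a < b) (hcd : c < d) (hac : a ≠ c) (had : a ≠ d)
    (hbc : b ≠ c) (hbd : b ≠ d) (n1 : ¬ (a < c ∧ c < b ∧ b < d)) (n2 : ¬ (c < a ∧ a < d ∧ d < b))
    (hD : D = b - a) (h1 : (q = D ∧ a ≤ p ∧ p ≤ b))
    (h2 : ((p = c ∨ p = d) ∧ q ≤ d - c) ∨ (q = d - c ∧ c ≤ p ∧ p ≤ d)) : False := by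
  subst hD
  rcases h2 with ⟨h2 | h2, h3⟩ | h2 <;> omega

lemma ncr_both (a b c d q p : ℕ) (hab : a < b) (hcd : c < d) (hac : a ≠ c) (had : a ≠ d)
    (hbc : b ≠ c) (hbd : b ≠ d) (n1 : ¬ (a < c ∧ c < b ∧ b < d)) (n2 : ¬ (c < a ∧ a < d ∧ d < b))
    (h1 : ((p = a ∨ p = b) ∧ q ≤ b - a) ∨ (q = b - a ∧ a ≤ p ∧ p ≤ b))
    (h2 : ((p = c ∨ p = d) ∧ q ≤ d - c) ∨ (q = d - c ∧ c ≤ p ∧ p ≤ d)) : False := by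
  rcases h1 with h1 | h1
  · rcases h2 with h2 | h2
    · omega
    · exact ncr_core c d a b _ q p hcd hab hac.symm hbc.symm had.symm hbd.symm n2 n1 rfl h2
        (Or.inl h1)
  · exact ncr_core a b c d _ q p hab hcd hac had hbc hbd n1 n2 rfl h1 h2

lemma ncr_all (a b c d q p : ℕ) (h : NCr a b c d) (hab : a ≠ b) (hac : a ≠ c) (had : a ≠ d)
    (hbc : b ≠ c) (hbd : b ≠ d) (hcd : c ≠ d)
    (h1 : (p = a ∧ q ≤ dd a b) ∨ (q = dd a b ∧ min a b ≤ p ∧ p ≤ max a b))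
    (h2 : (p = c ∧ q ≤ dd c d) ∨ (q = dd c d ∧ min c d ≤ p ∧ p ≤ max c d)) : False := by
  unfold NCr at h
  obtain ⟨n1, n2, n3, n4, n5, n6, n7, n8⟩ := h
  unfold dd at h1 h2
  have r1 : ∀ a b : ℕ, a < b →
      ((p = a ∧ q ≤ a - b + (b - a)) ∨ (q = a - b + (b - a) ∧ min a b ≤ p ∧ p ≤ max a b)) →
      ((p = a ∨ p = b) ∧ q ≤ b - a) ∨ (q = b - a ∧ a ≤ p ∧ p ≤ b) := by
    intro a b hab h
    omega
  have r2 : ∀ a b : ℕ, b < a →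
      ((p = a ∧ q ≤ a - b + (b - a)) ∨ (q = a - b + (b - a) ∧ min a b ≤ p ∧ p ≤ max a b)) →
      ((p = b ∨ p = a) ∧ q ≤ a - b) ∨ (q = a - b ∧ b ≤ p ∧ p ≤ a) := by
    intro a b hab h
    omega
  rcases lt_or_gt_of_ne hab with e | e <;> rcases lt_or_gt_of_ne hcd with e' | e'
  · exact ncr_both a b c d q p e e' hac had hbc hbd n1 n5 (r1 _ _ e h1) (r1 _ _ e' h2)
  · exact ncr_both a b d c q p e e' had hac hbd hbc n2 n7 (r1 _ _ e h1) (r2 _ _ e' h2)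
  · exact ncr_both b a c d q p e e' hbc hbd hac had n3 n6 (r2 _ _ e h1) (r1 _ _ e' h2)
  · exact ncr_both b a d c q p e e' hbd hbc had hac n4 n8 (r2 _ _ e h1) (r2 _ _ e' h2)

/-- The part of the drawing belonging to one flag. -/
def Zset {F : Type*} (s0 s2 : F → F) (pos : F → ℕ) (N : ℕ) (x : F) : Set (ℕ × ℕ) :=
  {p | (p.1 = pos x ∧ N ≤ p.2 + dd (pos x) (pos (s2 x)) ∧ p.2 < N + dd (pos x) (pos (s0 x))) ∨
    (p.2 + dd (pos x) (pos (s2 x)) = N ∧ min (pos x) (pos (s2 x)) ≤ p.1 ∧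
      p.1 ≤ max (pos x) (pos (s2 x))) ∨
    (pos x < pos (s0 x) ∧ p.2 = N + dd (pos x) (pos (s0 x)) ∧ pos x ≤ p.1 ∧ p.1 ≤ pos (s0 x))}

theorem draw {W' F : Type*} [Fintype W'] (H' : SimpleGraph W') (s0 s1 s2 : F → F)
    (pos : F → ℕ) (N : ℕ) (hinj : Function.Injective pos) (hN : ∀ x, pos x < N)
    (h0 : ∀ x, s0 (s0 x) = x) (h2 : ∀ x, s2 (s2 x) = x) (f0 : ∀ x, s0 x ≠ x) (f2 : ∀ x, s2 x ≠ x)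
    (h1 : ∀ x, pos (s1 x) = pos x + 1 ∨ pos (s1 x) + 1 = pos x)
    (nc0 : ∀ x u, ¬ (pos x < pos u ∧ pos u < pos (s0 x) ∧ pos (s0 x) < pos (s0 u)))
    (nc2 : ∀ x u, ¬ (pos x < pos u ∧ pos u < pos (s2 x) ∧ pos (s2 x) < pos (s2 u)))
    (lab : F → W') (l1 : ∀ x, lab (s1 x) = lab x) (l2 : ∀ x, lab (s2 x) = lab x)
    (hconn : ∀ x y, lab x = lab y → Relation.ReflTransGen (fun a b => b = s1 a ∨ b = s2 a) x y)
    (hedge : ∀ v w, H'.Adj v w → ∃ x, lab x = v ∧ lab (s0 x) = w) :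
    ∃ φ : W' → Set (ℕ × ℕ), IsMinorModel NG H' φ ∧
      ∀ w, ∀ p ∈ φ w, p.1 < 2 * N + 1 + Fintype.card W' ∧ p.2 < 2 * N + 1 + Fintype.card W' := by
  classical
  have d0 : ∀ x, 1 ≤ dd (pos x) (pos (s0 x)) ∧ dd (pos x) (pos (s0 x)) < N := by
    intro x
    have a1 := hN x
    have a2 := hN (s0 x)
    have : pos (s0 x) ≠ pos x := fun h => f0 x (hinj h)
    unfold dd; omega
  have d2 : ∀ x, 1 ≤ dd (pos x) (pos (s2 x)) ∧ dd (pos x) (pos (s2 x)) < N := by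
    intro x
    have a1 := hN x
    have a2 := hN (s2 x)
    have : pos (s2 x) ≠ pos x := fun h => f2 x (hinj h)
    unfold dd; omega
  have NC : ∀ s : F → F, (∀ x, s (s x) = x) →
      (∀ x u, ¬ (pos x < pos u ∧ pos u < pos (s x) ∧ pos (s x) < pos (s u))) →
      ∀ x y, NCr (pos x) (pos (s x)) (pos y) (pos (s y)) := by
    intro s hs hnc x y
    have e1 := hnc x y
    have e2 := hnc x (s y)
    have e3 := hnc (s x) y
    have e4 := hnc (s x) (s y)
    have e5 := hnc y x
    have e6 := hnc y (s x)
    have e7 := hnc (s y) x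
    have e8 := hnc (s y) (s x)
    simp only [hs] at *
    exact ⟨e1, e2, e3, e4, e5, e6, e7, e8⟩
  set Z := Zset s0 s2 pos N with hZ
  have hbase : ∀ x, (pos x, N) ∈ Z x := by
    intro x
    have := d0 x
    exact Or.inl ⟨rfl, by dsimp only; omega, by dsimp only; omega⟩
  have hZb : ∀ x, ∀ p ∈ Z x, p.1 < N ∧ p.2 < 2 * N := by
    intro x p hp
    have a1 := hN x
    have a2 := hN (s0 x)
    have a3 := hN (s2 x)
    have := d0 x
    have := d2 x
    rcases hp with hp | hp | hp <;> omega
  have hZc : ∀ x, ∀ p ∈ Z x, Lk NG (Z x) (pos x, N) p := by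
    rintro x ⟨p, q⟩ hp
    have b0 := d0 x
    have b2 := d2 x
    have hcol : ∀ r, N ≤ r + dd (pos x) (pos (s2 x)) → r < N + dd (pos x) (pos (s0 x)) →
        Lk NG (Z x) (pos x, N) (pos x, r) := by
      intro r hr1 hr2
      rcases le_total N r with h | h
      · exact seg_snd _ _ _ _ h fun t _ _ => Or.inl ⟨rfl, by dsimp only; omega, by dsimp only; omega⟩
      · exact (seg_snd _ _ _ _ h fun t _ _ =>
          Or.inl ⟨rfl, by dsimp only; omega, by dsimp only; omega⟩).symm'
    rcases hp with ⟨e1, e2, e3⟩ | ⟨e1, e2, e3⟩ | ⟨e0, e1, e2, e3⟩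
    · dsimp only at e1 e2 e3
      subst e1
      exact hcol q e2 e3
    · dsimp only at e1 e2 e3
      refine (hcol q (by omega) (by omega)).trans' ?_
      rcases le_total (pos x) p with h | h
      · exact seg_fst _ _ _ _ h fun t _ _ =>
          Or.inr (Or.inl ⟨e1, by dsimp only; omega, by dsimp only; omega⟩)
      · exact (seg_fst _ _ _ _ h fun t _ _ =>
          Or.inr (Or.inl ⟨e1, by dsimp only; omega, by dsimp only; omega⟩)).symm'
    · dsimp only at e1 e2 e3
      subst e1
      have m1 : (pos x, N + dd (pos x) (pos (s0 x)) - 1) ∈ Z x :=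
        Or.inl ⟨rfl, by dsimp only; omega, by dsimp only; omega⟩
      have m2 : (pos x, N + dd (pos x) (pos (s0 x))) ∈ Z x :=
        Or.inr (Or.inr ⟨e0, rfl, le_rfl, e0.le⟩)
      refine (hcol (N + dd (pos x) (pos (s0 x)) - 1) (by omega) (by omega)).trans' ?_
      have hadj : NG.Adj (pos x, N + dd (pos x) (pos (s0 x)) - 1)
          (pos x, N + dd (pos x) (pos (s0 x))) := Or.inl ⟨rfl, Or.inl (by dsimp only; omega)⟩
      refine (Lk.single' hadj m1 m2).trans' ?_
      · exact seg_fst _ _ _ _ e2 fun t _ _ =>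
          Or.inr (Or.inr ⟨e0, rfl, by dsimp only; omega, by dsimp only; omega⟩)
  have hZd : ∀ x y p, lab x ≠ lab y → p ∈ Z x → p ∉ Z y := by
    intro x y p hxy hpx hpy
    have hne : ∀ a b : F, a ≠ b → pos a ≠ pos b := fun a b h h' => h (hinj h')
    have n1 : x ≠ y := fun h => hxy (by rw [h])
    have n2 : x ≠ s2 y := fun h => hxy (by rw [h, l2])
    have n3 : s2 x ≠ y := fun h => hxy (by rw [← h, l2])
    have n4 : s2 x ≠ s2 y := fun h => hxy (by rw [← l2 x, h, l2])
    have b0 := d0 x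
    have b2 := d2 x
    have c0 := d0 y
    have c2 := d2 y
    rcases Nat.lt_or_ge p.2 N with hq | hq
    · refine ncr_all (pos x) (pos (s2 x)) (pos y) (pos (s2 y)) (N - p.2) p.1 (NC s2 h2 nc2 x y)
        (hne _ _ (f2 x).symm) (hne _ _ n1) (hne _ _ n2) (hne _ _ n3) (hne _ _ n4)
        (hne _ _ (f2 y).symm) ?_ ?_
      · rcases hpx with h | h | h
        · exact Or.inl ⟨h.1, by omega⟩
        · exact Or.inr ⟨by omega, h.2⟩
        · omega
      · rcases hpy with h | h | h
        · exact Or.inl ⟨h.1, by omega⟩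
        · exact Or.inr ⟨by omega, h.2⟩
        · omega
    · have t1 : (p.1 = pos x ∧ p.2 < N + dd (pos x) (pos (s0 x))) ∨ (pos x < pos (s0 x) ∧
          p.2 = N + dd (pos x) (pos (s0 x)) ∧ pos x ≤ p.1 ∧ p.1 ≤ pos (s0 x)) := by
        rcases hpx with h | h | h
        · exact Or.inl ⟨h.1, h.2.2⟩
        · omega
        · exact Or.inr h
      have t2 : (p.1 = pos y ∧ p.2 < N + dd (pos y) (pos (s0 y))) ∨ (pos y < pos (s0 y) ∧
          p.2 = N + dd (pos y) (pos (s0 y)) ∧ pos y ≤ p.1 ∧ p.1 ≤ pos (s0 y)) := by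
        rcases hpy with h | h | h
        · exact Or.inl ⟨h.1, h.2.2⟩
        · omega
        · exact Or.inr h
      by_cases hy : y = s0 x
      · subst hy
        rw [h0 x] at t2
        have := hne _ _ n1
        unfold dd at *
        omega
      · have hy' : x ≠ s0 y := fun h => hy (by rw [h, h0])
        have hy'' : s0 x ≠ s0 y := fun h => n1 (by rw [← h0 x, h, h0])
        refine ncr_all (pos x) (pos (s0 x)) (pos y) (pos (s0 y)) (p.2 - N) p.1 (NC s0 h0 nc0 x y)
          (hne _ _ (f0 x).symm) (hne _ _ n1) (hne _ _ hy') (hne _ _ (Ne.symm hy)) (hne _ _ hy'')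
          (hne _ _ (f0 y).symm) ?_ ?_
        · rcases t1 with h | h
          · exact Or.inl ⟨h.1, by omega⟩
          · exact Or.inr (by omega)
        · rcases t2 with h | h
          · exact Or.inl ⟨h.1, by omega⟩
          · exact Or.inr (by omega)
  set idx := Fintype.equivFin W' with hidx
  set φ : W' → Set (ℕ × ℕ) := fun w =>
    {p | (∃ x, lab x = w ∧ p ∈ Z x) ∨ ((∀ x, lab x ≠ w) ∧ p = (N + idx w, 0))} with hφ
  have hsub : ∀ x, Z x ⊆ φ (lab x) := fun x p hp => Or.inl ⟨x, rfl, hp⟩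
  refine ⟨φ, ⟨?_, ?_, ?_⟩, ?_⟩
  · intro w
    by_cases hw : ∃ x, lab x = w
    · obtain ⟨x, rfl⟩ := hw
      refine conn_of_root _ _ (pos x, N) (hsub x (hbase x)) ?_
      rintro p (⟨y, hy, hp⟩ | ⟨hn, _⟩)
      · have hl : ∀ z, Relation.ReflTransGen (fun a b => b = s1 a ∨ b = s2 a) x z →
            lab z = lab x ∧ Lk NG (φ (lab x)) (pos x, N) (pos z, N) := by
          intro z hz
          induction hz with
          | refl => exact ⟨rfl, Relation.ReflTransGen.refl⟩
          | @tail b c _ hbc ih =>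
            obtain ⟨ih1, ih2⟩ := ih
            rcases hbc with rfl | rfl
            · refine ⟨(l1 b).trans ih1, ih2.trans' (Lk.single' ?_ ?_ ?_)⟩
              · right
                refine ⟨rfl, ?_⟩
                have := h1 b
                dsimp only; omega
              · exact ih1 ▸ hsub b (hbase b)
              · exact ((l1 b).trans ih1) ▸ hsub (s1 b) (hbase (s1 b))
            · refine ⟨(l2 b).trans ih1, ih2.trans' ?_⟩
              have hd : dd (pos (s2 b)) (pos b) = dd (pos b) (pos (s2 b)) := by
                unfold dd; omega
              have hb2 := d2 b
              have m1 : (pos b, N - dd (pos b) (pos (s2 b))) ∈ Z b :=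
                Or.inr (Or.inl ⟨by dsimp only; omega, by dsimp only; omega, by dsimp only; omega⟩)
              have m2 : (pos b, N - dd (pos b) (pos (s2 b))) ∈ Z (s2 b) := by
                refine Or.inr (Or.inl ⟨?_, ?_, ?_⟩)
                · rw [h2, hd]; dsimp only; omega
                · rw [h2]; dsimp only; omega
                · rw [h2]; dsimp only; omega
              refine ((hZc b _ m1).mono' ?_).trans' ((hZc (s2 b) _ m2).mono' ?_).symm'
              · exact ih1 ▸ hsub b
              · exact ((l2 b).trans ih1) ▸ hsub (s2 b)
        refine (hl y (hconn x y hy.symm)).2.trans' ((hZc y p hp).mono' ?_)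
        exact hy ▸ hsub y
      · exact absurd rfl (hn x)
    · refine conn_of_root _ _ (N + idx w, 0) (Or.inr ⟨fun x hx => hw ⟨x, hx⟩, rfl⟩) ?_
      rintro p (⟨y, hy, hp⟩ | ⟨hn, rfl⟩)
      · exact absurd ⟨y, hy⟩ hw
      · exact Relation.ReflTransGen.refl
  · intro v w hvw
    rw [Set.disjoint_left]
    rintro p (⟨x, hx, hp⟩ | ⟨_, rfl⟩) (⟨y, hy, hp'⟩ | ⟨_, hp'⟩)
    · exact hZd x y p (by rw [hx, hy]; exact hvw) hp hp'
    · have := hZb x p hp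
      rw [hp'] at this
      dsimp only at this
      omega
    · have := hZb y _ hp'
      dsimp only at this
      omega
    · have : (idx v : ℕ) = idx w := by
        have := congrArg Prod.fst hp'
        dsimp only at this
        omega
      exact hvw (idx.injective (Fin.ext this))
  · intro v w hvw
    obtain ⟨x, hx, hx'⟩ := hedge v w hvw
    have key : ∀ x, pos x < pos (s0 x) → ∃ a ∈ φ (lab x), ∃ b ∈ φ (lab (s0 x)), NG.Adj a b := by
      intro x hlt
      have b0 := d0 x
      have hd : dd (pos (s0 x)) (pos x) = dd (pos x) (pos (s0 x)) := by
        unfold dd; omega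
      refine ⟨(pos (s0 x), N + dd (pos x) (pos (s0 x))), hsub x ?_,
        (pos (s0 x), N + dd (pos x) (pos (s0 x)) - 1), hsub (s0 x) ?_, ?_⟩
      · exact Or.inr (Or.inr ⟨hlt, rfl, hlt.le, le_rfl⟩)
      · refine Or.inl ⟨rfl, ?_, ?_⟩
        · dsimp only; omega
        · rw [h0, hd]; dsimp only; omega
      · refine Or.inl ⟨rfl, Or.inr ?_⟩
        dsimp only; omega
    have hne : pos x ≠ pos (s0 x) := fun h => f0 x (hinj h).symm
    rcases lt_or_gt_of_ne hne with h | h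
    · obtain ⟨a, ha, b, hb, hab⟩ := key x h
      exact ⟨a, hx ▸ ha, b, hx' ▸ hb, hab⟩
    · obtain ⟨a, ha, b, hb, hab⟩ := key (s0 x) (by rw [h0]; exact h)
      rw [h0] at hb
      exact ⟨b, hx ▸ hb, a, hx' ▸ ha, hab.symm⟩
  · rintro w p (⟨x, hx, hp⟩ | ⟨_, rfl⟩)
    · have := hZb x p hp
      omega
    · have := (idx w).isLt
      dsimp only
      omega
/-! ### Cyclic order of the orbits of two fixed-point-free involutions -/

/-- One-step relation of two maps. -/
def Two {F : Type*} (α β : F → F) (x y : F) : Prop := y = α x ∨ y = β x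

theorem quot_inv {F : Type*} {r : F → F → Prop} (D : F → Prop)
    (h : ∀ x y, r x y → (D x ↔ D y)) {x y : F} (hxy : Quot.mk r x = Quot.mk r y) :
    D x ↔ D y := by
  have : Quot.lift D (fun a b hab => propext (h a b hab)) (Quot.mk r x)
      = Quot.lift D (fun a b hab => propext (h a b hab)) (Quot.mk r y) := by rw [hxy]
  exact Iff.of_eq this

theorem two_l {F : Type*} (α β : F → F) (x : F) :
    Quot.mk (Two α β) (α x) = Quot.mk (Two α β) x := (Quot.sound (show Two α β x (α x) from Or.inl rfl)).symm

theorem two_r {F : Type*} (α β : F → F) (x : F) :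
    Quot.mk (Two α β) (β x) = Quot.mk (Two α β) x := (Quot.sound (show Two α β x (β x) from Or.inr rfl)).symm

/-- The alternating walk. -/
def yy {F : Type*} (α β : F → F) (u : F) : ℕ → F
  | 0 => u
  | k + 1 => if k % 2 = 0 then α (yy α β u k) else β (yy α β u k)

section cyc
set_option linter.unusedSectionVars false
variable {F : Type*} [Fintype F] {α β : F → F}

theorem yy_even (α β : F → F) (u : F) (i : ℕ) : yy α β u (2 * i) = (β ∘ α)^[i] u := by
  induction i with
  | zero => rfl
  | succ i ih =>
    rw [Function.iterate_succ_apply', ← ih]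
    have h1 : yy α β u (2 * (i + 1)) = β (yy α β u (2 * i + 1)) := by
      show yy α β u ((2 * i + 1) + 1) = _
      rw [yy, if_neg (by omega)]
    rw [h1, yy, if_pos (by omega)]; rfl

theorem yy_odd (α β : F → F) (u : F) (i : ℕ) :
    yy α β u (2 * i + 1) = α ((β ∘ α)^[i] u) := by
  rw [yy, if_pos (by omega), yy_even]

theorem no_flip (ha : ∀ x, α (α x) = x) (hb : ∀ x, β (β x) = x) (fa : ∀ x, α x ≠ x) (fb : ∀ x, β x ≠ x)
    (m : ℕ) : ∀ u, (β ∘ α)^[m] u ≠ α u := by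
  induction m using Nat.strong_induction_on with
  | _ m ih =>
    intro u h
    match m, ih, h with
    | 0, _, h => exact fa u h.symm
    | 1, _, h => exact fb (α u) h
    | m + 2, ih, h =>
      refine ih m (by omega) ((β ∘ α) u) ?_
      have h2 : (β ∘ α)^[m+2] u = (β ∘ α) ((β ∘ α)^[m] ((β ∘ α) u)) := by
        rw [Function.iterate_succ_apply', Function.iterate_succ_apply]
      rw [h2] at h
      have h3 := congrArg β h
      simp only [Function.comp, hb] at h3
      have h4 := congrArg α h3
      simp only [ha] at h4
      exact h4

theorem no_flip2 (ha : ∀ x, α (α x) = x) (hb : ∀ x, β (β x) = x) (fa : ∀ x, α x ≠ x) (fb : ∀ x, β x ≠ x)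
    (j : ℕ) : ∀ i u, (β ∘ α)^[i] u ≠ α ((β ∘ α)^[j] u) := by
  induction j with
  | zero => intro i u; exact no_flip ha hb fa fb i u
  | succ j ih =>
    intro i u h
    refine ih (i+1) u ?_
    rw [Function.iterate_succ_apply', h, Function.iterate_succ_apply']
    simp [Function.comp, ha, hb]

theorem g_inj (ha : ∀ x, α (α x) = x) (hb : ∀ x, β (β x) = x)
    : Function.Injective (β ∘ α) := by
  intro x y h
  have := congrArg β h
  simp only [Function.comp, hb] at this
  have := congrArg α this
  simpa only [ha] using this

theorem per_pos (ha : ∀ x, α (α x) = x) (hb : ∀ x, β (β x) = x)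
    (u : F) : 0 < Function.minimalPeriod (β ∘ α) u := by
  apply Function.minimalPeriod_pos_of_mem_periodicPts
  exact (g_inj ha hb).mem_periodicPts u

theorem yy_inj (ha : ∀ x, α (α x) = x) (hb : ∀ x, β (β x) = x) (fa : ∀ x, α x ≠ x) (fb : ∀ x, β x ≠ x)
    (u : F) (i j : ℕ) (hi : i < 2 * Function.minimalPeriod (β ∘ α) u)
    (hj : j < 2 * Function.minimalPeriod (β ∘ α) u) (h : yy α β u i = yy α β u j) : i = j := by
  have key : ∀ i j, i < Function.minimalPeriod (β ∘ α) u → j < Function.minimalPeriod (β ∘ α) u →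
      (β ∘ α)^[i] u = (β ∘ α)^[j] u → i = j := by
    intro i j hi hj h
    exact Function.iterate_injOn_Iio_minimalPeriod hi hj h
  obtain ⟨i', hi' | hi'⟩ := Nat.even_or_odd' i <;> obtain ⟨j', hj' | hj'⟩ := Nat.even_or_odd' j <;>
    subst hi' <;> subst hj' <;> simp only [yy_even, yy_odd] at h
  · rw [key i' j' (by omega) (by omega) h]
  · exact absurd h (no_flip2 ha hb fa fb _ _ _)
  · exact absurd h.symm (no_flip2 ha hb fa fb _ _ _)
  · have := congrArg α h
    rw [ha, ha] at this
    rw [key i' j' (by omega) (by omega) this]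

theorem yy_last (u : F) : yy α β u (2 * Function.minimalPeriod (β ∘ α) u) = u := by
  rw [yy_even]; exact Function.iterate_minimalPeriod

theorem yy_rel (u : F) (i : ℕ) :
    Quot.mk (Two α β) (yy α β u i) = Quot.mk (Two α β) u := by
  induction i with
  | zero => rfl
  | succ i ih =>
    rw [yy]
    split_ifs
    · rw [two_l, ih]
    · rw [two_r, ih]

theorem yy_a (ha : ∀ x, α (α x) = x) (hb : ∀ x, β (β x) = x)
    (u : F) (k : ℕ) (hk : k < 2 * Function.minimalPeriod (β ∘ α) u) :
    (k % 2 = 0 ∧ k + 1 < 2 * Function.minimalPeriod (β ∘ α) u ∧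
      α (yy α β u k) = yy α β u (k+1)) ∨
    (∃ l, k = l + 1 ∧ k % 2 = 1 ∧ α (yy α β u k) = yy α β u l) := by
  rcases Nat.mod_two_eq_zero_or_one k with h | h
  · left; refine ⟨h, by omega, ?_⟩; rw [yy, if_pos h]
  · right; obtain ⟨l, rfl⟩ : ∃ l, k = l + 1 := ⟨k - 1, by omega⟩
    refine ⟨l, rfl, h, ?_⟩
    rw [yy, if_pos (by omega), ha]

theorem yy_b (ha : ∀ x, α (α x) = x) (hb : ∀ x, β (β x) = x)
    (u : F) (k : ℕ) (hk : k < 2 * Function.minimalPeriod (β ∘ α) u) :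
    (k % 2 = 1 ∧ k + 1 < 2 * Function.minimalPeriod (β ∘ α) u ∧
      β (yy α β u k) = yy α β u (k+1)) ∨
    (∃ l, k = l + 1 ∧ k % 2 = 0 ∧ β (yy α β u k) = yy α β u l) ∨
    (k + 1 = 2 * Function.minimalPeriod (β ∘ α) u ∧ β (yy α β u k) = yy α β u 0) ∨
    (k = 0 ∧ β (yy α β u k) = yy α β u (2 * Function.minimalPeriod (β ∘ α) u - 1)) := by
  have hn := per_pos ha hb u
  have e : β (yy α β u (2 * Function.minimalPeriod (β ∘ α) u - 1)) = u := by
    have := yy_last (α := α) (β := β) u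
    obtain ⟨l, hl⟩ : ∃ l, 2 * Function.minimalPeriod (β ∘ α) u = l + 1 :=
      ⟨2 * Function.minimalPeriod (β ∘ α) u - 1, by omega⟩
    rw [hl] at this ⊢
    rw [yy, if_neg (by omega)] at this
    simpa using this
  rcases Nat.mod_two_eq_zero_or_one k with h | h
  · rcases Nat.eq_zero_or_pos k with h0 | h0
    · subst h0
      refine Or.inr (Or.inr (Or.inr ⟨rfl, ?_⟩))
      have := congrArg β e
      rw [hb] at this; rw [this]; rfl
    · right; left
      obtain ⟨l, rfl⟩ : ∃ l, k = l + 1 := ⟨k - 1, by omega⟩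
      refine ⟨l, rfl, h, ?_⟩
      rw [yy, if_neg (by omega), hb]
  · by_cases h1 : k + 1 < 2 * Function.minimalPeriod (β ∘ α) u
    · left; refine ⟨h, h1, ?_⟩; rw [yy, if_neg (by omega)]
    · refine Or.inr (Or.inr (Or.inl ⟨by omega, ?_⟩))
      have : k = 2 * Function.minimalPeriod (β ∘ α) u - 1 := by omega
      rw [this, e]; rfl

theorem yy_surj (ha : ∀ x, α (α x) = x) (hb : ∀ x, β (β x) = x)
    (u x : F) (h : Quot.mk (Two α β) x = Quot.mk (Two α β) u) :
    ∃ k < 2 * Function.minimalPeriod (β ∘ α) u, x = yy α β u k := by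
  have hn := per_pos ha hb u
  have cl : ∀ x y, Two α β x y → (∃ k < 2 * Function.minimalPeriod (β ∘ α) u, x = yy α β u k) →
      (∃ k < 2 * Function.minimalPeriod (β ∘ α) u, y = yy α β u k) := by
    rintro x y hxy ⟨k, hk, rfl⟩
    rcases hxy with rfl | rfl
    · rcases yy_a ha hb u k hk with ⟨_, h1, h2⟩ | ⟨l, h1, _, h2⟩
      · exact ⟨_, h1, h2⟩
      · exact ⟨l, by omega, h2⟩
    · rcases yy_b ha hb u k hk with ⟨_, h1, h2⟩ | ⟨l, h1, _, h2⟩ | ⟨h1, h2⟩ | ⟨h1, h2⟩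
      · exact ⟨_, h1, h2⟩
      · exact ⟨l, by omega, h2⟩
      · exact ⟨0, by omega, h2⟩
      · exact ⟨_, by omega, h2⟩
  refine (quot_inv (fun x => ∃ k < 2 * Function.minimalPeriod (β ∘ α) u, x = yy α β u k)
    (fun x y hxy => ⟨cl x y hxy, cl y x ?_⟩) h).2 ⟨0, by omega, rfl⟩
  rcases hxy with rfl | rfl
  · left; rw [ha]
  · right; rw [hb]

theorem cycle_order (ha : ∀ x, α (α x) = x) (hb : ∀ x, β (β x) = x) (fa : ∀ x, α x ≠ x) (fb : ∀ x, β x ≠ x)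
    : ∃ pos : F → ℕ, Function.Injective pos ∧
    (∀ x, pos x < 2 * Fintype.card F * Fintype.card F) ∧
    (∀ x, (pos x % 2 = 0 ∧ pos (α x) = pos x + 1) ∨ (pos x % 2 = 1 ∧ pos (α x) + 1 = pos x)) ∧
    (∀ x, (pos x % 2 = 0 ∧ pos (β x) + 1 = pos x) ∨ (pos x % 2 = 1 ∧ pos (β x) = pos x + 1) ∨
      (pos x % 2 = 0 ∧ pos (β x) % 2 = 1 ∧
        ∀ z, Quot.mk (Two α β) z = Quot.mk (Two α β) x → pos x ≤ pos z ∧ pos z ≤ pos (β x)) ∨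
      (pos x % 2 = 1 ∧ pos (β x) % 2 = 0 ∧
        ∀ z, Quot.mk (Two α β) z = Quot.mk (Two α β) x → pos (β x) ≤ pos z ∧ pos z ≤ pos x)) ∧
    (∀ x z z', Quot.mk (Two α β) z' = Quot.mk (Two α β) x → pos x ≤ pos z → pos z ≤ pos z' →
      Quot.mk (Two α β) z = Quot.mk (Two α β) x) := by
  classical
  let rep : F → F := fun x => (Quot.mk (Two α β) x).out
  have hrep : ∀ x, Quot.mk (Two α β) (rep x) = Quot.mk (Two α β) x := fun x => Quot.out_eq _
  have hrep2 : ∀ x y, Quot.mk (Two α β) x = Quot.mk (Two α β) y → rep x = rep y := by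
    intro x y h; show (Quot.mk (Two α β) x).out = (Quot.mk (Two α β) y).out; rw [h]
  have hs : ∀ x, ∃ k < 2 * Function.minimalPeriod (β ∘ α) (rep x), x = yy α β (rep x) k :=
    fun x => yy_surj ha hb _ _ (hrep x).symm
  choose loc hloc1 hloc2 using hs
  let P := 2 * Fintype.card F
  let id' : F → ℕ := fun x => (Fintype.equivFin F x : ℕ)
  have hid : ∀ x, id' x < Fintype.card F := fun x => (Fintype.equivFin F x).2
  let pos : F → ℕ := fun x => P * id' (rep x) + loc x
  have hper : ∀ u, Function.minimalPeriod (β ∘ α) u ≤ Fintype.card F := fun u =>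
    Function.minimalPeriod_le_card
  have hlocP : ∀ x, loc x < P := fun x => by
    have := hloc1 x; have := hper (rep x); show _ < 2 * _; omega
  -- position of walk elements
  have hpos : ∀ x k, k < 2 * Function.minimalPeriod (β ∘ α) (rep x) →
      pos (yy α β (rep x) k) = P * id' (rep x) + k := by
    intro x k hk
    have h1 : rep (yy α β (rep x) k) = rep x :=
      hrep2 _ _ ((yy_rel _ _).trans (hrep x))
    show P * id' (rep _) + loc _ = _
    have h2 := hloc1 (yy α β (rep x) k)
    have h3 := hloc2 (yy α β (rep x) k)
    rw [h1] at h2 h3 ⊢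
    exact congrArg _ (yy_inj ha hb fa fb _ _ _ hk h2 h3).symm
  have hidx : ∀ x y, pos x = pos y → rep x = rep y ∧ loc x = loc y := by
    intro x y h
    have h1 : pos x / P = id' (rep x) := by
      show (P * id' (rep x) + loc x) / P = _
      rw [Nat.mul_add_div (by have := hlocP x; omega), Nat.div_eq_of_lt (hlocP x)]; rfl
    have h2 : pos y / P = id' (rep y) := by
      show (P * id' (rep y) + loc y) / P = _
      rw [Nat.mul_add_div (by have := hlocP x; omega), Nat.div_eq_of_lt (hlocP y)]; rfl
    have h3 : id' (rep x) = id' (rep y) := by rw [← h1, ← h2, h]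
    refine ⟨(Fintype.equivFin F).injective (Fin.ext h3), ?_⟩
    change P * id' (rep x) + loc x = P * id' (rep y) + loc y at h
    rw [h3] at h; omega
  have par : ∀ x, pos x % 2 = loc x % 2 := by
    intro x; show (2 * Fintype.card F * id' (rep x) + loc x) % 2 = _
    rw [mul_assoc]; omega
  refine ⟨pos, ?_, ?_, ?_, ?_, ?_⟩
  · intro x y h
    obtain ⟨h1, h2⟩ := hidx x y h
    rw [hloc2 x, hloc2 y, h1, h2]
  · intro x
    have h1 := hid (rep x)
    have h2 := hlocP x
    calc pos x = P * id' (rep x) + loc x := rfl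
      _ < P * (id' (rep x) + 1) := by rw [mul_add]; omega
      _ ≤ P * Fintype.card F := Nat.mul_le_mul_left _ h1
  · intro x
    rw [par]
    have hx : pos x = P * id' (rep x) + loc x := rfl
    rcases yy_a ha hb (rep x) (loc x) (hloc1 x) with ⟨h0, h1, h2⟩ | ⟨l, h1, h0, h2⟩
    · left; rw [← hloc2 x] at h2
      refine ⟨h0, ?_⟩; rw [h2, hpos _ _ h1, hx]; omega
    · right; rw [← hloc2 x] at h2
      refine ⟨h0, ?_⟩
      rw [h2, hpos _ _ (by have := hloc1 x; omega), hx]; omega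
  · intro x
    have hx : pos x = P * id' (rep x) + loc x := rfl
    have hz : ∀ z, Quot.mk (Two α β) z = Quot.mk (Two α β) x →
        pos z = P * id' (rep x) + loc z ∧ loc z < 2 * Function.minimalPeriod (β ∘ α) (rep x) := by
      intro z hz
      have h := hrep2 _ _ hz
      have h1 := hloc1 z
      rw [h] at h1
      refine ⟨?_, h1⟩
      show P * id' (rep z) + loc z = _
      rw [h]
    have hn := per_pos ha hb (rep x)
    have P2 : ∀ a b, (P * a + b) % 2 = b % 2 := by
      intro a b; show (2 * _ * a + b) % 2 = _; rw [mul_assoc]; omega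
    have hpar := par x
    rcases yy_b ha hb (rep x) (loc x) (hloc1 x) with
      ⟨h0, h1, h2⟩ | ⟨l, h1, h0, h2⟩ | ⟨h1, h2⟩ | ⟨h1, h2⟩
    · rw [← hloc2 x] at h2
      right; left
      refine ⟨by omega, ?_⟩; rw [h2, hpos _ _ h1, hx]; omega
    · rw [← hloc2 x] at h2
      left
      refine ⟨by omega, ?_⟩; rw [h2, hpos _ _ (by have := hloc1 x; omega), hx]; omega
    · rw [← hloc2 x] at h2
      right; right; right
      have e := hpos x 0 (by omega)
      rw [h2, e]
      refine ⟨by omega, by rw [P2], ?_⟩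
      intro z hzz
      obtain ⟨q1, q2⟩ := hz z hzz
      rw [q1, hx]; omega
    · rw [← hloc2 x] at h2
      right; right; left
      have e := hpos x (2 * Function.minimalPeriod (β ∘ α) (rep x) - 1) (by omega)
      rw [h2, e]
      refine ⟨by omega, by rw [P2]; omega, ?_⟩
      intro z hzz
      obtain ⟨q1, q2⟩ := hz z hzz
      rw [q1, hx]; omega
  · intro x z z' h h1 h2
    have e : rep z' = rep x := hrep2 _ _ h
    have hP : 0 < P := by have := hlocP x; omega
    have d : ∀ x, pos x / P = id' (rep x) := by
      intro x
      show (P * id' (rep x) + loc x) / P = _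
      rw [Nat.mul_add_div hP, Nat.div_eq_of_lt (hlocP x)]; rfl
    have h3 := Nat.div_le_div_right (c := P) h1
    have h4 := Nat.div_le_div_right (c := P) h2
    rw [d, d] at h3 h4
    rw [e] at h4
    have h5 : id' (rep z) = id' (rep x) := le_antisymm h4 h3
    have h6 : rep z = rep x := (Fintype.equivFin F).injective (Fin.ext h5)
    rw [← hrep z, h6, hrep]
end cyc
/-! ### Counting orbits under edge toggles -/

theorem quot_card_le {F : Type*} [Finite F] {r r' : F → F → Prop}
    (h : ∀ x y, r x y → Quot.mk r' x = Quot.mk r' y) :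
    Nat.card (Quot r') ≤ Nat.card (Quot r) := by
  refine Nat.card_le_card_of_surjective (Quot.lift (Quot.mk r') h) ?_
  rintro ⟨x⟩; exact ⟨Quot.mk r x, rfl⟩

theorem quot_map {F : Type*} {r r' : F → F → Prop}
    (h : ∀ x y, r x y → Quot.mk r' x = Quot.mk r' y) {x y : F}
    (hxy : Quot.mk r x = Quot.mk r y) : Quot.mk r' x = Quot.mk r' y := by
  have : Quot.lift (Quot.mk r') h (Quot.mk r x) = Quot.lift (Quot.mk r') h (Quot.mk r y) := by
    rw [hxy]
  exact this

/-- Adding a single pair to a relation. -/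
def AddP {F : Type*} (r : F → F → Prop) (a b : F) (x y : F) : Prop := r x y ∨ (x = a ∧ y = b)

theorem addP_card_le {F : Type*} [Finite F] (r : F → F → Prop) (a b : F) :
    Nat.card (Quot r) ≤ Nat.card (Quot (AddP r a b)) + 1 := by
  classical
  rw [← Finite.card_option]
  let g : F → Quot r := fun z => if Quot.mk r z = Quot.mk r b then Quot.mk r a else Quot.mk r z
  have hg : ∀ x y, AddP r a b x y → g x = g y := by
    rintro x y (h | ⟨rfl, rfl⟩)
    · have : Quot.mk r x = Quot.mk r y := Quot.sound h
      simp only [g, this]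
    · simp [g]
  let f : Quot r → Option (Quot (AddP r a b)) := fun c =>
    if c = Quot.mk r b then none
    else some (Quot.lift (Quot.mk (AddP r a b)) (fun x y h => Quot.sound (Or.inl h)) c)
  refine Nat.card_le_card_of_injective f ?_
  rintro ⟨x⟩ ⟨y⟩ h
  simp only [f] at h
  split_ifs at h with h1 h2 h2
  · rw [h1, h2]
  · have h3 : Quot.mk (AddP r a b) x = Quot.mk (AddP r a b) y := by simpa using h
    have h4 : g x = g y := by
      have : Quot.lift g hg (Quot.mk _ x) = Quot.lift g hg (Quot.mk _ y) := by rw [h3]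
      exact this
    simp only [g] at h4
    rwa [if_neg h1, if_neg h2] at h4

theorem addP_card_lt {F : Type*} [Finite F] (r : F → F → Prop) (a b : F)
    (h : Quot.mk r a ≠ Quot.mk r b) :
    Nat.card (Quot (AddP r a b)) + 1 ≤ Nat.card (Quot r) := by
  classical
  have := Fintype.ofFinite (Quot r)
  have := Fintype.ofFinite (Quot (AddP r a b))
  rw [Nat.card_eq_fintype_card, Nat.card_eq_fintype_card]
  refine Fintype.card_lt_of_surjective_not_injective
    (Quot.lift (Quot.mk (AddP r a b)) (fun x y h => Quot.sound (Or.inl h))) ?_ ?_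
  · rintro ⟨x⟩; exact ⟨Quot.mk r x, rfl⟩
  · intro hi
    exact h (hi (Quot.sound (Or.inr ⟨rfl, rfl⟩)))

/-- Walking round a cycle avoiding one link. -/
theorem cyc_walk {F : Type*} [Fintype F] {α β : F → F} (ha : ∀ x, α (α x) = x)
    (hb : ∀ x, β (β x) = x) (fa : ∀ x, α x ≠ x) (fb : ∀ x, β x ≠ x) (r : F → F → Prop) (u : F)
    (h1 : ∀ x, Quot.mk r (α x) = Quot.mk r x)
    (h2 : ∀ x, Quot.mk (Two α β) x = Quot.mk (Two α β) u → x ≠ u → x ≠ β u →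
      Quot.mk r (β x) = Quot.mk r x) :
    Quot.mk r (β u) = Quot.mk r u := by
  have hn := per_pos ha hb u
  have e : β u = yy α β u (2 * Function.minimalPeriod (β ∘ α) u - 1) := by
    rcases yy_b ha hb u 0 (by omega) with h | ⟨l, h, _⟩ | h | h
    · omega
    · omega
    · omega
    · exact h.2
  have key : ∀ k, k < 2 * Function.minimalPeriod (β ∘ α) u →
      Quot.mk r (yy α β u k) = Quot.mk r u := by
    intro k
    induction k with
    | zero => intro _; rfl
    | succ k ih =>
      intro hk
      rw [← ih (by omega), yy]
      split_ifs with h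
      · exact h1 _
      · refine h2 _ (yy_rel _ _) ?_ ?_
        · intro h'
          have := yy_inj ha hb fa fb u k 0 (by omega) (by omega) h'
          omega
        · intro h'
          rw [e] at h'
          have := yy_inj ha hb fa fb u k _ (by omega) (by omega) h'
          omega
  rw [e]; exact key _ (by omega)

/-- Abstract flag system with an edge map. -/
structure Sys (F E : Type) where
  α : F → F
  p : F → F
  q : F → F
  e : F → E
  hα : ∀ x, α (α x) = x
  fα : ∀ x, α x ≠ x
  hp : ∀ x, p (p x) = x
  hq : ∀ x, q (q x) = x
  fp : ∀ x, p x ≠ x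
  fq : ∀ x, q x ≠ x
  hpq : ∀ x, p (q x) = q (p x)
  fpq : ∀ x, p x ≠ q x
  ep : ∀ x, e (p x) = e x
  eq : ∀ x, e (q x) = e x
  four : ∀ x y, e x = e y → x = y ∨ x = p y ∨ x = q y ∨ x = p (q y)
  surj : Function.Surjective e

namespace Sys
variable {F E : Type} (M : Sys F E)

/-- The dual system. -/
def dual : Sys F E where
  α := M.α
  p := M.q
  q := M.p
  e := M.e
  hα := M.hα
  fα := M.fα
  hp := M.hq
  hq := M.hp
  fp := M.fq
  fq := M.fp
  hpq := fun x => (M.hpq x).symm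
  fpq := fun x => (M.fpq x).symm
  ep := M.eq
  eq := M.ep
  four := fun x y h => by
    rcases M.four x y h with h | h | h | h
    · exact Or.inl h
    · exact Or.inr (Or.inr (Or.inl h))
    · exact Or.inr (Or.inl h)
    · exact Or.inr (Or.inr (Or.inr (h.trans (M.hpq y))))
  surj := M.surj

open Classical in
/-- The toggled involution: `q` on `S`, `p` off `S`. -/
noncomputable def tau (S : Set E) (x : F) : F := if M.e x ∈ S then M.q x else M.p x

/-- The class of a flag. -/
def cl (S : Set E) (x : F) : Quot (Two M.α (M.tau S)) := Quot.mk _ x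

/-- Number of classes. -/
noncomputable def b (S : Set E) : ℕ := Nat.card (Quot (Two M.α (M.tau S)))

variable {M}
theorem tau_in {S : Set E} {x : F} (h : M.e x ∈ S) : M.tau S x = M.q x := if_pos h
theorem tau_out {S : Set E} {x : F} (h : M.e x ∉ S) : M.tau S x = M.p x := if_neg h

theorem tau_e (S : Set E) (x : F) : M.e (M.tau S x) = M.e x := by
  by_cases h : M.e x ∈ S
  · rw [tau_in h, M.eq]
  · rw [tau_out h, M.ep]

theorem tau_tau (S : Set E) (x : F) : M.tau S (M.tau S x) = x := by
  by_cases h : M.e x ∈ S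
  · rw [tau_in (x := M.tau S x) (by rwa [tau_e]), tau_in h, M.hq]
  · rw [tau_out (x := M.tau S x) (by rwa [tau_e]), tau_out h, M.hp]

theorem tau_ne (S : Set E) (x : F) : M.tau S x ≠ x := by
  by_cases h : M.e x ∈ S
  · rw [tau_in h]; exact M.fq x
  · rw [tau_out h]; exact M.fp x

theorem tau_congr {S S' : Set E} {x : F} (h : M.e x ∈ S ↔ M.e x ∈ S') :
    M.tau S x = M.tau S' x := by
  by_cases h1 : M.e x ∈ S
  · rw [tau_in h1, tau_in (h.1 h1)]
  · rw [tau_out h1, tau_out (fun h' => h1 (h.2 h'))]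

theorem cl_a (S : Set E) (x : F) : M.cl S (M.α x) = M.cl S x := two_l _ _ _
theorem cl_t (S : Set E) (x : F) : M.cl S (M.tau S x) = M.cl S x := two_r _ _ _

/-- `S` and `S'` differ exactly in `f`. -/
def Df (S S' : Set E) (f : E) : Prop := (∀ g, g ≠ f → (g ∈ S ↔ g ∈ S')) ∧ (f ∈ S ↔ f ∉ S')

theorem Df.symm {S S' : Set E} {f : E} (h : Df S S' f) : Df S' S f :=
  ⟨fun g hg => (h.1 g hg).symm, by have := h.2; tauto⟩

theorem df_insert {S : Set E} {f : E} (h : f ∉ S) : Df S (insert f S) f :=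
  ⟨fun g hg => by simp [hg], by simp [h]⟩

theorem tau_comm {S S' : Set E} {u : F} (h : Df S S' (M.e u)) :
    M.tau S' (M.tau S u) = M.tau S (M.tau S' u) := by
  have h2 := h.2
  by_cases h1 : M.e u ∈ S
  · have h3 := h2.1 h1
    rw [tau_in h1, tau_out h3, tau_out (by rwa [M.eq]), tau_in (by rwa [M.ep]), M.hpq]
  · have h3 : M.e u ∈ S' := by tauto
    rw [tau_out h1, tau_in h3, tau_in (by rwa [M.ep]), tau_out (by rwa [M.eq]), M.hpq]

theorem tau_four {S S' : Set E} {x u : F} (h : Df S S' (M.e u)) (hx : M.e x = M.e u) :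
    x = u ∨ x = M.tau S u ∨ x = M.tau S' u ∨ x = M.tau S (M.tau S' u) := by
  have h2 := h.2
  by_cases h1 : M.e u ∈ S
  · have h3 := h2.1 h1
    have h4 : M.tau S (M.tau S' u) = M.p (M.q u) := by
      rw [tau_out h3, tau_in (by rwa [M.ep]), M.hpq]
    rw [h4, tau_in h1, tau_out h3]
    have := M.four x u hx
    tauto
  · have h3 : M.e u ∈ S' := by tauto
    have h4 : M.tau S (M.tau S' u) = M.p (M.q u) := by
      rw [tau_in h3, tau_out (by rwa [M.eq])]
    rw [h4, tau_out h1, tau_in h3]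
    exact M.four x u hx

theorem tau_sub {S S' : Set E} {u : F} (h : Df S S' (M.e u)) {r : F → F → Prop}
    (ha : ∀ x, Quot.mk r (M.α x) = Quot.mk r x)
    (ht : ∀ x, Quot.mk r (M.tau S' x) = Quot.mk r x)
    (hu : Quot.mk r (M.tau S u) = Quot.mk r u) :
    ∀ x y, Two M.α (M.tau S) x y → Quot.mk r x = Quot.mk r y := by
  rintro x y (rfl | rfl)
  · exact (ha x).symm
  · by_cases hx : M.e x = M.e u
    · have e1 := ht u
      have e2 : Quot.mk r (M.tau S (M.tau S' u)) = Quot.mk r u := by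
        rw [← tau_comm h, ht, hu]
      have all : ∀ z, M.e z = M.e u → Quot.mk r z = Quot.mk r u := by
        intro z hz
        rcases tau_four h hz with rfl | rfl | rfl | rfl
        · rfl
        · exact hu
        · exact e1
        · exact e2
      rw [all x hx, all _ ((tau_e S x).trans hx)]
    · rw [tau_congr (h.1 _ hx), ht]

theorem T1 [Fintype F] {S S' : Set E} {f : E} (h : Df S S' f) : M.b S' ≤ M.b S + 1 := by
  obtain ⟨u, rfl⟩ := M.surj f
  refine (addP_card_le _ u (M.tau S u)).trans (Nat.add_le_add_right ?_ 1)
  refine quot_card_le (tau_sub h ?_ ?_ ?_)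
  · intro x; symm; exact Quot.sound (Or.inl (Or.inl rfl))
  · intro x; symm; exact Quot.sound (Or.inl (Or.inr rfl))
  · symm; exact Quot.sound (Or.inr ⟨rfl, rfl⟩)

theorem sub_of {S S' : Set E} {u : F} (h : Df S S' (M.e u))
    (hu : M.cl S' (M.tau S u) = M.cl S' u) (x y : F) (hxy : M.cl S x = M.cl S y) :
    M.cl S' x = M.cl S' y :=
  quot_map (tau_sub h (cl_a S') (cl_t S') hu) hxy

theorem b_le_of [Fintype F] {S S' : Set E} {u : F} (h : Df S S' (M.e u))
    (hu : M.cl S' (M.tau S u) = M.cl S' u) : M.b S' ≤ M.b S :=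
  quot_card_le (tau_sub h (cl_a S') (cl_t S') hu)

theorem T2 [Fintype F] {S S' : Set E} {u : F} (h : Df S S' (M.e u))
    (hu : M.cl S u ≠ M.cl S (M.tau S' u)) :
    M.b S' + 1 ≤ M.b S ∧ ∀ x y, M.cl S x = M.cl S y → M.cl S' x = M.cl S' y := by
  have key : M.cl S' (M.tau S u) = M.cl S' u := by
    refine cyc_walk M.hα (tau_tau S) M.fα (tau_ne S) _ u (cl_a S') ?_
    intro x hx h1 h2
    by_cases hxu : M.e x = M.e u
    · rcases tau_four h hxu with rfl | rfl | rfl | rfl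
      · exact absurd rfl h1
      · exact absurd rfl h2
      · exact absurd hx.symm hu
      · exact absurd ((cl_t S _).symm.trans hx).symm hu
    · rw [tau_congr (h.1 _ hxu)]; exact cl_t S' x
  refine ⟨?_, sub_of h key⟩
  refine le_trans (Nat.add_le_add_right ?_ 1) (addP_card_lt _ u (M.tau S' u) hu)
  refine quot_card_le ?_
  rintro x y (hxy | ⟨rfl, rfl⟩)
  · exact tau_sub h (cl_a S') (cl_t S') key x y hxy
  · exact (cl_t S' _).symm

theorem b_chain [Fintype F] (S : Set E) (A : Finset E) :
    M.b (S ∪ A) ≤ M.b S + A.card ∧ M.b (S \ A) ≤ M.b S + A.card := by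
  classical
  induction A using Finset.induction_on with
  | empty => simp
  | insert f A hf ih =>
    rw [Finset.card_insert_of_notMem hf]
    constructor
    · by_cases h : f ∈ S
      · have : S ∪ ((insert f A : Finset E) : Set E) = S ∪ A := by
          ext g; simp; intro hg; subst hg; exact Or.inl h
        rw [this]; omega
      · have : S ∪ ((insert f A : Finset E) : Set E) = insert f (S ∪ A) := by
          ext g; simp
        rw [this]
        have := T1 (M := M) (df_insert (S := S ∪ (A : Set E)) (f := f) (by simp [h, hf]))
        omega
    · by_cases h : f ∈ S
      · have h2 : S \ A = insert f (S \ ((insert f A : Finset E) : Set E)) := by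
          ext g; simp
          by_cases hg : g = f
          · subst hg; simp [h, hf]
          · simp [hg]
        have := T1 (M := M) (df_insert (S := S \ ((insert f A : Finset E) : Set E))
          (f := f) (by simp)).symm
        rw [← h2] at this
        omega
      · have : S \ ((insert f A : Finset E) : Set E) = S \ A := by
          ext g; simp; intro hg _ hg'; subst hg'; exact absurd hg h
        rw [this]; omega

/-- Full relation. -/
def Three (M : Sys F E) (x y : F) : Prop := y = M.α x ∨ y = M.p x ∨ y = M.q x

/-- A spanning forest. -/
theorem span [Fintype F] [Fintype E] : ∃ T : Finset E,
    M.b (T : Set E) + T.card = M.b ∅ ∧ (∀ u, M.cl (T : Set E) (M.p u) = M.cl T u) ∧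
    (∀ u, M.cl (T : Set E) (M.q u) = M.cl T u) ∧
    M.b (T : Set E) = Nat.card (Quot M.Three) := by
  classical
  let P : Finset E → Prop := fun T => M.b (T : Set E) + T.card ≤ M.b ∅ ∧
    ∀ u, M.cl (T : Set E) (M.p u) = M.cl T u
  have h0 : P ∅ := by
    refine ⟨by simp, ?_⟩
    intro u
    have := cl_t (M := M) ((∅ : Finset E) : Set E) u
    rwa [tau_out (by simp)] at this
  obtain ⟨T, hT, hmax⟩ := Finset.exists_max_image (Finset.univ.filter P) Finset.card
    ⟨∅, by simp [h0]⟩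
  simp only [Finset.mem_filter, Finset.mem_univ, true_and] at hT hmax
  have hq : ∀ u, M.cl (T : Set E) (M.q u) = M.cl T u := by
    intro u
    by_contra hne
    have hu : M.e u ∉ (T : Set E) := by
      intro h
      apply hne
      rw [← tau_in h]; exact cl_t _ _
    have hd := df_insert hu
    have := T2 (M := M) (u := u) hd (by
      rw [tau_in (by simp)]; exact fun h => hne h.symm)
    have hc : ((insert (M.e u) T : Finset E) : Set E) = insert (M.e u) (T : Set E) := by simp
    have hcard : (insert (M.e u) T).card = T.card + 1 :=
      Finset.card_insert_of_notMem (by simpa using hu)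
    have hP : P (insert (M.e u) T) := by
      refine ⟨?_, ?_⟩
      · rw [hc, hcard]; have := hT.1; omega
      · intro v; rw [hc]; exact this.2 _ _ (hT.2 v)
    have := hmax _ hP
    omega
  refine ⟨T, ?_, hT.2, hq, ?_⟩
  · refine le_antisymm hT.1 ?_
    have := (b_chain (M := M) (T : Set E) T).2
    simpa using this
  · apply le_antisymm
    · refine quot_card_le ?_
      rintro x y (rfl | rfl | rfl)
      · exact (cl_a _ x).symm
      · exact (hT.2 x).symm
      · exact (hq x).symm
    · refine quot_card_le ?_
      rintro x y (rfl | rfl)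
      · exact Quot.sound (Or.inl rfl)
      · by_cases h : M.e x ∈ (T : Set E)
        · rw [tau_in h]; exact Quot.sound (Or.inr (Or.inr rfl))
        · rw [tau_out h]; exact Quot.sound (Or.inr (Or.inl rfl))

theorem euler_le [Fintype F] [Fintype E] :
    M.b ∅ + M.b Set.univ ≤ 2 * Nat.card (Quot M.Three) + Fintype.card E := by
  classical
  obtain ⟨T, h1, -, -, h2⟩ := span (M := M)
  have h3 := (b_chain (M := M) (T : Set E) Tᶜ).1
  rw [Finset.coe_compl, Set.union_compl_self, Finset.card_compl] at h3
  have := Finset.card_le_univ T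
  omega

/-- In the planar case toggles change the count exactly. -/
theorem planar_span [Fintype F] [Fintype E]
    (hpl : M.b ∅ + M.b Set.univ = 2 * Nat.card (Quot M.Three) + Fintype.card E) :
    ∃ T : Finset E, (∀ u, M.cl (T : Set E) (M.p u) = M.cl T u) ∧
    (∀ u, M.cl (T : Set E) (M.q u) = M.cl T u) ∧
    (∀ A : Finset E, Disjoint A T → M.b (T ∪ A) = M.b T + A.card) ∧
    (∀ A : Finset E, A ⊆ T → M.b (T \ A) = M.b T + A.card) := by
  classical
  obtain ⟨T, h1, hp, hq, h2⟩ := span (M := M)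
  refine ⟨T, hp, hq, ?_, ?_⟩
  · intro A hA
    have h3 := (b_chain (M := M) (T : Set E) A).1
    have h4 := (b_chain (M := M) (T ∪ A : Set E) (T ∪ A)ᶜ).1
    rw [Finset.coe_compl, Finset.coe_union, Set.union_compl_self, Finset.card_compl,
      Finset.card_union_of_disjoint hA.symm] at h4
    have h5 := Finset.card_le_univ (T ∪ A)
    rw [Finset.card_union_of_disjoint hA.symm] at h5
    omega
  · intro A hA
    have h3 := (b_chain (M := M) (T : Set E) A).2
    have h4 := (b_chain (M := M) (T \ A : Set E) (T \ A)).2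
    rw [Finset.coe_sdiff, Set.sdiff_self, Finset.card_sdiff_of_subset hA] at h4
    have h5 := Finset.card_le_card hA
    omega

theorem dual_tau (S : Set E) : M.dual.tau Sᶜ = M.tau S := by
  funext x
  by_cases h : M.e x ∈ S
  · rw [tau_in h, tau_out (M := M.dual) (x := x) (S := Sᶜ) (fun h' => h' h)]; rfl
  · rw [tau_out h, tau_in (M := M.dual) (x := x) (S := Sᶜ) h]; rfl

theorem dual_b (S : Set E) : M.dual.b Sᶜ = M.b S := by
  unfold b; rw [dual_tau]; rfl

theorem dual_cl (S : Set E) (x y : F) : M.dual.cl Sᶜ x = M.dual.cl Sᶜ y ↔ M.cl S x = M.cl S y := by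
  unfold cl; rw [dual_tau]; rfl

end Sys
/-! ### Non-crossing -/
namespace Sys
variable {F E : Type} {M : Sys F E}

/-- Properties of a cyclic order of the classes of `α` and `β`. -/
def Ord (α β : F → F) (pos : F → ℕ) : Prop := Function.Injective pos ∧
    (∀ x, (pos x % 2 = 0 ∧ pos (α x) = pos x + 1) ∨ (pos x % 2 = 1 ∧ pos (α x) + 1 = pos x)) ∧
    (∀ x, (pos x % 2 = 0 ∧ pos (β x) + 1 = pos x) ∨ (pos x % 2 = 1 ∧ pos (β x) = pos x + 1) ∨
      (pos x % 2 = 0 ∧ pos (β x) % 2 = 1 ∧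
        ∀ z, Quot.mk (Two α β) z = Quot.mk (Two α β) x → pos x ≤ pos z ∧ pos z ≤ pos (β x)) ∨
      (pos x % 2 = 1 ∧ pos (β x) % 2 = 0 ∧
        ∀ z, Quot.mk (Two α β) z = Quot.mk (Two α β) x → pos (β x) ≤ pos z ∧ pos z ≤ pos x)) ∧
    (∀ x z z', Quot.mk (Two α β) z' = Quot.mk (Two α β) x → pos x ≤ pos z → pos z ≤ pos z' →
      Quot.mk (Two α β) z = Quot.mk (Two α β) x)

section
variable {T : Set E} {pos : F → ℕ}

theorem walk (ho : Ord M.α (M.tau T) pos) {S : Set E} (z0 w : F) (hw : M.cl T w = M.cl T z0)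
    (h : ∀ z, M.cl T z = M.cl T z0 → pos z0 ≤ pos z → pos z < pos w → pos z % 2 = 1 →
      M.tau S z = M.tau T z) (hle : pos z0 ≤ pos w) : M.cl S w = M.cl S z0 := by
  obtain ⟨hi, h1, h2, h3⟩ := ho
  have key : ∀ k, pos z0 + k ≤ pos w → ∃ z, pos z = pos z0 + k ∧ M.cl S z = M.cl S z0 ∧
      M.cl T z = M.cl T z0 := by
    intro k
    induction k with
    | zero => intro _; exact ⟨z0, rfl, rfl, rfl⟩
    | succ k ih =>
      intro hk
      obtain ⟨z, e1, e2, e3⟩ := ih (by omega)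
      rcases Nat.mod_two_eq_zero_or_one (pos z) with hz | hz
      · refine ⟨M.α z, ?_, (cl_a S z).trans e2, (cl_a T z).trans e3⟩
        rcases h1 z with h | h <;> omega
      · refine ⟨M.tau T z, ?_, ?_, (cl_t T z).trans e3⟩
        · rcases h2 z with h | h | h | h
          · omega
          · omega
          · omega
          · have := (h.2.2 w (hw.trans e3.symm)).2
            omega
        · rw [← h z e3 (by omega) (by omega) hz, cl_t, e2]
  obtain ⟨z, e1, e2, e3⟩ := key (pos w - pos z0) (by omega)
  have : z = w := hi (by omega)
  rw [← this, e2]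

theorem nc_aux (ho : Ord M.α (M.tau T) pos) [Fintype F]
    (hq : ∀ u, M.cl T (M.q u) = M.cl T u)
    (H1 : ∀ f, f ∉ T → M.b T < M.b (insert f T))
    (H2 : ∀ f g, f ∉ T → g ∉ insert f T → M.b (insert f T) ≤ M.b (insert g (insert f T)))
    (x u : F) (hx : M.e x ∉ T) (hu : M.e u ∉ T)
    (c1 : pos x < pos u) (c2 : pos u < pos (M.q x)) (c3 : pos (M.q x) < pos (M.q u)) : False := by
  have ho' := ho
  obtain ⟨hi, h1, h2, h3⟩ := ho
  set y := M.q x with hy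
  have ey : M.e y = M.e x := M.eq x
  have hyT : M.e y ∉ T := by rwa [ey]
  have bx : M.tau T x = M.p x := tau_out hx
  have bY : M.tau T y = M.p y := tau_out hyT
  have pxy : M.p x ≠ y := M.fpq x
  have pyx : M.p y ≠ x := fun h => pxy (by rw [← h, M.hp])
  have cy : M.cl T y = M.cl T x := hq x
  have cpx : M.cl T (M.p x) = M.cl T x := by rw [← bx]; exact cl_t _ _
  have cpy : M.cl T (M.p y) = M.cl T x := by rw [← bY]; exact (cl_t _ _).trans cy
  have hxy : M.q y = x := by rw [hy, M.hq]
  have hpp : M.q (M.p x) = M.p y := by rw [hy, M.hpq]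
  have hpp' : M.q (M.p y) = M.p x := by rw [← M.hpq, hxy]
  have ppx : M.p (M.p x) = x := M.hp x
  have ppy : M.p (M.p y) = y := M.hp y
  have f4 : ∀ z, M.e z = M.e x → z = x ∨ z = M.p x ∨ z = y ∨ z = M.p y := fun z hz => M.four z x hz
  have ein : ∀ z, pos x ≤ pos z → pos z ≤ pos y → M.cl T z = M.cl T x := fun z a b =>
    h3 x z y cy a b
  let S := insert (M.e x) T
  have hd : Df T S (M.e x) := df_insert hx
  have tf : ∀ z, M.e z = M.e x → M.tau S z = M.q z := fun z hz =>
    tau_in (show M.e z ∈ insert (M.e x) T by rw [hz]; simp)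
  have tn : ∀ z, M.e z ≠ M.e x → M.tau S z = M.tau T z := fun z hz =>
    (tau_congr (hd.1 _ hz)).symm
  have nH1 : M.cl S (M.p x) ≠ M.cl S x := by
    intro h
    have := b_le_of hd (u := x) (by rw [bx]; exact h)
    have : M.b T < M.b S := H1 _ hx
    omega
  -- conclusion from an invariant set
  have fin : ∀ D : F → Prop, (∀ z, D z → D (M.α z)) → (∀ z, D z → D (M.tau S z)) → D u →
      ¬ D (M.q u) → False := by
    intro D d1 d2 du dq
    have hinv : ∀ a b, Two M.α (M.tau S) a b → (D a ↔ D b) := by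
      rintro a b (rfl | rfl)
      · refine ⟨d1 a, fun h => ?_⟩
        have := d1 _ h; rwa [M.hα] at this
      · refine ⟨d2 a, fun h => ?_⟩
        have := d2 _ h; rwa [tau_tau] at this
    have hne : M.cl S u ≠ M.cl S (M.q u) := fun h => dq ((quot_inv D hinv h).1 du)
    have heu : M.e u ≠ M.e x := by
      intro h
      have := d2 u du
      rw [tf u h] at this
      exact dq this
    have huS : M.e u ∉ S := by
      intro h
      rcases h with h | h
      · exact heu h
      · exact hu h
    have := (T2 (M := M) (u := u) (df_insert huS) (by rw [tau_in (by simp)]; exact hne)).1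
    have : M.b S ≤ M.b (insert (M.e u) S) := H2 _ _ hx huS
    omega
  have bx4 := h2 x
  have by4 := h2 y
  rw [bx] at bx4
  rw [bY] at by4
  have npx : pos (M.p x) ≠ pos y := fun h => pxy (hi h)
  have npy : pos (M.p y) ≠ pos x := fun h => pyx (hi h)
  have npx' : pos (M.p x) ≠ pos x := fun h => M.fp x (hi h)
  have npy' : pos (M.p y) ≠ pos y := fun h => M.fp y (hi h)
  have nh : ∀ z, M.e z = M.e x → pos z ≠ pos x → pos z ≠ pos y →
      pos z ≠ pos (M.p x) → pos z ≠ pos (M.p y) → False := by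
    intro z hz a b c d
    rcases f4 z hz with h | h | h | h
    · exact a (by rw [h])
    · exact c (by rw [h])
    · exact b (by rw [h])
    · exact d (by rw [h])
  rcases Nat.mod_two_eq_zero_or_one (pos x) with px | px <;>
    rcases Nat.mod_two_eq_zero_or_one (pos y) with py | py
  · -- even even
    have e1 : pos (M.p y) + 1 = pos y := by
      rcases by4 with h | h | h | h
      · omega
      · omega
      · have := (h.2.2 x cy.symm).1; omega
      · omega
    have e2 : pos (M.p x) < pos x ∨ pos y < pos (M.p x) := by
      rcases bx4 with h | h | h | h
      · omega
      · omega
      · have := (h.2.2 y cy).2; omega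
      · omega
    have := walk ho' (S := S) x (M.p y) cpy (by
      intro z hz a b c
      apply tn
      intro hz'
      refine nh z hz' ?_ ?_ ?_ ?_ <;> omega) (by omega)
    have h5 : M.cl S (M.p x) = M.cl S (M.p y) := by
      rw [← hpp', ← tf (M.p y) (by rw [M.ep, ey])]; exact cl_t _ _
    exact nH1 (h5.trans this)
  · -- even odd
    refine fin (fun z => pos x ≤ pos z ∧ pos z ≤ pos y) ?_ ?_ ⟨by omega, by omega⟩ (by omega)
    · rintro z ⟨a, b⟩
      rcases h1 z with h | h <;> omega
    · rintro z ⟨a, b⟩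
      have e1 : pos (M.p x) < pos x ∨ pos y < pos (M.p x) := by
        rcases bx4 with h | h | h | h
        · omega
        · omega
        · have := (h.2.2 y cy).2; omega
        · omega
      have e2 : pos (M.p y) < pos x ∨ pos y < pos (M.p y) := by
        rcases by4 with h | h | h | h
        · omega
        · omega
        · omega
        · have := (h.2.2 x cy.symm).1; omega
      by_cases hz : M.e z = M.e x
      · rw [tf z hz]
        rcases f4 z hz with h | h | h | h
        · rw [h, ← hy]; constructor <;> omega
        · exfalso; rw [h] at a b; omega
        · rw [h, hxy]; constructor <;> omega
        · exfalso; rw [h] at a b; omega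
      · rw [tn z hz]
        have nz1 : pos z ≠ pos x := fun h => hz (by rw [hi h])
        have nz2 : pos z ≠ pos y := fun h => hz (by rw [hi h, ey])
        have cz := ein z a b
        rcases h2 z with h | h | h | h
        · omega
        · omega
        · have := (h.2.2 x cz.symm).1; omega
        · have := (h.2.2 y (cy.trans cz.symm)).2; omega
  · -- odd even
    refine fin (fun z => pos x < pos z ∧ pos z < pos y) ?_ ?_ ⟨by omega, by omega⟩ (by omega)
    · rintro z ⟨a, b⟩
      rcases h1 z with h | h <;> omega
    · rintro z ⟨a, b⟩
      have e1 : pos x < pos (M.p x) ∧ pos (M.p x) < pos y := by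
        rcases bx4 with h | h | h | h
        · omega
        · omega
        · omega
        · have := (h.2.2 y cy).2; omega
      have e2 : pos x < pos (M.p y) ∧ pos (M.p y) < pos y := by
        rcases by4 with h | h | h | h
        · omega
        · omega
        · have := (h.2.2 x cy.symm).1; omega
        · omega
      by_cases hz : M.e z = M.e x
      · rw [tf z hz]
        rcases f4 z hz with rfl | h | h | h
        · exfalso; omega
        · rw [h, hpp]; exact e2
        · exfalso; rw [h] at b; omega
        · rw [h, hpp']; exact e1
      · rw [tn z hz]
        have nz1 : pos (M.tau T z) ≠ pos x := fun h => hz (by rw [← hi h, tau_e])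
        have nz2 : pos (M.tau T z) ≠ pos y := fun h => hz (by rw [← ey, ← hi h, tau_e])
        have cz := ein z (by omega) (by omega)
        rcases h2 z with h | h | h | h
        · omega
        · omega
        · have := (h.2.2 x cz.symm).1; omega
        · have := (h.2.2 y (cy.trans cz.symm)).2; omega
  · -- odd odd
    have e1 : pos (M.p x) = pos x + 1 := by
      rcases bx4 with h | h | h | h
      · omega
      · omega
      · omega
      · have := (h.2.2 y cy).2; omega
    have e2 : pos (M.p y) < pos x ∨ pos y < pos (M.p y) := by
      rcases by4 with h | h | h | h
      · omega
      · omega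
      · omega
      · have := (h.2.2 x cy.symm).1; omega
    have := walk ho' (S := S) (M.p x) y (cy.trans cpx.symm) (by
      intro z hz a b c
      apply tn
      intro hz'
      refine nh z hz' ?_ ?_ ?_ ?_ <;> omega) (by omega)
    have h5 : M.cl S y = M.cl S x := by
      rw [hy, ← tf x rfl]; exact cl_t _ _
    exact nH1 (this.symm.trans h5)

theorem nc (ho : Ord M.α (M.tau T) pos) [Fintype F]
    (hq : ∀ u, M.cl T (M.q u) = M.cl T u)
    (H1 : ∀ f, f ∉ T → M.b T < M.b (insert f T))
    (H2 : ∀ f g, f ∉ T → g ∉ insert f T → M.b (insert f T) ≤ M.b (insert g (insert f T)))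
    (x u : F) :
    ¬ (pos x < pos u ∧ pos u < pos (M.q x) ∧ pos (M.q x) < pos (M.q u)) := by
  rintro ⟨c1, c2, c3⟩
  by_cases hx : M.e x ∈ T
  · obtain ⟨hi, h1, h2, h3⟩ := ho
    have cu : M.cl T u = M.cl T x := h3 x u _ (hq x) c1.le c2.le
    rw [← tau_in hx] at c2 c3
    rcases h2 x with h | h | h | h
    · omega
    · omega
    · have := (h.2.2 _ ((hq u).trans cu)).2; omega
    · have := (h.2.2 u cu).2; omega
  by_cases hu : M.e u ∈ T
  · obtain ⟨hi, h1, h2, h3⟩ := ho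
    have cu : M.cl T u = M.cl T x := h3 x u _ (hq x) c1.le c2.le
    rw [← tau_in hu] at c3
    rcases h2 u with h | h | h | h
    · omega
    · omega
    · have := (h.2.2 x cu.symm).1; omega
    · have := (h.2.2 x cu.symm).1; omega
  exact nc_aux ho hq H1 H2 x u hx hu c1 c2 c3
end

theorem planar_order [Fintype F] [Fintype E]
    (hpl : M.b ∅ + M.b Set.univ = 2 * Nat.card (Quot M.Three) + Fintype.card E) :
    ∃ pos : F → ℕ, Function.Injective pos ∧ (∀ x, pos x < 2 * Fintype.card F * Fintype.card F) ∧
    (∀ x, pos (M.α x) = pos x + 1 ∨ pos (M.α x) + 1 = pos x) ∧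
    (∀ x u, ¬ (pos x < pos u ∧ pos u < pos (M.q x) ∧ pos (M.q x) < pos (M.q u))) ∧
    (∀ x u, ¬ (pos x < pos u ∧ pos u < pos (M.p x) ∧ pos (M.p x) < pos (M.p u))) := by
  classical
  obtain ⟨T, hp, hq, hA, hB⟩ := planar_span hpl
  obtain ⟨pos, hi, hb, h1, h2, h3⟩ := cycle_order M.hα (tau_tau (M := M) (T : Set E)) M.fα
    (tau_ne (M := M) (T : Set E))
  have ho : Ord M.α (M.tau T) pos := ⟨hi, h1, h2, h3⟩
  refine ⟨pos, hi, hb, fun x => ?_, ?_, ?_⟩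
  · rcases h1 x with h | h
    · exact Or.inl h.2
    · exact Or.inr h.2
  · refine nc ho hq ?_ ?_
    · intro f hf
      have := hA {f} (by simpa using hf)
      rw [Finset.coe_singleton, Set.union_singleton] at this
      rw [this]; simp
    · intro f g hf hg
      simp only [Set.mem_insert_iff, not_or, Finset.mem_coe] at hf hg
      have e1 := hA {f} (by simpa using hf)
      have e2 := hA {g, f} (by simp [hf, hg.2])
      rw [Finset.coe_singleton, Set.union_singleton] at e1
      have : (T : Set E) ∪ (({g, f} : Finset E) : Set E) = insert g (insert f (T : Set E)) := by
        ext z; simp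
      rw [this, Finset.card_pair hg.1] at e2
      rw [e1, e2]; simp
  · have ho' : Ord M.dual.α (M.dual.tau (T : Set E)ᶜ) pos := by rw [dual_tau]; exact ho
    refine nc (M := M.dual) ho' ?_ ?_ ?_
    · intro u; rw [dual_cl]; exact hp u
    · intro f hf
      have hf' : f ∈ T := by simpa using hf
      have := hB {f} (by simpa using hf')
      have e : insert f (T : Set E)ᶜ = ((T : Set E) \ (({f} : Finset E) : Set E))ᶜ := by
        ext z; simp; tauto
      rw [e, dual_b, dual_b, this]; simp
    · intro f g hf hg
      have hf' : f ∈ T := by simpa using hf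
      simp only [Set.mem_insert_iff, not_or, Set.mem_compl_iff, Finset.mem_coe, not_not] at hg
      have e1 := hB {f} (by simpa using hf')
      have e2 := hB {g, f} (by intro z; simp; rintro (rfl | rfl); exacts [hg.2, hf'])
      have e : insert f (T : Set E)ᶜ = ((T : Set E) \ (({f} : Finset E) : Set E))ᶜ := by
        ext z; simp; tauto
      have e' : insert g (insert f (T : Set E)ᶜ) =
          ((T : Set E) \ (({g, f} : Finset E) : Set E))ᶜ := by
        ext z; simp; tauto
      rw [e', e, dual_b, dual_b, e1, e2, Finset.card_pair hg.1]; simp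

end Sys
/-! ### Bridge to flag systems; existence of a map -/
namespace FlagSystem

/-- One-step relation. -/
def StepR (M : FlagSystem) (S : Set (Equiv.Perm M.F)) (x y : M.F) : Prop := ∃ s ∈ S, y = s x

theorem sameOrbit_iff (M : FlagSystem) (S : Set (Equiv.Perm M.F)) (x y : M.F) :
    M.SameOrbit S x y ↔ Quot.mk (M.StepR S) x = Quot.mk (M.StepR S) y := by
  constructor
  · rintro ⟨g, hg, rfl⟩
    have key : ∀ g ∈ Subgroup.closure S, ∀ x,
        Quot.mk (M.StepR S) x = Quot.mk (M.StepR S) (g x) := by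
      intro g hg
      induction hg using Subgroup.closure_induction with
      | mem s hs => intro x; exact Quot.sound ⟨s, hs, rfl⟩
      | one => intro x; rfl
      | mul a b _ _ ha hb => intro x; rw [hb x, ha (b x)]; rfl
      | inv a _ ha => intro x; rw [ha (a⁻¹ x)]; simp
    exact key g hg x
  · intro h
    refine (quot_inv (fun z => M.SameOrbit S x z) ?_ h).1 ⟨1, one_mem _, rfl⟩
    rintro a b ⟨s, hs, rfl⟩
    have hs' : s ∈ Subgroup.closure S := Subgroup.subset_closure hs
    constructor
    · rintro ⟨g, hg, rfl⟩
      exact ⟨s * g, mul_mem hs' hg, rfl⟩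
    · rintro ⟨g, hg, h⟩
      exact ⟨s⁻¹ * g, mul_mem (inv_mem hs') hg, by simp [h]⟩

theorem numOrbits_eq (M : FlagSystem) (S : Set (Equiv.Perm M.F)) :
    M.numOrbits S = Nat.card (Quot (M.StepR S)) := by
  have := M.fin
  unfold numOrbits
  apply le_antisymm
  · refine quot_card_le ?_
    rintro x y ⟨s, hs, rfl⟩
    refine Quot.sound ?_
    show x ∈ MulAction.orbit (Subgroup.closure S) (s x)
    exact ⟨⟨s⁻¹, inv_mem (Subgroup.subset_closure hs)⟩, by simp [Subgroup.smul_def]⟩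
  · refine quot_card_le (r' := M.StepR S)
      (r := (MulAction.orbitRel (Subgroup.closure S) M.F).r) ?_
    intro x y hxy
    obtain ⟨⟨g, hg⟩, h⟩ := (hxy : x ∈ MulAction.orbit (Subgroup.closure S) y)
    exact ((M.sameOrbit_iff S y x).1 ⟨g, hg, h⟩).symm

theorem i0 (M : FlagSystem) (x : M.F) : M.σ₀ (M.σ₀ x) = x := by
  have := congrArg (fun g => g x) M.inv₀; simpa using this
theorem i1 (M : FlagSystem) (x : M.F) : M.σ₁ (M.σ₁ x) = x := by
  have := congrArg (fun g => g x) M.inv₁; simpa using this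
theorem i2 (M : FlagSystem) (x : M.F) : M.σ₂ (M.σ₂ x) = x := by
  have := congrArg (fun g => g x) M.inv₂; simpa using this
theorem c02 (M : FlagSystem) (x : M.F) : M.σ₀ (M.σ₂ x) = M.σ₂ (M.σ₀ x) := by
  have := congrArg (fun g => g x) M.comm02; simpa using this

/-- The abstract system of a flag system. -/
def sys (M : FlagSystem) : Sys M.F (Quot (M.StepR {M.σ₀, M.σ₂})) where
  α := M.σ₁
  p := M.σ₂
  q := M.σ₀
  e := Quot.mk _
  hα := M.i1
  fα := M.fpf₁
  hp := M.i2
  hq := M.i0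
  fp := M.fpf₂
  fq := M.fpf₀
  hpq := fun x => (M.c02 x).symm
  fpq := fun x h => M.fpf02 x (by
    show M.σ₀ (M.σ₂ x) = x
    rw [h, M.i0])
  ep := fun x => (Quot.sound ⟨M.σ₂, by simp, rfl⟩ :
    Quot.mk (M.StepR {M.σ₀, M.σ₂}) x = Quot.mk _ (M.σ₂ x)).symm
  eq := fun x => (Quot.sound ⟨M.σ₀, by simp, rfl⟩ :
    Quot.mk (M.StepR {M.σ₀, M.σ₂}) x = Quot.mk _ (M.σ₀ x)).symm
  four := fun x y h => by
    refine (quot_inv (fun x => x = y ∨ x = M.σ₂ y ∨ x = M.σ₀ y ∨ x = M.σ₂ (M.σ₀ y)) ?_ h).2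
      (Or.inl rfl)
    have key : ∀ a b, M.StepR {M.σ₀, M.σ₂} a b →
        (a = y ∨ a = M.σ₂ y ∨ a = M.σ₀ y ∨ a = M.σ₂ (M.σ₀ y)) →
        (b = y ∨ b = M.σ₂ y ∨ b = M.σ₀ y ∨ b = M.σ₂ (M.σ₀ y)) := by
      rintro a b ⟨s, hs, rfl⟩ h
      rcases hs with rfl | rfl <;> rcases h with rfl | rfl | rfl | rfl <;>
        simp [i0, i2, c02]
    intro a b hab
    refine ⟨key a b hab, key b a ?_⟩
    obtain ⟨s, hs, rfl⟩ := hab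
    refine ⟨s, hs, ?_⟩
    rcases hs with rfl | rfl
    · rw [i0]
    · rw [i2]
  surj := Quot.mk_surjective

theorem nV_eq (M : FlagSystem) : M.nV = M.sys.b ∅ := by
  unfold nV Sys.b
  rw [numOrbits_eq]
  congr 2
  funext x y
  apply propext
  have : M.sys.tau ∅ x = M.σ₂ x := Sys.tau_out (by simp)
  simp only [StepR, Two, this]
  simp [sys]

theorem nF_eq (M : FlagSystem) : M.nF = M.sys.b Set.univ := by
  unfold nF Sys.b
  rw [numOrbits_eq]
  congr 2
  funext x y
  apply propext
  have : M.sys.tau Set.univ x = M.σ₀ x := Sys.tau_in (by simp)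
  simp only [StepR, Two, this]
  simp [sys]
  tauto

theorem nC_eq (M : FlagSystem) : M.nC = Nat.card (Quot M.sys.Three) := by
  unfold nC
  rw [numOrbits_eq]
  congr 2
  funext x y
  apply propext
  simp only [StepR, Sys.Three]
  simp [sys]
  tauto

theorem nE_eq (M : FlagSystem) : M.nE = Nat.card (Quot (M.StepR {M.σ₀, M.σ₂})) := numOrbits_eq _ _

theorem euler_ineq (M : FlagSystem) : M.nV + M.nF ≤ 2 * M.nC + M.nE := by
  classical
  have := M.fin
  have := Fintype.ofFinite (Quot (M.StepR {M.σ₀, M.σ₂}))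
  rw [nV_eq, nF_eq, nC_eq, nE_eq, Nat.card_eq_fintype_card (α := Quot (M.StepR {M.σ₀, M.σ₂}))]
  exact Sys.euler_le

theorem planar_pos (M : FlagSystem) [Fintype M.F] (h : M.nV + M.nF = 2 * M.nC + M.nE) :
    ∃ pos : M.F → ℕ, Function.Injective pos ∧
    (∀ x, pos x < 2 * Fintype.card M.F * Fintype.card M.F) ∧
    (∀ x, pos (M.σ₁ x) = pos x + 1 ∨ pos (M.σ₁ x) + 1 = pos x) ∧
    (∀ x u, ¬ (pos x < pos u ∧ pos u < pos (M.σ₀ x) ∧ pos (M.σ₀ x) < pos (M.σ₀ u))) ∧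
    (∀ x u, ¬ (pos x < pos u ∧ pos u < pos (M.σ₂ x) ∧ pos (M.σ₂ x) < pos (M.σ₂ u))) := by
  classical
  have := Fintype.ofFinite (Quot (M.StepR {M.σ₀, M.σ₂}))
  rw [nV_eq, nF_eq, nC_eq, nE_eq,
    Nat.card_eq_fintype_card (α := Quot (M.StepR {M.σ₀, M.σ₂}))] at h
  exact Sys.planar_order (M := M.sys) h

end FlagSystem

theorem exists_rot {V : Type} [Finite V] (G : SimpleGraph V) :
    ∃ f : Equiv.Perm G.Dart, (∀ d, (f d).fst = d.fst) ∧
      ∀ d d' : G.Dart, d.fst = d'.fst → ∃ n : ℕ, (f ^ n) d = d' := by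
  classical
  have := Fintype.ofFinite V
  have hs : ∀ v : V, ∃ f : Equiv.Perm G.Dart,
      f.IsCycleOn ((Finset.univ.filter fun d : G.Dart => d.fst = v : Finset G.Dart) : Set G.Dart) :=
    fun v => by
      obtain ⟨f, hf, _⟩ := (Finset.univ.filter fun d : G.Dart => d.fst = v).exists_cycleOn
      exact ⟨f, hf⟩
  choose f hf using hs
  have m1 : ∀ v (d : G.Dart), d.fst = v → (f v d).fst = v := by
    intro v d hd
    have := (hf v).1.mapsTo (x := d) (by simpa using hd)
    simpa using this
  have m2 : ∀ v (d : G.Dart), d.fst = v → ((f v)⁻¹ d).fst = v := by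
    intro v d hd
    have := (hf v).inv.1.mapsTo (x := d) (by simpa using hd)
    simpa using this
  let g : Equiv.Perm G.Dart :=
    { toFun := fun d => f d.fst d
      invFun := fun d => (f d.fst)⁻¹ d
      left_inv := fun d => by
        dsimp only
        rw [m1 d.fst d rfl]; simp
      right_inv := fun d => by
        dsimp only
        rw [m2 d.fst d rfl]; simp }
  have g1 : ∀ d, (g d).fst = d.fst := fun d => m1 _ d rfl
  refine ⟨g, g1, ?_⟩
  intro d d' h
  obtain ⟨n, -, hn⟩ := (hf d.fst).exists_pow_eq (a := d) (b := d') (by simp) (by simp [h])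
  have key : ∀ n, (g ^ n) d = (f d.fst ^ n) d ∧ ((g ^ n) d).fst = d.fst := by
    intro n
    induction n with
    | zero => simp
    | succ n ih =>
      rw [pow_succ', pow_succ', Equiv.Perm.mul_apply, Equiv.Perm.mul_apply]
      refine ⟨?_, (g1 _).trans ih.2⟩
      show f ((g ^ n) d).fst ((g ^ n) d) = _
      rw [ih.2, ih.1]
  exact ⟨n, (key n).1.trans hn⟩

section ex
variable {V : Type} {G : SimpleGraph V}

/-- Flip. -/
def fl2 (x : G.Dart × Bool) : G.Dart × Bool := (x.1, !x.2)
/-- Reverse. -/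
def fl0 (x : G.Dart × Bool) : G.Dart × Bool := (x.1.symm, !x.2)
/-- Rotate. -/
def fl1 (f : Equiv.Perm G.Dart) (x : G.Dart × Bool) : G.Dart × Bool :=
  match x with
  | (d, true) => (f d, false)
  | (d, false) => (f.symm d, true)

theorem fl2_inv : Function.Involutive (fl2 (G := G)) := by rintro ⟨d, b⟩; simp [fl2]
theorem fl0_inv : Function.Involutive (fl0 (G := G)) := by rintro ⟨d, b⟩; simp [fl0]
theorem fl1_inv (f : Equiv.Perm G.Dart) : Function.Involutive (fl1 f) := by
  rintro ⟨d, _ | _⟩ <;> simp [fl1]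

/-- The flag system of a rotation. -/
noncomputable def rotSys [Finite V] (f : Equiv.Perm G.Dart) : FlagSystem where
  F := G.Dart × Bool
  fin := by
    classical
    have := Fintype.ofFinite V
    exact Fintype.ofFinite _
  σ₀ := fl0_inv.toPerm
  σ₁ := (fl1_inv f).toPerm
  σ₂ := fl2_inv.toPerm
  inv₀ := by ext1 x; exact fl0_inv x
  inv₁ := by ext1 x; exact fl1_inv f x
  inv₂ := by ext1 x; exact fl2_inv x
  fpf₀ := by rintro ⟨d, b⟩ h; simp [fl0] at h
  fpf₁ := by rintro ⟨d, _ | _⟩ h <;> simp [fl1] at h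
  fpf₂ := by rintro ⟨d, b⟩ h; simp [fl2] at h
  comm02 := by ext1 x; simp [fl0, fl2]
  fpf02 := by
    rintro ⟨d, b⟩ h
    simp [fl0, fl2] at h
    exact d.symm_ne h

theorem exists_flag [Finite V] (G : SimpleGraph V) : ∃ M : FlagSystem, M.Realizes G := by
  classical
  obtain ⟨f, hf1, hf2⟩ := exists_rot G
  let M := rotSys f
  have e2 : ∀ x, M.σ₂ x = fl2 x := fun _ => rfl
  have e1 : ∀ x, M.σ₁ x = fl1 f x := fun _ => rfl
  have e0 : ∀ x, M.σ₀ x = fl0 x := fun _ => rfl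
  have fi : ∀ d, (f.symm d).fst = d.fst := fun d => by
    have := hf1 (f.symm d); rw [Equiv.apply_symm_apply] at this; exact this.symm
  refine ⟨M, fun x => ⟨x.1.fst, x.1.edge, x.1.edge_mem, by simp [SimpleGraph.Dart.edge]⟩,
    fun x => ⟨x.1.edge, x.1.edge_mem⟩, ?_, ?_, ?_, ?_, ?_, ?_, ?_, ?_, ?_, ?_⟩
  · rintro ⟨d, b⟩; simp [SimpleGraph.Dart.edge]
  · rintro ⟨d, _ | _⟩ <;> rw [Subtype.ext_iff]
    · exact fi d
    · exact hf1 d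
  · rintro ⟨d, b⟩; rfl
  · rintro ⟨d, b⟩ h
    rw [Subtype.ext_iff] at h
    exact d.adj.ne h.symm
  · rintro ⟨d, b⟩; rw [Subtype.ext_iff]; exact d.edge_symm
  · rintro ⟨d, b⟩; rfl
  · rintro ⟨d, b⟩ ⟨d', b'⟩ h
    rw [Subtype.ext_iff] at h
    let Q : G.Dart × Bool → Quot (M.StepR {M.σ₁, M.σ₂}) := fun x => Quot.mk (M.StepR {M.σ₁, M.σ₂}) x
    refine (M.sameOrbit_iff {M.σ₁, M.σ₂} _ _).2 (show Q (d, b) = Q (d', b') from ?_)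
    have s2 : ∀ d b, Q (d, b)
        = Q (d, !b) := fun d b =>
      Quot.sound ⟨M.σ₂, by simp, rfl⟩
    have s3 : ∀ d b b', Q (d, b)
        = Q (d, b') := by
      intro d b b'
      by_cases hb : b' = b
      · rw [hb]
      · have : b' = !b := by cases b <;> cases b' <;> simp_all
        rw [this]; exact s2 d b
    have s1 : ∀ d, Q (d, true)
        = Q (f d, false) := fun d =>
      Quot.sound ⟨M.σ₁, by simp, rfl⟩
    obtain ⟨n, hn⟩ := hf2 d d' h
    have key : ∀ n, Q ((f ^ n) d, true)
        = Q (d, true) := by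
      intro n
      induction n with
      | zero => rfl
      | succ n ih =>
        rw [pow_succ', Equiv.Perm.mul_apply, s3 _ true false, ← s1, ih]
    rw [s3 d b true, s3 d' b' true, ← hn]
    exact (key n).symm
  · rintro ⟨d, b⟩ ⟨d', b'⟩ h
    rw [Subtype.ext_iff] at h
    let Q : G.Dart × Bool → Quot (M.StepR {M.σ₀, M.σ₂}) := fun x => Quot.mk (M.StepR {M.σ₀, M.σ₂}) x
    refine (M.sameOrbit_iff {M.σ₀, M.σ₂} _ _).2 (show Q (d, b) = Q (d', b') from ?_)
    have s2 : ∀ d b, Q (d, b)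
        = Q (d, !b) := fun d b =>
      Quot.sound ⟨M.σ₂, by simp, rfl⟩
    have s3 : ∀ d b b', Q (d, b)
        = Q (d, b') := by
      intro d b b'
      by_cases hb : b' = b
      · rw [hb]
      · have : b' = !b := by cases b <;> cases b' <;> simp_all
        rw [this]; exact s2 d b
    have s0 : ∀ d b, Q (d, b)
        = Q (d.symm, !b) := fun d b =>
      Quot.sound ⟨M.σ₀, by simp, rfl⟩
    rcases (SimpleGraph.dart_edge_eq_iff d d').1 h with rfl | rfl
    · exact s3 _ _ _
    · rw [s0 d' b']; exact s3 _ _ _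
  · rintro ⟨v, e, he, hv⟩
    obtain ⟨w, rfl⟩ := Sym2.mem_iff_exists.1 hv
    exact ⟨(⟨(v, w), he⟩, true), rfl⟩
  · rintro ⟨e, he⟩ v hv
    obtain ⟨w, rfl⟩ := Sym2.mem_iff_exists.1 hv
    exact ⟨(⟨(v, w), he⟩, true), rfl, rfl⟩
end ex

theorem genus_zero {V : Type} [Finite V] {G : SimpleGraph V} (h : eulerGenus G = 0) :
    ∃ M : FlagSystem, M.Realizes G ∧ M.nV + M.nF = 2 * M.nC + M.nE := by
  have hne : {g | ∃ M : FlagSystem, M.Realizes G ∧ g + M.nV + M.nF = 2 * M.nC + M.nE}.Nonempty := by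
    obtain ⟨M, hM⟩ := exists_flag G
    have := M.euler_ineq
    exact ⟨2 * M.nC + M.nE - (M.nV + M.nF), M, hM, by omega⟩
  have := Nat.sInf_mem hne
  unfold eulerGenus at h
  rw [h] at this
  obtain ⟨M, h1, h2⟩ := this
  exact ⟨M, h1, by omega⟩
/-! ### Final assembly -/

theorem planar_model {W' : Type} [Fintype W'] (H' : SimpleGraph W') (h : eulerGenus H' = 0) :
    ∃ φ : W' → Set (ℕ × ℕ), IsMinorModel NG H' φ ∧ ∀ w, ∀ p ∈ φ w,
      p.1 < 16 * Fintype.card W' ^ 4 + 1 + Fintype.card W' ∧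
      p.2 < 16 * Fintype.card W' ^ 4 + 1 + Fintype.card W' := by
  classical
  obtain ⟨M, ⟨fv, fe, r1, r2, r3, r4, r5, r6, r7, r8, r9, r10⟩, hM⟩ := genus_zero h
  have := M.fin
  let lab : M.F → W' := fun x => (fv x).1
  have l0 : ∀ x, lab x ≠ lab (M.σ₀ x) := fun x hx => r4 x (Subtype.ext hx.symm)
  have hfe : ∀ x, (fe x : Sym2 W') = s(lab x, lab (M.σ₀ x)) := by
    intro x
    have h1 : lab x ∈ (fe x : Sym2 W') := r1 x
    have h2 : lab (M.σ₀ x) ∈ (fe x : Sym2 W') := by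
      have := r1 (M.σ₀ x); rwa [r5] at this
    exact (Sym2.mem_and_mem_iff (l0 x)).1 ⟨h1, h2⟩
  have hcard : Fintype.card M.F ≤ 2 * Fintype.card W' ^ 2 := by
    have := Finset.card_le_mul_card_image_of_maps_to (s := (Finset.univ : Finset M.F))
      (t := (Finset.univ : Finset (W' × W'))) (f := fun x => (lab x, lab (M.σ₀ x)))
      (fun _ _ => Finset.mem_univ _) 2 (by
        rintro ⟨v, w⟩ -
        by_cases hx : ∃ x, lab x = v ∧ lab (M.σ₀ x) = w
        · obtain ⟨x, rfl, rfl⟩ := hx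
          refine le_trans (Finset.card_le_card (t := {x, M.σ₂ x}) ?_) Finset.card_le_two
          intro y hy
          simp only [Finset.mem_filter, Finset.mem_univ, true_and, Prod.mk.injEq] at hy
          have e : fe y = fe x := Subtype.ext (by rw [hfe, hfe, hy.1, hy.2])
          have := M.sys.four y x ((M.sameOrbit_iff _ _ _).1 (r8 _ _ e))
          have l2 : lab (M.σ₂ (M.σ₀ x)) = lab (M.σ₀ x) := by
            show (fv _).1 = (fv _).1
            rw [r3]
          rcases this with rfl | rfl | rfl | rfl
          · simp
          · simp [FlagSystem.sys]
          · exact absurd hy.1.symm (l0 x)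
          · exact absurd (hy.1.symm.trans l2) (l0 x)
        · rw [Finset.card_eq_zero.2]
          · omega
          · rw [Finset.filter_eq_empty_iff]
            intro x _ hx'
            exact hx ⟨x, by simpa using hx'⟩)
    rw [Finset.card_univ, Finset.card_univ, Fintype.card_prod] at this
    rw [pow_two]; exact this
  obtain ⟨pos, p1, p2, p3, p4, p5⟩ := M.planar_pos hM
  obtain ⟨φ, q1, q2⟩ := draw H' M.σ₀ M.σ₁ M.σ₂ pos (8 * Fintype.card W' ^ 4) p1
    (fun x => by
      refine lt_of_lt_of_le (p2 x) ?_
      calc 2 * Fintype.card M.F * Fintype.card M.F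
          ≤ 2 * (2 * Fintype.card W' ^ 2) * (2 * Fintype.card W' ^ 2) := by gcongr
        _ = 8 * Fintype.card W' ^ 4 := by ring)
    M.i0 M.i2 M.fpf₀ M.fpf₂ p3 p4 p5 lab
    (fun x => by show (fv _).1 = (fv _).1; rw [r2])
    (fun x => by show (fv _).1 = (fv _).1; rw [r3])
    (by
      intro x y hxy
      have h1 := (M.sameOrbit_iff _ _ _).1 (r7 x y (Subtype.ext hxy))
      refine (quot_inv (fun z => Relation.ReflTransGen
        (fun a b => b = M.σ₁ a ∨ b = M.σ₂ a) x z) ?_ h1).1 Relation.ReflTransGen.refl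
      rintro a b ⟨s, hs, rfl⟩
      rcases hs with rfl | rfl
      · exact ⟨fun h => h.tail (Or.inl rfl), fun h => h.tail (Or.inl (M.i1 a).symm)⟩
      · exact ⟨fun h => h.tail (Or.inr rfl), fun h => h.tail (Or.inr (M.i2 a).symm)⟩)
    (by
      intro v w hvw
      obtain ⟨x, x1, x2⟩ := r10 ⟨s(v, w), hvw⟩ v (by simp)
      refine ⟨x, x2, ?_⟩
      have e := hfe x
      rw [x1] at e
      have x2' : lab x = v := x2
      rw [x2'] at e
      exact (Sym2.congr_right.1 e).symm)
  refine ⟨φ, q1, fun w p hp => ?_⟩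
  have := q2 w p hp
  omega

theorem apex_main {V W : Type} [Fintype W] (H : SimpleGraph W) (G : SimpleGraph V) (a : W)
    (ha : eulerGenus (H.induce {u | u ≠ a}) = 0) (r : ℕ) (u : V)
    (hu : ∀ w : V, G.Reachable u w ∧ G.dist u w ≤ r) (n : ℕ) (hn : Fintype.card W = n + 1)
    (hG : HasMinor G (gridGraph ((n + 1) * (16 * n ^ 4 + 1 + n + (1 + n * (r + 1)) + 1)))) :
    HasMinor G H := by
  classical
  have hc : Fintype.card {w // w ∈ {u : W | u ≠ a}} = n := by
    have h1 := Fintype.card_subtype_compl (fun w : W => w = a)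
    rw [Fintype.card_subtype_eq, hn] at h1
    have h2 : Fintype.card {w // w ∈ {u : W | u ≠ a}} = Fintype.card {w : W // ¬ w = a} :=
      Fintype.card_congr (Equiv.refl _)
    rw [h2, h1]; rfl
  obtain ⟨φ, h1, h2⟩ := planar_model _ ha
  rw [hc] at h2
  obtain ⟨A, B, cA, cB, dA, dB, eB, eA⟩ := apex_comb G _ _ φ h1 h2 r u hu (by rw [hc]; exact hG)
  refine ⟨fun w => if h : w = a then A else B ⟨w, h⟩, ?_, ?_, ?_⟩
  · intro w
    by_cases h : w = a
    · beta_reduce; rw [dif_pos h]; exact cA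
    · beta_reduce; rw [dif_neg h]; exact cB _
  · intro w w' hww
    by_cases h : w = a <;> by_cases h' : w' = a
    · exact absurd (h.trans h'.symm) hww
    · simp only [h, h', dif_pos, dif_neg, not_false_eq_true]; exact dA _
    · simp only [h, h', dif_pos, dif_neg, not_false_eq_true]; exact (dA _).symm
    · simp only [h, h', dif_neg, not_false_eq_true]
      exact dB (fun e => hww (congrArg Subtype.val e))
  · intro w w' hww
    by_cases h : w = a <;> by_cases h' : w' = a
    · exact absurd (h.trans h'.symm) hww.ne
    · simp only [h, h', dif_pos, dif_neg, not_false_eq_true]; exact eA _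
    · simp only [h, h', dif_pos, dif_neg, not_false_eq_true]
      obtain ⟨x, hx, y, hy, e⟩ := eA ⟨w, h⟩
      exact ⟨y, hy, x, hx, e.symm⟩
    · simp only [h, h', dif_neg, not_false_eq_true]
      exact eB (w₁ := ⟨w, h⟩) (w₂ := ⟨w', h'⟩) hww

theorem final_bound (c₀ n r : ℕ) :
    c₀ * ((n + 1) ^ 2 * ((n + 1) * (16 * n ^ 4 + 1 + n + (1 + n * (r + 1)) + 1)) +
      (n + 1) ^ 2304) ≤ (22 * c₀) * ((n + 1) ^ 4 * r + (n + 1) ^ 2304) := by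
  generalize hT : n + 1 = t
  have ht : 1 ≤ t := by omega
  have h7 : t ^ 7 ≤ t ^ 2304 := Nat.pow_le_pow_right ht (by norm_num)
  have hb : 16 * n ^ 4 + 1 + n + (1 + n * (r + 1)) + 1 ≤ 21 * t ^ 4 + t * r := by
    have h1 : n ^ 4 ≤ t ^ 4 := Nat.pow_le_pow_left (by omega) 4
    have h2 : t ≤ t ^ 4 := Nat.le_self_pow (by norm_num) t
    have h3 : n * r ≤ t * r := Nat.mul_le_mul_right _ (by omega)
    have h4 : 1 ≤ t ^ 4 := Nat.one_le_pow _ _ ht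
    have h5 : n * (r + 1) = n * r + n := by ring
    omega
  generalize t ^ 2304 = X at *
  calc c₀ * (t ^ 2 * (t * (16 * n ^ 4 + 1 + n + (1 + n * (r + 1)) + 1)) + X)
      ≤ c₀ * (t ^ 2 * (t * (21 * t ^ 4 + t * r)) + X) := by gcongr
    _ = c₀ * (21 * t ^ 7 + t ^ 4 * r + X) := by ring
    _ ≤ c₀ * (22 * (t ^ 4 * r + X)) := by
        apply Nat.mul_le_mul_left
        omega
    _ = _ := by ring
/-- Assuming the linear grid-minor bound `tw = O(t²·k + t^2304)` for graphs excluding a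
`t`-vertex graph and the `(k × k)`-grid as minors, every graph of radius at most `r`
excluding a `t`-vertex apex graph `H` as a minor has treewidth `O(t⁴·r + t^2304)`. -/
theorem apex_minor_free_bounded_radius (c₀ : ℕ)
    (hgrid : ∀ (t k : ℕ) (V W : Type) (_ : Fintype V) (_ : Fintype W)
      (H : SimpleGraph W) (G : SimpleGraph V),
      Fintype.card W = t → ¬ HasMinor G H → ¬ HasMinor G (gridGraph k) →
      treewidth G ≤ c₀ * (t ^ 2 * k + t ^ 2304)) :
    ∃ C : ℕ, ∀ (t r : ℕ) (V W : Type) (_ : Fintype V) (_ : Fintype W)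
      (H : SimpleGraph W) (G : SimpleGraph V),
      Fintype.card W = t →
      (∃ a : W, eulerGenus (H.induce {u | u ≠ a}) = 0) →
      ¬ HasMinor G H →
      (∃ u : V, ∀ w : V, G.Reachable u w ∧ G.dist u w ≤ r) →
      treewidth G ≤ C * (t ^ 4 * r + t ^ 2304) := by

  refine ⟨22 * c₀, ?_⟩
  rintro t r V W iV iW H G ht ⟨a, ha⟩ hH ⟨u, hu⟩
  obtain ⟨n, rfl⟩ : ∃ n, t = n + 1 := by
    refine ⟨t - 1, ?_⟩
    have : 0 < Fintype.card W := Fintype.card_pos_iff.2 ⟨a⟩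
    omega
  have hk : ¬ HasMinor G
      (gridGraph ((n + 1) * (16 * n ^ 4 + 1 + n + (1 + n * (r + 1)) + 1))) :=
    fun h => hH (apex_main H G a ha r u hu n ht h)
  exact (hgrid (n + 1) _ V W iV iW H G ht hH hk).trans (final_bound c₀ n r)
end
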